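/- arXiv:2601.15318 — 2 statements merged into one kernel-verified Lean document; each statement's English description precedes it below -/
import Mathlib

section
/- The number B_n^n of minimal balanced collections on a set of n elements consisting of exactly n subsets satisfies B_n^n ∼ 2^{n²−n+1}/n!, i.e., lim_{n→∞} B_n^n · n! / 2^{n²−n+1} = 1. -/
open Finset

/-- `lam` is a system of balancing weights for the collection `B`:
all weights are positive and `∑_{S∈B, S∋i} λ_S = 1` for every player `i`. -/
def IsBalancingWeights {n : ℕ} (B : Finset (Finset (Fin n)))
    (lam : Finset (Fin n) → ℝ) : Prop :=
  (∀ S ∈ B, 0 < lam S) ∧ ∀ i : Fin n, ∑ S ∈ B.filter (fun S => i ∈ S), lam S = 1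

/-- `B` is a balanced collection: a family of nonempty subsets of `N` admitting a
system of balancing weights. -/
def IsBalancedCollection {n : ℕ} (B : Finset (Finset (Fin n))) : Prop :=
  (∀ S ∈ B, S ≠ ∅) ∧ ∃ lam, IsBalancingWeights B lam

/-- `B` is a minimal balanced collection: balanced and no proper subfamily is balanced. -/
def IsMinimalBalancedCollection {n : ℕ} (B : Finset (Finset (Fin n))) : Prop :=
  IsBalancedCollection B ∧ ∀ B' ⊂ B, ¬ IsBalancedCollection B'

/-- `B_n^n`: the number of minimal balanced collections on `N = {1,…,n}` (other
than `{N}`) consisting of exactly `n` subsets. -/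
noncomputable def Bnn (n : ℕ) : ℕ :=
  Nat.card {B : Finset (Finset (Fin n)) //
    IsMinimalBalancedCollection B ∧ B ≠ {Finset.univ} ∧ B.card = n}

/-!
Recording membership by signs turns a family of `n` subsets of `{1, …, n}` into an `n × n` sign
matrix `V`, and weights `l` are balancing up to scale when `V l` is constant. The family is a
minimal balanced collection exactly when the vectors that `V` maps to constants form a line spanned
by a positive vector. If they only form a line spanned by a vector without zero entries (`V` is
generic), then exactly two of the `2 ^ n` ways of changing the signs of the columns make `V` of
the former kind. Hence `B_n^n n! / 2 ^ (n ^ 2 - n + 1)` is exactly the probability that a uniformly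
random `V` is generic.

If `V` is not generic, some nonzero vector with a zero entry at `k` is mapped to a constant, and
replacing column `k` by ones makes `V` singular. A union bound over `k` reduces the theorem to
`P(singular) = o(1 / n)`. Vectors with small support, or with at most `n / 10` distinct absolute
values, lie in few subspaces of small dimension, so a union bound over these subspaces excludes them
from the kernel up to an exponentially small probability. The random signed sum of any other vector
vanishes with probability `O(n ^ (-3 / 2))`, by Sperner's theorem and the argument of Sárközy and
Szemerédi. This bounds the probability that a given row takes part in a linear relation between the
rows; since outside the excluded event a singular matrix has at least `n / 20` such rows, Markov's
inequality gives `P(singular) = O(n ^ (-3 / 2))`.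
-/

open scoped BigOperators

section UniformProbability

variable {Ω Ω' κ : Type*} [Fintype Ω] [Fintype Ω']

open Classical in
/-- The probability of an event under the uniform distribution on a finite type, encoded as the
average of the indicator; it is `0` when the type is empty. -/
noncomputable def prob (p : Ω → Prop) : ℝ := 𝔼 ω, if p ω then 1 else 0

theorem prob_eq_card_div (p : Ω → Prop) [DecidablePred p] :
    prob p = (#{ω | p ω} : ℝ) / Fintype.card Ω := by
  rw [prob, Fintype.expect_eq_sum_div_card, ← sum_boole]
  congr!

theorem prob_nonneg (p : Ω → Prop) : 0 ≤ prob p :=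
  expect_nonneg fun _ _ => by split_ifs <;> norm_num

theorem prob_mono {p q : Ω → Prop} (h : ∀ ω, p ω → q ω) : prob p ≤ prob q :=
  expect_le_expect fun ω _ => by
    by_cases hp : p ω
    · simp [hp, h ω hp]
    · rw [if_neg hp]
      split_ifs <;> norm_num

theorem prob_true [Nonempty Ω] : prob (fun _ : Ω => True) = 1 := by
  simp only [prob, if_true, Fintype.expect_const]

theorem prob_le_one (p : Ω → Prop) : prob p ≤ 1 := by
  classical
  rw [prob_eq_card_div]
  exact div_le_one_of_le₀ (mod_cast card_le_univ _) (Nat.cast_nonneg _)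

theorem prob_add_prob_not [Nonempty Ω] (p : Ω → Prop) :
    prob p + prob (fun ω => ¬ p ω) = 1 := by
  rw [← prob_true (Ω := Ω), prob, prob, prob, ← expect_add_distrib]
  exact expect_congr rfl fun ω _ => by by_cases h : p ω <;> simp [h]

theorem prob_or_le (p q : Ω → Prop) : prob (fun ω => p ω ∨ q ω) ≤ prob p + prob q := by
  rw [prob, prob, prob, ← expect_add_distrib]
  exact expect_le_expect fun ω _ => by by_cases p ω <;> by_cases q ω <;> simp [*]

theorem sum_prob_eq_expect_card (s : Finset κ) (p : κ → Ω → Prop) [∀ k, DecidablePred (p k)] :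
    ∑ k ∈ s, prob (p k) = 𝔼 ω, (#{k ∈ s | p k ω} : ℝ) := by
  simp only [prob, ← expect_sum_comm, ← sum_boole]
  congr!

theorem prob_exists_mem_le (s : Finset κ) (p : κ → Ω → Prop) :
    prob (fun ω => ∃ k ∈ s, p k ω) ≤ ∑ k ∈ s, prob (p k) := by
  classical
  rw [sum_prob_eq_expect_card]
  refine expect_le_expect fun ω _ => ?_
  split_ifs with h
  · obtain ⟨k, hk, hp⟩ := h
    exact mod_cast card_pos.2 ⟨k, mem_filter.2 ⟨hk, hp⟩⟩
  · positivity

theorem prob_exists_le [Fintype κ] (p : κ → Ω → Prop) :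
    prob (fun ω => ∃ k, p k ω) ≤ ∑ k, prob (p k) := by
  simpa only [mem_univ, true_and] using prob_exists_mem_le univ p

theorem sum_prob_le_prob_exists (s : Finset κ) (p : κ → Ω → Prop)
    (hdisj : ∀ ω, ∀ i ∈ s, ∀ j ∈ s, p i ω → p j ω → i = j) :
    ∑ k ∈ s, prob (p k) ≤ prob (fun ω => ∃ k ∈ s, p k ω) := by
  classical
  rw [sum_prob_eq_expect_card]
  refine expect_le_expect fun ω _ => ?_
  split_ifs with h
  · refine mod_cast card_le_one.2 fun i hi j hj => ?_
    rw [mem_filter] at hi hj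
    exact hdisj ω i hi.1 j hj.1 hi.2 hj.2
  · rw [filter_eq_empty_iff.2 fun k hk hp => h ⟨k, hk, hp⟩]
    simp

theorem mul_prob_le_sum_prob [Fintype κ] (p : Ω → Prop) (q : κ → Ω → Prop)
    [∀ k, DecidablePred (q k)] (t : ℝ) (h : ∀ ω, p ω → t ≤ #{k | q k ω}) :
    t * prob p ≤ ∑ k, prob (q k) := by
  rw [sum_prob_eq_expect_card, prob, mul_expect]
  refine expect_le_expect fun ω _ => ?_
  split_ifs with hp
  · simpa only [mul_one] using h ω hp
  · simp

theorem prob_comp_equiv (e : Ω ≃ Ω') (p : Ω' → Prop) : prob (fun ω => p (e ω)) = prob p :=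
  Fintype.expect_equiv e _ _ fun _ => rfl

theorem prob_prod (p : Ω × Ω' → Prop) : prob p = 𝔼 x, prob fun y => p (x, y) := by
  rw [prob, ← univ_product_univ, expect_product]
  rfl

theorem prob_prod_le_add {p : Ω × Ω' → Prop} {q : Ω → Prop} {r : ℝ} (hr : 0 ≤ r)
    (h : ∀ x, ¬ q x → prob (fun y => p (x, y)) ≤ r) : prob p ≤ prob q + r := by
  classical
  have pointwise (x : Ω) : prob (fun y => p (x, y)) ≤ (if q x then 1 else 0) + r := by
    split_ifs with hq
    · linarith [prob_le_one fun y => p (x, y)]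
    · simpa using h x hq
  calc prob p ≤ 𝔼 x, ((if q x then 1 else 0) + r) := by
        rw [prob_prod]
        exact expect_le_expect fun x _ => pointwise x
    _ = prob q + 𝔼 _x : Ω, r := by
        rw [expect_add_distrib, prob]
    _ ≤ prob q + r := by
        rcases isEmpty_or_nonempty Ω with _ | _
        · simpa using hr
        · rw [Fintype.expect_const]

theorem prob_forall_apply [Fintype κ] [DecidableEq κ] (p : Ω → Prop) :
    prob (fun f : κ → Ω => ∀ k, p (f k)) = prob p ^ Fintype.card κ := by
  classical
  have : ({f | ∀ k, p (f k)} : Finset (κ → Ω)) = Fintype.piFinset fun _ => {ω | p ω} := by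
    ext f
    simp
  rw [prob_eq_card_div, prob_eq_card_div, this, Fintype.card_piFinset, Fintype.card_fun, div_pow]
  simp

end UniformProbability

section LittlewoodOfford

theorem sq_centralBinom_mul_le (m : ℕ) : m.centralBinom ^ 2 * (2 * m + 1) ≤ 16 ^ m := by
  induction m with
  | zero => simp
  | succ m ih =>
    refine Nat.le_of_mul_le_mul_left ?_ (show 0 < (m + 1) ^ 2 by positivity)
    calc (m + 1) ^ 2 * ((m + 1).centralBinom ^ 2 * (2 * (m + 1) + 1))
        = ((m + 1) * (m + 1).centralBinom) ^ 2 * (2 * m + 3) := by ring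
      _ = (2 * (2 * m + 1) * m.centralBinom) ^ 2 * (2 * m + 3) := by
          rw [Nat.succ_mul_centralBinom_succ]
      _ = m.centralBinom ^ 2 * (2 * m + 1) * (4 * ((2 * m + 1) * (2 * m + 3))) := by ring
      _ ≤ 16 ^ m * (4 * (4 * (m + 1) ^ 2)) :=
          Nat.mul_le_mul ih (by nlinarith)
      _ = (m + 1) ^ 2 * 16 ^ (m + 1) := by ring

theorem sq_choose_half_mul_le (u : ℕ) : u.choose (u / 2) ^ 2 * (u + 1) ≤ 4 ^ u := by
  obtain ⟨m, rfl | rfl⟩ := u.even_or_odd'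
  · have := sq_centralBinom_mul_le m
    rw [Nat.centralBinom_eq_two_mul_choose, show 16 = 4 ^ 2 by norm_num, ← pow_mul] at this
    rwa [show 2 * m / 2 = m by lia]
  · have := sq_centralBinom_mul_le (m + 1)
    have central : (m + 1).centralBinom = 2 * (2 * m + 1).choose m := by
      rw [Nat.centralBinom_eq_two_mul_choose, mul_add_one, Nat.choose_succ_succ,
        Nat.choose_symm_half, ← two_mul]
    have pow_eq : 4 ^ (2 * m + 1) * 4 = 16 ^ (m + 1) := by
      rw [← pow_succ, show 2 * m + 1 + 1 = 2 * (m + 1) by ring, pow_mul]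
      norm_num
    rw [show (2 * m + 1) / 2 = m by lia]
    rw [central] at this
    nlinarith

variable {ι : Type*} [Fintype ι]

theorem card_le_of_isAntichain_fibers [DecidableEq ι] (𝒢 : Finset (Finset ι)) (U : Finset ι)
    (h : ∀ A ∈ 𝒢, ∀ B ∈ 𝒢, A ⊆ B → B \ A ⊆ U → A = B) :
    #𝒢 ≤ (#U).choose (#U / 2) * 2 ^ #Uᶜ := by
  rw [← card_powerset]
  refine card_le_mul_card_image_of_maps_to (f := (· \ U))
    (fun A _ => by simp [sdiff_eq_inter_compl]) _ fun C _ => ?_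
  have subset_of_subtype {A B : Finset ι} (hA : A ∈ {A ∈ 𝒢 | A \ U = C})
      (hB : B ∈ {A ∈ 𝒢 | A \ U = C}) (hAB : A.subtype (· ∈ U) ⊆ B.subtype (· ∈ U)) : A ⊆ B := by
    intro i hi
    by_cases hU : i ∈ U
    · exact mem_subtype.1 (@hAB ⟨i, hU⟩ (mem_subtype.2 hi))
    · have : i ∈ A \ U := mem_sdiff.2 ⟨hi, hU⟩
      rw [(mem_filter.1 hA).2, ← (mem_filter.1 hB).2] at this
      exact (mem_sdiff.1 this).1
  rw [← Fintype.card_coe U, ← card_image_of_injOn (f := Finset.subtype (· ∈ U)) fun A hA B hB hAB =>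
    (subset_of_subtype hA hB hAB.le).antisymm (subset_of_subtype hB hA hAB.ge)]
  refine IsAntichain.sperner ?_
  simp only [coe_image]
  rintro _ ⟨A, hA, rfl⟩ _ ⟨B, hB, rfl⟩ hne hle
  have hAB := subset_of_subtype hA hB hle
  refine hne (congrArg _ (h A (mem_filter.1 hA).1 B (mem_filter.1 hB).1 hAB ?_))
  intro i hi
  by_contra hU
  have : i ∈ B \ U := mem_sdiff.2 ⟨(mem_sdiff.1 hi).1, hU⟩
  rw [(mem_filter.1 hB).2, ← (mem_filter.1 hA).2] at this
  exact (mem_sdiff.1 hi).2 (mem_sdiff.1 this).1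

theorem sq_prob_mul_le_one_of_isAntichain_fibers [DecidableEq ι] (p : Finset ι → Prop)
    (U : Finset ι) (h : ∀ A B, p A → p B → A ⊆ B → B \ A ⊆ U → A = B) :
    prob p ^ 2 * (#U + 1) ≤ 1 := by
  classical
  have count := card_le_of_isAntichain_fibers {A | p A} U fun A hA B hB =>
    h A B (mem_filter.1 hA).2 (mem_filter.1 hB).2
  have key : #{A | p A} ^ 2 * (#U + 1) ≤ (2 ^ Fintype.card ι) ^ 2 :=
    calc #{A | p A} ^ 2 * (#U + 1)
        ≤ ((#U).choose (#U / 2) * 2 ^ #Uᶜ) ^ 2 * (#U + 1) := by gcongr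
      _ = (#U).choose (#U / 2) ^ 2 * (#U + 1) * (2 ^ #Uᶜ) ^ 2 := by ring
      _ ≤ 4 ^ #U * (2 ^ #Uᶜ) ^ 2 := by
          gcongr
          exact sq_choose_half_mul_le _
      _ = (2 ^ Fintype.card ι) ^ 2 := by
          rw [← card_add_card_compl U, pow_add, mul_pow, pow_right_comm 2 #U]
          norm_num
  rw [prob_eq_card_div, Fintype.card_finset, div_pow, div_mul_eq_mul_div]
  exact div_le_one_of_le₀ (mod_cast key) (by positivity)

theorem sq_prob_sum_mem_Icc_mul_le_one {c : ι → ℝ} (hc : ∀ i, 0 ≤ c i) (t δ : ℝ) (U : Finset ι)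
    (hU : ∀ i ∈ U, δ < c i) :
    prob (fun A : Finset ι => ∑ i ∈ A, c i ∈ Set.Icc t (t + δ)) ^ 2 * (#U + 1) ≤ 1 := by
  classical
  refine sq_prob_mul_le_one_of_isAntichain_fibers _ U fun A B hA hB hAB hsub => ?_
  by_contra hne
  obtain ⟨i, hi⟩ := sdiff_nonempty.2 fun hBA => hne (hAB.antisymm hBA)
  have := single_le_sum (fun j _ => hc j) hi
  have := sum_sdiff (f := c) hAB
  linarith [hA.1, hB.2, hU i (hsub hi)]

theorem prob_sum_eq_le_prob_abs_sub_eq (c : ι → ℝ) (t : ℝ) (i : ι) :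
    prob (fun A : Finset ι => ∑ j ∈ A, c j = t) ≤
      prob (fun A : Finset ι => |∑ j ∈ A, c j - t| = |c i|) := by
  classical
  have toggle : Function.Involutive (symmDiff · ({i} : Finset ι)) := fun A => by simp
  rw [← prob_comp_equiv toggle.toPerm]
  refine prob_mono fun A (hA : ∑ j ∈ symmDiff A {i}, c j = t) => ?_
  rw [← hA]
  by_cases hi : i ∈ A
  · have : symmDiff A {i} = A.erase i := by grind [mem_symmDiff]
    rw [this, ← add_sum_erase A c hi, add_sub_cancel_right]
  · have : symmDiff A {i} = insert i A := by grind [mem_symmDiff]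
    rw [this, sum_insert hi, sub_add_cancel_right, abs_neg]

theorem card_mul_prob_sum_eq_le (c : ι → ℝ) (t M : ℝ) (V : Finset ℝ)
    (hV : ∀ x ∈ V, x ≤ M ∧ ∃ i, |c i| = x) :
    #V * prob (fun A : Finset ι => ∑ i ∈ A, c i = t) ≤
      prob (fun A : Finset ι => ∑ i ∈ A, c i ∈ Set.Icc t (t + M)) +
        prob (fun A : Finset ι => ∑ i ∈ A, c i ∈ Set.Icc (t - M) (t - M + M)) := by
  calc #V * prob (fun A : Finset ι => ∑ i ∈ A, c i = t)
      ≤ ∑ x ∈ V, prob (fun A : Finset ι => |∑ i ∈ A, c i - t| = x) := by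
        rw [← nsmul_eq_mul]
        refine card_nsmul_le_sum _ _ _ fun x hx => ?_
        obtain ⟨i, rfl⟩ := (hV x hx).2
        exact prob_sum_eq_le_prob_abs_sub_eq c t i
    _ ≤ prob (fun A : Finset ι => ∃ x ∈ V, |∑ i ∈ A, c i - t| = x) :=
        sum_prob_le_prob_exists _ _ fun A x _ y _ hx hy => hx.symm.trans hy
    _ ≤ prob (fun A : Finset ι => ∑ i ∈ A, c i ∈ Set.Icc t (t + M) ∨
          ∑ i ∈ A, c i ∈ Set.Icc (t - M) (t - M + M)) := by
        refine prob_mono fun A ⟨x, hx, hA⟩ => ?_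
        have := abs_le.1 (hA.trans_le (hV x hx).1)
        rcases le_total t (∑ i ∈ A, c i) with h | h
        · exact Or.inl ⟨h, by linarith⟩
        · exact Or.inr ⟨by linarith, by linarith⟩
    _ ≤ _ := prob_or_le _ _

theorem exists_median {α : Type*} [LinearOrder α] (V : Finset α) (hV : V.Nonempty) :
    ∃ M, #V ≤ 2 * #{x ∈ V | x ≤ M} ∧ #V ≤ 2 * (#{x ∈ V | M < x} + 1) := by
  obtain ⟨d, hd⟩ : ∃ d, #V = d := ⟨_, rfl⟩
  have pos := hV.card_pos
  have enumerate := V.map_orderEmbOfFin_univ hd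
  generalize V.orderEmbOfFin hd = e at enumerate
  let k : Fin d := ⟨d / 2, by lia⟩
  have lower : #{x ∈ V | x ≤ e k} = d / 2 + 1 := by
    rw [← enumerate, filter_map, card_map, ← Fin.card_Iic k, ← filter_ge_eq_Iic]
    simp
  have upper := card_filter_add_card_filter_not (s := V) (· ≤ e k)
  simp only [not_le] at upper
  exact ⟨e k, by omega, by omega⟩

theorem sq_prob_sum_eq_mul_le {c : ι → ℝ} (hc : ∀ i, 0 ≤ c i) (t : ℝ) :
    prob (fun A : Finset ι => ∑ i ∈ A, c i = t) ^ 2 * (#(univ.image c)) ^ 3 ≤ 32 := by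
  set V := univ.image c
  set ρ := prob fun A : Finset ι => ∑ i ∈ A, c i = t
  rcases V.eq_empty_or_nonempty with hV | hV
  · simp [hV]
  obtain ⟨M, lower, upper⟩ := exists_median V hV
  set L := #{x ∈ V | x ≤ M}
  let U : Finset ι := {i | M < c i}
  have hU : #{x ∈ V | M < x} ≤ #U := by
    rw [filter_image]
    exact card_image_le
  have window (s : ℝ) := sq_prob_sum_mem_Icc_mul_le_one hc s M U fun i hi => (mem_filter.1 hi).2
  have key := card_mul_prob_sum_eq_le c t M {x ∈ V | x ≤ M} fun x hx => by
    obtain ⟨hxV, hxM⟩ := mem_filter.1 hx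
    obtain ⟨i, -, rfl⟩ := mem_image.1 hxV
    exact ⟨hxM, i, abs_of_nonneg (hc i)⟩
  have hρ : 0 ≤ ρ := prob_nonneg _
  have main : (L * ρ) ^ 2 * (#U + 1) ≤ 4 :=
    calc (L * ρ) ^ 2 * (#U + 1) ≤ _ := by gcongr
      _ ≤ _ := mul_le_mul_of_nonneg_right add_sq_le (by positivity)
      _ ≤ 4 := by linarith [window t, window (t - M)]
  have hLV : (#V : ℝ) ≤ 2 * L := mod_cast lower
  have hUV : (#V : ℝ) ≤ 2 * (#U + 1) := mod_cast upper.trans (by lia)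
  calc ρ ^ 2 * #V ^ 3 = ρ ^ 2 * (#V ^ 2 * #V) := by ring
    _ ≤ ρ ^ 2 * ((2 * L) ^ 2 * (2 * (#U + 1))) := by gcongr
    _ = 8 * ((L * ρ) ^ 2 * (#U + 1)) := by ring
    _ ≤ 32 := by linarith

end LittlewoodOfford

section SignedSums

variable {ι : Type*} [Fintype ι]

/-- The signed sum `∑ i, x i * a i` as a linear functional of the vector `a`. -/
noncomputable def signSum (x : ι → ℤˣ) : Module.Dual ℝ (ι → ℝ) := ∑ i, x i • LinearMap.proj i

theorem signSum_apply (x : ι → ℤˣ) (a : ι → ℝ) : signSum x a = ∑ i, x i • a i := by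
  simp [signSum]

/-- The set of absolute values of the entries of `a`, including `0` if it occurs. -/
noncomputable def absValues (a : ι → ℝ) : Finset ℝ := univ.image fun i => |a i|

theorem card_absValues_le (a : ι → ℝ) : #(absValues a) ≤ hammingNorm a + 1 := by
  classical
  have : absValues a ⊆ insert 0 (({i | a i ≠ 0} : Finset ι).image fun i => |a i|) := by
    intro x hx
    obtain ⟨i, -, rfl⟩ := mem_image.1 hx
    by_cases hi : a i = 0
    · simp [hi]
    · exact mem_insert_of_mem (mem_image_of_mem _ (by simpa using hi))
  exact (card_le_card this).trans ((card_insert_le _ _).trans (by gcongr; exact card_image_le))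

theorem exists_units_smul_eq_abs {κ : Type*} (a : κ → ℝ) :
    ∃ u : κ → ℤˣ, ∀ i, u i • a i = |a i| := by
  have (i : κ) : ∃ s : ℤˣ, s • a i = |a i| := by
    rcases abs_choice (a i) with h | h
    · exact ⟨1, by simp [h]⟩
    · exact ⟨-1, by simp [h, Units.smul_def]⟩
  choose u hu using this
  exact ⟨u, hu⟩

theorem exists_eq_units_smul (a : ι → ℝ) {s : ℕ} (hs : #(absValues a) = s) :
    ∃ (f : ι → ℤˣ × Fin s) (y : Fin s → ℝ), ∀ i, a i = (f i).1 • y (f i).2 := by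
  obtain ⟨u, hu⟩ := exists_units_smul_eq_abs a
  let e : absValues a ≃ Fin s := (absValues a).equivFinOfCardEq hs
  refine ⟨fun i => (u i, e ⟨|a i|, mem_image_of_mem _ (mem_univ i)⟩), fun c => (e.symm c : ℝ),
    fun i => ?_⟩
  simp only [Equiv.symm_apply_apply, ← hu, smul_smul, Int.units_mul_self, one_smul]

variable [DecidableEq ι]

/-- The probability that a uniformly random signed sum of the entries of `a` vanishes. -/
noncomputable def zeroProb (a : ι → ℝ) : ℝ := prob fun x => signSum x a = 0

theorem zeroProb_nonneg (a : ι → ℝ) : 0 ≤ zeroProb a := prob_nonneg _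

theorem zeroProb_le_prob_sum_abs_eq (a : ι → ℝ) :
    zeroProb a ≤ prob fun A : Finset ι => ∑ i ∈ A, |a i| = (∑ i, |a i|) / 2 := by
  obtain ⟨u, hu⟩ := exists_units_smul_eq_abs a
  let e : Finset ι ≃ (ι → ℤˣ) :=
    { toFun A i := if i ∈ A then u i else -u i
      invFun x := {i | x i = u i}
      left_inv A := by ext i; by_cases hi : i ∈ A <;> simp [hi]
      right_inv x := by
        ext1 i
        by_cases hi : x i = u i
        · simp [hi]
        · simp [Int.units_ne_iff_eq_neg.1 hi] }
  rw [zeroProb, ← prob_comp_equiv e]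
  refine prob_mono fun A hA => ?_
  have term (i : ι) : e A i • a i = 2 * (if i ∈ A then |a i| else 0) - |a i| := by
    by_cases hi : i ∈ A <;>
      simp only [e, Equiv.coe_fn_mk, hi, if_true, if_false, ← hu, Units.smul_def, Units.val_neg,
        neg_smul] <;> ring
  simp only [signSum_apply, term, sum_sub_distrib, ← mul_sum, sum_ite_mem, univ_inter] at hA
  linarith

theorem sq_zeroProb_mul_hammingNorm_add_one_le (a : ι → ℝ) :
    zeroProb a ^ 2 * (hammingNorm a + 1) ≤ 1 := by
  refine le_trans ?_ (sq_prob_sum_mem_Icc_mul_le_one (fun i => abs_nonneg (a i))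
    ((∑ i, |a i|) / 2) 0 {i | a i ≠ 0} fun i hi => by simpa using hi)
  have := zeroProb_le_prob_sum_abs_eq a
  have := zeroProb_nonneg a
  simp only [add_zero, Set.Icc_self, Set.mem_singleton_iff, hammingNorm]
  gcongr

theorem sq_zeroProb_mul_card_absValues_pow_le (a : ι → ℝ) :
    zeroProb a ^ 2 * #(absValues a) ^ 3 ≤ 32 := by
  refine le_trans ?_ (sq_prob_sum_eq_mul_le (fun i => abs_nonneg (a i)) ((∑ i, |a i|) / 2))
  have := zeroProb_le_prob_sum_abs_eq a
  have := zeroProb_nonneg a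
  gcongr
  rfl

theorem zeroProb_pow_mul_le (a : ι → ℝ) :
    zeroProb a ^ 8 * (#(absValues a) ^ 9 * (hammingNorm a + 1)) ≤ 32 ^ 3 :=
  calc zeroProb a ^ 8 * (#(absValues a) ^ 9 * (hammingNorm a + 1))
      = (zeroProb a ^ 2 * #(absValues a) ^ 3) ^ 3 * (zeroProb a ^ 2 * (hammingNorm a + 1)) := by
        ring
    _ ≤ 32 ^ 3 * 1 := by
        gcongr
        · exact sq_zeroProb_mul_card_absValues_pow_le a
        · exact sq_zeroProb_mul_hammingNorm_add_one_le a
    _ = 32 ^ 3 := mul_one _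

theorem zeroProb_le_three_quarters {a : ι → ℝ} (ha : a ≠ 0) : zeroProb a ≤ 3 / 4 := by
  have pos : (1 : ℝ) ≤ hammingNorm a := mod_cast hammingNorm_pos_iff.2 ha
  have := sq_zeroProb_mul_hammingNorm_add_one_le a
  nlinarith [sq_nonneg (zeroProb a)]

end SignedSums

section SignKernel

variable {ι κ : Type*} [Fintype ι]

/-- The map `a ↦ X a` defined by a matrix `X` of signs. -/
noncomputable def signMap (X : κ → ι → ℤˣ) : (ι → ℝ) →ₗ[ℝ] κ → ℝ :=
  LinearMap.pi fun j => signSum (X j)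

/-- The kernel of a matrix of signs. -/
noncomputable def signKer (X : κ → ι → ℤˣ) : Submodule ℝ (ι → ℝ) := LinearMap.ker (signMap X)

theorem mem_signKer {X : κ → ι → ℤˣ} {a : ι → ℝ} : a ∈ signKer X ↔ ∀ j, signSum (X j) a = 0 := by
  simp [signKer, signMap, funext_iff]

theorem exists_card_le_forall_mem_signKer (W : Submodule ℝ (ι → ℝ)) (X : κ → ι → ℤˣ) :
    ∃ I : Finset κ, #I ≤ Module.finrank ℝ W ∧
      ∀ a ∈ W, (∀ j ∈ I, signSum (X j) a = 0) → a ∈ signKer X := by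
  classical
  let f (j : κ) : Module.Dual ℝ W := (signSum (X j)).comp W.subtype
  obtain ⟨κ', g, -, hspan, hli⟩ := exists_linearIndependent' ℝ f
  have : Finite κ' := hli.finite
  have := Fintype.ofFinite κ'
  refine ⟨univ.image g, ?_, fun a ha h => mem_signKer.2 fun j => ?_⟩
  · calc #(univ.image g) ≤ Fintype.card κ' := card_image_le
      _ ≤ Module.finrank ℝ (Module.Dual ℝ W) := hli.fintype_card_le_finrank
      _ = Module.finrank ℝ W := Subspace.dual_finrank_eq
  · have hle : Submodule.span ℝ (Set.range (f ∘ g)) ≤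
        LinearMap.ker (LinearMap.applyₗ (R := ℝ) (⟨a, ha⟩ : W) : Module.Dual ℝ W →ₗ[ℝ] ℝ) := by
      rw [Submodule.span_le]
      rintro _ ⟨k, rfl⟩
      exact h (g k) (mem_image_of_mem g (mem_univ k))
    exact hle (hspan.symm ▸ Submodule.subset_span (Set.mem_range_self j) : f j ∈ _)

variable [Fintype κ] [DecidableEq ι] [DecidableEq κ]

theorem prob_exists_mem_signKer_and_le_pow (W : Submodule ℝ (ι → ℝ)) {r : ℝ} (hr : 0 ≤ r)
    (I : Finset κ) :
    prob (fun X : κ → ι → ℤˣ => (∃ a ∈ W, zeroProb a ≤ r ∧ a ∈ signKer X) ∧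
      ∀ a ∈ W, (∀ j ∈ I, signSum (X j) a = 0) → a ∈ signKer X) ≤ r ^ (Fintype.card κ - #I) := by
  let E := Equiv.piEquivPiSubtypeProd (fun j : κ => j ∈ I) fun _ => ι → ℤˣ
  have hcard : Fintype.card {j // j ∉ I} = Fintype.card κ - #I := by
    rw [Fintype.card_subtype_compl, Fintype.card_coe]
  rw [← prob_comp_equiv E.symm, prob_prod]
  refine expect_le univ_nonempty fun Y _ => ?_
  by_cases hY : ∃ a ∈ W, zeroProb a ≤ r ∧ ∀ j, signSum (Y j) a = 0
  · obtain ⟨a, haW, har, haY⟩ := hY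
    have rows_outside (Z : {j // j ∉ I} → ι → ℤˣ)
        (h : ∀ b ∈ W, (∀ j ∈ I, signSum (E.symm (Y, Z) j) b = 0) → b ∈ signKer (E.symm (Y, Z)))
        (j : {j // j ∉ I}) : signSum (Z j) a = 0 := by
      have := mem_signKer.1 (h a haW fun j hj => by simpa [E, hj] using haY ⟨j, hj⟩) j
      simpa [E, j.2] using this
    calc _ ≤ prob fun Z : {j // j ∉ I} → ι → ℤˣ => ∀ j, signSum (Z j) a = 0 :=
          prob_mono fun Z h => rows_outside Z h.2
      _ = zeroProb a ^ (Fintype.card κ - #I) := by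
          rw [prob_forall_apply fun x => signSum x a = 0, hcard, zeroProb]
      _ ≤ r ^ (Fintype.card κ - #I) := by gcongr; exact zeroProb_nonneg a
  · refine le_of_eq_of_le (expect_eq_zero fun Z _ => if_neg ?_) (pow_nonneg hr _)
    rintro ⟨⟨a, haW, har, ha⟩, -⟩
    exact hY ⟨a, haW, har, fun j => by simpa [E] using mem_signKer.1 ha j⟩

theorem prob_exists_mem_signKer_le (W : Submodule ℝ (ι → ℝ)) {r : ℝ} (hr : 0 ≤ r) (hr1 : r ≤ 1)
    {d : ℕ} (hd : Module.finrank ℝ W ≤ d) :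
    prob (fun X : κ → ι → ℤˣ => ∃ a ∈ W, zeroProb a ≤ r ∧ a ∈ signKer X) ≤
      #{I : Finset κ | #I ≤ d} * r ^ (Fintype.card κ - d) := by
  calc prob (fun X : κ → ι → ℤˣ => ∃ a ∈ W, zeroProb a ≤ r ∧ a ∈ signKer X)
      ≤ prob (fun X : κ → ι → ℤˣ => ∃ I ∈ ({I | #I ≤ d} : Finset (Finset κ)),
          (∃ a ∈ W, zeroProb a ≤ r ∧ a ∈ signKer X) ∧
            ∀ a ∈ W, (∀ j ∈ I, signSum (X j) a = 0) → a ∈ signKer X) := by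
        refine prob_mono fun X hX => ?_
        obtain ⟨I, hI, hIX⟩ := exists_card_le_forall_mem_signKer W X
        exact ⟨I, mem_filter.2 ⟨mem_univ I, hI.trans hd⟩, hX, hIX⟩
    _ ≤ ∑ I : Finset κ with #I ≤ d, r ^ (Fintype.card κ - #I) :=
        (prob_exists_mem_le _ _).trans
          (sum_le_sum fun I _ => prob_exists_mem_signKer_and_le_pow W hr I)
    _ ≤ ∑ I : Finset κ with #I ≤ d, r ^ (Fintype.card κ - d) :=
        sum_le_sum fun I hI => pow_le_pow_of_le_one hr hr1 (by have := (mem_filter.1 hI).2; lia)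
    _ = _ := by rw [sum_const, nsmul_eq_mul]

theorem card_filter_card_le (κ : Type*) [Fintype κ] (K : ℕ) :
    (#{S : Finset κ | #S ≤ K} : ℝ) ≤ (33 / 32) ^ Fintype.card κ * 32 ^ K := by
  rw [← div_le_iff₀ (by positivity)]
  calc (#{S : Finset κ | #S ≤ K} : ℝ) / 32 ^ K = ∑ S : Finset κ with #S ≤ K, (1 / 32 : ℝ) ^ K := by
        rw [sum_const, nsmul_eq_mul, one_div_pow, mul_one_div]
    _ ≤ ∑ S : Finset κ with #S ≤ K, (1 / 32 : ℝ) ^ #S := sum_le_sum fun S hS =>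
        pow_le_pow_of_le_one (by norm_num) (by norm_num) (mem_filter.1 hS).2
    _ ≤ ∑ S : Finset κ, (1 / 32 : ℝ) ^ #S :=
        sum_le_sum_of_subset_of_nonneg (filter_subset _ _) fun _ _ _ => by positivity
    _ = (33 / 32) ^ Fintype.card κ := by
        have := Fintype.sum_pow_mul_eq_add_pow κ (1 / 32 : ℝ) 1
        simp only [one_pow, mul_one] at this
        rw [this]
        norm_num

theorem prob_exists_hammingNorm_le (K : ℕ) :
    prob (fun X : κ → ι → ℤˣ => ∃ a ∈ signKer X, a ≠ 0 ∧ hammingNorm a ≤ K) ≤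
      #{S : Finset ι | #S ≤ K} * (#{I : Finset κ | #I ≤ K} * (3 / 4) ^ (Fintype.card κ - K)) := by
  calc prob (fun X : κ → ι → ℤˣ => ∃ a ∈ signKer X, a ≠ 0 ∧ hammingNorm a ≤ K)
      ≤ prob (fun X : κ → ι → ℤˣ => ∃ S ∈ ({S | #S ≤ K} : Finset (Finset ι)),
          ∃ a ∈ Pi.spanSubset ℝ (S : Set ι), zeroProb a ≤ 3 / 4 ∧ a ∈ signKer X) := by
        refine prob_mono fun X ⟨a, haX, ha, haK⟩ => ⟨univ.filter (a · ≠ 0),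
          mem_filter.2 ⟨mem_univ _, haK⟩, a, ?_, zeroProb_le_three_quarters ha, haX⟩
        simp [Pi.mem_spanSubset_iff]
    _ ≤ ∑ S : Finset ι with #S ≤ K,
          #{I : Finset κ | #I ≤ K} * (3 / 4 : ℝ) ^ (Fintype.card κ - K) := by
        refine (prob_exists_mem_le _ _).trans (sum_le_sum fun S hS => ?_)
        refine prob_exists_mem_signKer_le _ (by norm_num) (by norm_num) ?_
        rw [Pi.dim_spanSubset, Set.ncard_coe_finset]
        exact (mem_filter.1 hS).2
    _ = _ := by rw [sum_const, nsmul_eq_mul]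

theorem pow_le_pow_mul_inv_pow {x : ℝ} (hx : 0 < x) (hx1 : x ≤ 1) {k l n : ℕ} (h : n ≤ k + l) :
    x ^ k ≤ x ^ n * x⁻¹ ^ l := by
  rw [inv_pow, ← div_eq_mul_inv, le_div_iff₀ (by positivity), ← pow_add]
  exact pow_le_pow_of_le_one hx.le hx1 h

theorem prob_exists_hammingNorm_le_pow {K : ℕ} (hK : 64 * K ≤ Fintype.card ι)
    (hle : Fintype.card κ ≤ Fintype.card ι) (hge : Fintype.card ι ≤ Fintype.card κ + 1)
    (hpos : 1 < Fintype.card ι) :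
    prob (fun X : κ → ι → ℤˣ => ∃ a ∈ signKer X, a ≠ 0 ∧ hammingNorm a ≤ K) ≤
      4 / 3 * (9 / 10) ^ Fintype.card ι := by
  have hS := card_filter_card_le ι K
  have hI := card_filter_card_le κ K
  refine (prob_exists_hammingNorm_le K).trans ?_
  generalize Fintype.card ι = n at *
  generalize Fintype.card κ = m at *
  have hI' : (#{I : Finset κ | #I ≤ K} : ℝ) ≤ (33 / 32) ^ n * 32 ^ K :=
    hI.trans (by gcongr; norm_num)
  have hm : (3 / 4 : ℝ) ^ (m - K) ≤ (3 / 4) ^ n * (4 / 3) ^ (K + 1) := by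
    convert pow_le_pow_mul_inv_pow (by norm_num : (0 : ℝ) < 3 / 4) (by norm_num)
      (by lia : n ≤ m - K + (K + 1)) using 3
    norm_num
  have hK' : (4096 / 3 : ℝ) ^ K ≤ (9 / 8) ^ n := by
    calc (4096 / 3 : ℝ) ^ K ≤ ((9 / 8) ^ 64) ^ K := by gcongr; norm_num
      _ = (9 / 8) ^ (64 * K) := by rw [pow_mul]
      _ ≤ _ := pow_le_pow_right₀ (by norm_num) hK
  calc (#{S : Finset ι | #S ≤ K} * (#{I : Finset κ | #I ≤ K} * (3 / 4) ^ (m - K)) : ℝ)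
      ≤ (33 / 32) ^ n * 32 ^ K *
          ((33 / 32) ^ n * 32 ^ K * ((3 / 4) ^ n * (4 / 3) ^ (K + 1))) := by gcongr
    _ = 4 / 3 * (33 / 32 * (33 / 32) * (3 / 4)) ^ n * (32 * 32 * (4 / 3)) ^ K := by
        simp only [mul_pow]
        ring
    _ ≤ 4 / 3 * (33 / 32 * (33 / 32) * (3 / 4)) ^ n * (9 / 8) ^ n := by
        gcongr
        exact le_of_eq_of_le (by norm_num) hK'
    _ = 4 / 3 * (33 / 32 * (33 / 32) * (3 / 4) * (9 / 8)) ^ n := by rw [mul_assoc, ← mul_pow]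
    _ ≤ _ := by gcongr; norm_num

theorem prob_exists_card_absValues_eq_le {r : ℝ} (hr : 0 ≤ r) (hr1 : r ≤ 1) (s : ℕ) :
    prob (fun X : κ → ι → ℤˣ => ∃ a ∈ signKer X, zeroProb a ≤ r ∧ #(absValues a) = s) ≤
      (2 * s) ^ Fintype.card ι * (2 ^ Fintype.card κ * r ^ (Fintype.card κ - s)) := by
  let W (f : ι → ℤˣ × Fin s) : Submodule ℝ (ι → ℝ) :=
    LinearMap.range (LinearMap.pi fun i => (f i).1 • LinearMap.proj (f i).2 : (Fin s → ℝ) →ₗ[ℝ] _)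
  have hW (f) : Module.finrank ℝ (W f) ≤ s :=
    (LinearMap.finrank_range_le _).trans_eq (Module.finrank_fin_fun ℝ)
  calc prob (fun X : κ → ι → ℤˣ => ∃ a ∈ signKer X, zeroProb a ≤ r ∧ #(absValues a) = s)
      ≤ prob (fun X : κ → ι → ℤˣ => ∃ f, ∃ a ∈ W f, zeroProb a ≤ r ∧ a ∈ signKer X) := by
        refine prob_mono fun X ⟨a, haX, har, has⟩ => ?_
        obtain ⟨f, y, hy⟩ := exists_eq_units_smul a has
        exact ⟨f, a, ⟨y, funext fun i => (hy i).symm⟩, har, haX⟩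
    _ ≤ ∑ f : ι → ℤˣ × Fin s, 2 ^ Fintype.card κ * r ^ (Fintype.card κ - s) := by
        refine (prob_exists_le _).trans (sum_le_sum fun f _ => ?_)
        refine (prob_exists_mem_signKer_le (W f) hr hr1 (hW f)).trans ?_
        gcongr
        exact_mod_cast (card_le_univ _).trans_eq Fintype.card_finset
    _ = _ := by
        rw [sum_const, nsmul_eq_mul, card_univ, Fintype.card_fun, Fintype.card_prod,
          Fintype.card_fin, Fintype.card_units_int]
        push_cast
        rfl

-- The ninth power turns the eighth root implicit in `r` into an integral power.
theorem two_mul_pow_mul_pow_le {n m s : ℕ} {r : ℝ} (hr : 0 ≤ r) (hr1 : r ≤ 1) (hnm : n ≤ m + 1)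
    (hsn : 9 * (s + 1) ≤ n) (h : (2 * s) ^ 9 * r ^ 8 ≤ (1 / 8) ^ 9) :
    (2 * s) ^ n * r ^ (m - s) ≤ (1 / 8) ^ n := by
  refine le_of_pow_le_pow_left₀ (n := 9) (by norm_num) (by positivity) ?_
  calc ((2 * s) ^ n * r ^ (m - s)) ^ 9 = ((2 * s : ℝ) ^ 9) ^ n * r ^ (9 * (m - s)) := by
        rw [mul_pow, pow_right_comm, ← pow_mul' r]
    _ ≤ ((2 * s : ℝ) ^ 9) ^ n * r ^ (8 * n) := by
        gcongr ?_ * ?_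
        exact pow_le_pow_of_le_one hr hr1 (by lia)
    _ = ((2 * s : ℝ) ^ 9 * r ^ 8) ^ n := by rw [mul_pow _ (r ^ 8), ← pow_mul r]
    _ ≤ ((1 / 8) ^ 9) ^ n := by gcongr
    _ = ((1 / 8) ^ n) ^ 9 := pow_right_comm ..

theorem zeroProb_pow_mul_le_of_le {a : ι → ℝ} {n : ℕ} (ha : n ≤ 64 * (hammingNorm a + 1)) :
    zeroProb a ^ 8 * (n * #(absValues a) ^ 9) ≤ 2 ^ 21 := by
  have ha' : (n : ℝ) ≤ 64 * (hammingNorm a + 1) := mod_cast ha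
  calc zeroProb a ^ 8 * (n * #(absValues a) ^ 9)
      ≤ zeroProb a ^ 8 * (64 * (hammingNorm a + 1) * #(absValues a) ^ 9) := by gcongr
    _ = 64 * (zeroProb a ^ 8 * (#(absValues a) ^ 9 * (hammingNorm a + 1))) := by ring
    _ ≤ 64 * 32 ^ 3 := by
        gcongr
        exact zeroProb_pow_mul_le a
    _ = 2 ^ 21 := by norm_num

theorem prob_exists_card_absValues_eq_le_pow {s : ℕ} (hs : 0 < s)
    (hsn : 9 * (s + 1) ≤ Fintype.card ι) (hle : Fintype.card κ ≤ Fintype.card ι)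
    (hge : Fintype.card ι ≤ Fintype.card κ + 1) (hbig : 2 ^ 57 ≤ Fintype.card ι) :
    prob (fun X : κ → ι → ℤˣ => ∃ a ∈ signKer X,
      Fintype.card ι ≤ 64 * (hammingNorm a + 1) ∧ #(absValues a) = s) ≤
        (1 / 4) ^ Fintype.card ι := by
  set n := Fintype.card ι
  set m := Fintype.card κ
  have hn : (2 : ℝ) ^ 57 ≤ n := mod_cast hbig
  have hn0 : (0 : ℝ) < n := lt_of_lt_of_le (by norm_num) hn
  have hs1 : (1 : ℝ) ≤ s := mod_cast hs
  obtain ⟨r, hr, hr8⟩ : ∃ r : ℝ, 0 ≤ r ∧ r ^ 8 = 2 ^ 21 / (n * s ^ 9) :=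
    ⟨_, Real.rpow_nonneg (by positivity) _, Real.rpow_inv_natCast_pow (by positivity) (by norm_num)⟩
  have hr1 : r ≤ 1 := by
    rw [← pow_le_one_iff_of_nonneg hr (by norm_num : 8 ≠ 0), hr8, div_le_one (by positivity)]
    nlinarith [one_le_pow₀ hs1 (n := 9)]
  have zeroProb_le (a : ι → ℝ) (ha : n ≤ 64 * (hammingNorm a + 1)) (has : #(absValues a) = s) :
      zeroProb a ≤ r := by
    subst has
    refine le_of_pow_le_pow_left₀ (n := 8) (by norm_num) hr ?_
    rw [hr8, le_div_iff₀ (by positivity)]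
    exact zeroProb_pow_mul_le_of_le ha
  have templates : (2 * s) ^ n * r ^ (m - s) ≤ (1 / 8) ^ n := by
    refine two_mul_pow_mul_pow_le hr hr1 hge hsn ?_
    calc (2 * s) ^ 9 * r ^ 8 = 2 ^ 30 / n := by rw [hr8]; field_simp
      _ ≤ 2 ^ 30 / 2 ^ 57 := by gcongr
      _ = (1 / 8) ^ 9 := by norm_num
  calc _ ≤ prob fun X : κ → ι → ℤˣ => ∃ a ∈ signKer X, zeroProb a ≤ r ∧ #(absValues a) = s :=
        prob_mono fun X ⟨a, haX, ha, has⟩ => ⟨a, haX, zeroProb_le a ha has, has⟩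
    _ ≤ (2 * s) ^ n * (2 ^ m * r ^ (m - s)) := prob_exists_card_absValues_eq_le hr hr1 s
    _ = (2 * s) ^ n * r ^ (m - s) * 2 ^ m := by ring
    _ ≤ (1 / 8) ^ n * 2 ^ n := by gcongr; norm_num
    _ = (1 / 4) ^ n := by rw [← mul_pow]; norm_num

/-- A vector of length `n` is structured if it takes at most `n / 10` distinct absolute values. -/
def IsStructured (a : ι → ℝ) : Prop := 10 * #(absValues a) ≤ Fintype.card ι

theorem prob_exists_isStructured_le (hle : Fintype.card κ ≤ Fintype.card ι)
    (hge : Fintype.card ι ≤ Fintype.card κ + 1) (hbig : 2 ^ 57 ≤ Fintype.card ι) :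
    prob (fun X : κ → ι → ℤˣ => ∃ a ∈ signKer X, a ≠ 0 ∧ IsStructured a) ≤
      3 * (9 / 10) ^ Fintype.card ι := by
  set n := Fintype.card ι
  let sizes := {s ∈ range (n + 1) | 0 < s ∧ 9 * (s + 1) ≤ n}
  let few (s : ℕ) (X : κ → ι → ℤˣ) : Prop :=
    ∃ a ∈ signKer X, n ≤ 64 * (hammingNorm a + 1) ∧ #(absValues a) = s
  have few_le : ∑ k ∈ sizes, prob (few k) ≤ (9 / 10) ^ n := by
    calc ∑ k ∈ sizes, prob (few k) ≤ ∑ _k ∈ sizes, (1 / 4 : ℝ) ^ n := sum_le_sum fun _ hk => by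
          obtain ⟨-, hk0, hkn⟩ := mem_filter.1 hk
          exact prob_exists_card_absValues_eq_le_pow hk0 hkn hle hge hbig
      _ = #sizes * (1 / 4 : ℝ) ^ n := by rw [sum_const, nsmul_eq_mul]
      _ ≤ 2 ^ n * (1 / 4) ^ n := by
          gcongr
          exact_mod_cast (card_filter_le _ _).trans ((card_range _).trans_le Nat.lt_two_pow_self)
      _ = (1 / 2) ^ n := by rw [← mul_pow]; norm_num
      _ ≤ (9 / 10) ^ n := pow_le_pow_left₀ (by norm_num) (by norm_num) n
  calc _ ≤ prob fun X : κ → ι → ℤˣ =>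
        (∃ a ∈ signKer X, a ≠ 0 ∧ hammingNorm a ≤ n / 64) ∨ ∃ k ∈ sizes, few k X := by
        refine prob_mono fun X ⟨a, haX, ha, has⟩ => ?_
        obtain ⟨i, -⟩ := Function.ne_iff.1 ha
        have hpos : 0 < #(absValues a) := card_pos.2 ⟨_, mem_image_of_mem _ (mem_univ i)⟩
        by_cases h : hammingNorm a ≤ n / 64
        · exact .inl ⟨a, haX, ha, h⟩
        · have hs : 10 * #(absValues a) ≤ n := has
          have hmem : #(absValues a) ∈ sizes :=
            mem_filter.2 ⟨mem_range.2 (by omega), hpos, by omega⟩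
          exact .inr ⟨_, hmem, a, haX, by omega, rfl⟩
    _ ≤ 4 / 3 * (9 / 10) ^ n + (9 / 10) ^ n :=
        (prob_or_le _ _).trans (add_le_add
          (prob_exists_hammingNorm_le_pow (by lia) hle hge (by lia))
          ((prob_exists_mem_le _ _).trans few_le))
    _ ≤ 3 * (9 / 10) ^ n := by linarith [pow_nonneg (by norm_num : (0 : ℝ) ≤ 9 / 10) n]

end SignKernel

section Singularity

variable {ι : Type*} [Fintype ι]

theorem sum_mul_signSum_eq_zero {κ : Type*} [Fintype κ] {X : κ → ι → ℤˣ} {b : κ → ℝ}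
    (hb : b ∈ signKer (Function.swap X)) (a : ι → ℝ) : ∑ k, b k * signSum (X k) a = 0 := by
  calc ∑ k, b k * signSum (X k) a = ∑ i, signSum (Function.swap X i) b * a i := by
        simp only [signSum_apply, mul_sum, sum_mul, Units.smul_def, zsmul_eq_mul, Function.swap]
        rw [sum_comm]
        exact sum_congr rfl fun i _ => sum_congr rfl fun k _ => by ring
    _ = 0 := sum_eq_zero fun i _ => by rw [mem_signKer.1 hb i, zero_mul]

theorem exists_mem_signKer_ne_zero {κ : Type*} [Fintype κ] (h : Fintype.card κ < Fintype.card ι)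
    (Y : κ → ι → ℤˣ) : ∃ a ∈ signKer Y, a ≠ 0 :=
  Submodule.exists_mem_ne_zero_of_ne_bot
    (LinearMap.ker_ne_bot_of_finrank_lt (by simpa only [Module.finrank_fintype_fun_eq_card]))

/-- Row `j` of the matrix `X` enters a nontrivial linear relation between the rows, which is
encoded as a vector in the kernel of the transpose of `X`. -/
def IsDependentRow (j : ι) (X : ι → ι → ℤˣ) : Prop := ∃ b ∈ signKer (Function.swap X), b j ≠ 0

theorem card_le_mul_card_isDependentRow {X : ι → ι → ℤˣ} [DecidablePred (IsDependentRow · X)]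
    (hcard : 20 ≤ Fintype.card ι) (hX : signKer X ≠ ⊥)
    (hs : ¬ ∃ b ∈ signKer (Function.swap X), b ≠ 0 ∧ IsStructured b) :
    Fintype.card ι ≤ 20 * #{j | IsDependentRow j X} := by
  classical
  have hdet : (Matrix.of fun j i => ((X j i : ℤ) : ℝ)).det = 0 := by
    obtain ⟨a, haX, ha⟩ := Submodule.exists_mem_ne_zero_of_ne_bot hX
    refine Matrix.exists_mulVec_eq_zero_iff.1 ⟨a, ha, funext fun j => ?_⟩
    simpa [signSum_apply, Units.smul_def, Matrix.mulVec, dotProduct] using mem_signKer.1 haX j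
  obtain ⟨b, hb, hbX⟩ := Matrix.exists_mulVec_eq_zero_iff.2 (Matrix.det_transpose _ |>.trans hdet)
  have hbker : b ∈ signKer (Function.swap X) := mem_signKer.2 fun i => by
    simpa [signSum_apply, Units.smul_def, Matrix.mulVec, dotProduct] using congrFun hbX i
  have hunstructured : Fintype.card ι < 10 * #(absValues b) :=
    not_le.1 fun hbs => hs ⟨b, hbker, hb, hbs⟩
  have hsupport : hammingNorm b ≤ #{j | IsDependentRow j X} :=
    card_le_card fun j hj => by simpa using ⟨b, hbker, (mem_filter.1 hj).2⟩
  have := card_absValues_le b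
  lia

variable [DecidableEq ι]

theorem zeroProb_le_of_not_isStructured {a : ι → ℝ} (ha : ¬ IsStructured a) :
    zeroProb a ≤ √(32000 / Fintype.card ι ^ 3) := by
  rw [IsStructured, not_le] at ha
  have ha' : (Fintype.card ι : ℝ) ≤ 10 * #(absValues a) := mod_cast ha.le
  have hle : #(absValues a) ≤ Fintype.card ι := card_image_le
  have hpos : 0 < Fintype.card ι := by lia
  refine Real.le_sqrt_of_sq_le ?_
  rw [le_div_iff₀ (by positivity)]
  calc zeroProb a ^ 2 * Fintype.card ι ^ 3 ≤ zeroProb a ^ 2 * (10 * #(absValues a)) ^ 3 := by gcongr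
    _ = 1000 * (zeroProb a ^ 2 * #(absValues a) ^ 3) := by ring
    _ ≤ 1000 * 32 := by
        gcongr
        exact sq_zeroProb_mul_card_absValues_pow_le a
    _ = 32000 := by norm_num

theorem prob_isDependentRow_le (hbig : 2 ^ 57 ≤ Fintype.card ι) (j : ι) :
    prob (IsDependentRow j) ≤
      3 * (9 / 10) ^ Fintype.card ι + √(32000 / Fintype.card ι ^ 3) := by
  have hcard : Fintype.card {k // k ≠ j} = Fintype.card ι - 1 := by
    simp only [ne_eq, Fintype.card_subtype_compl, Fintype.card_subtype_eq]
  let E := (Equiv.piSplitAt j fun _ => ι → ℤˣ).trans (Equiv.prodComm _ _)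
  rw [← prob_comp_equiv E.symm]
  refine (prob_prod_le_add (q := fun Y => ∃ a ∈ signKer Y, a ≠ 0 ∧ IsStructured a)
    (Real.sqrt_nonneg _) fun Y hY => ?_).trans
      (add_le_add_left (prob_exists_isStructured_le (by lia) (by lia) hbig) _)
  obtain ⟨a, haY, ha⟩ := exists_mem_signKer_ne_zero (by lia) Y
  have orthogonal (x : ι → ℤˣ) (hx : IsDependentRow j (E.symm (Y, x))) : signSum x a = 0 := by
    obtain ⟨b, hb, hbj⟩ := hx
    have relation := sum_mul_signSum_eq_zero hb a
    rw [sum_eq_single j (fun k _ hk => ?_) (by simp)] at relation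
    · simpa [E, hbj] using relation
    · simpa [E, hk] using .inr (mem_signKer.1 haY ⟨k, hk⟩)
  exact (prob_mono orthogonal).trans
    (zeroProb_le_of_not_isStructured fun has => hY ⟨a, haY, ha, has⟩)

theorem prob_signKer_ne_bot_le (hbig : 2 ^ 57 ≤ Fintype.card ι) :
    prob (fun X : ι → ι → ℤˣ => signKer X ≠ ⊥) ≤
      63 * (9 / 10) ^ Fintype.card ι + 20 * √(32000 / Fintype.card ι ^ 3) := by
  classical
  set n := Fintype.card ι
  let structured (X : ι → ι → ℤˣ) : Prop := ∃ b ∈ signKer X, b ≠ 0 ∧ IsStructured b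
  let p (X : ι → ι → ℤˣ) : Prop := signKer X ≠ ⊥ ∧ ¬ structured (Function.swap X)
  have prob_structured : prob (fun X => structured (Function.swap X)) ≤ 3 * (9 / 10) ^ n :=
    (prob_comp_equiv (Equiv.piComm fun _ _ => ℤˣ) structured).trans_le
      (prob_exists_isStructured_le le_rfl (by lia) hbig)
  have prob_p : prob p ≤ 20 * (3 * (9 / 10) ^ n + √(32000 / n ^ 3)) := by
    have markov := mul_prob_le_sum_prob p IsDependentRow (n / 20) fun X hX => by
      rw [div_le_iff₀' (by norm_num)]
      exact_mod_cast card_le_mul_card_isDependentRow (by lia) hX.1 hX.2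
    have rows := sum_le_card_nsmul univ _ _ fun j _ => prob_isDependentRow_le hbig j
    rw [nsmul_eq_mul, card_univ] at rows
    have hn : (0 : ℝ) < n := by exact_mod_cast (by lia : 0 < n)
    refine le_of_mul_le_mul_left ?_ hn
    linarith
  calc prob (fun X : ι → ι → ℤˣ => signKer X ≠ ⊥)
      ≤ prob (fun X => structured (Function.swap X) ∨ p X) :=
        prob_mono fun X hX => by by_cases h : structured (Function.swap X) <;> simp [p, h, hX]
    _ ≤ 3 * (9 / 10) ^ n + 20 * (3 * (9 / 10) ^ n + √(32000 / n ^ 3)) :=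
        (prob_or_le _ _).trans (add_le_add prob_structured prob_p)
    _ = _ := by ring

end Singularity

section Generic

variable {ι κ : Type*} [Fintype ι]

theorem signSum_smul (u : ℤˣ) (x : ι → ℤˣ) (a : ι → ℝ) : signSum (u • x) a = u • signSum x a := by
  simp only [signSum_apply, smul_sum, Pi.smul_apply, smul_eq_mul, mul_smul]

theorem signSum_mul (x σ : ι → ℤˣ) (a : ι → ℝ) : signSum (x * σ) a = signSum x (σ • a) := by
  simp only [signSum_apply, Pi.mul_apply, Pi.smul_apply', mul_smul]

theorem signSum_update [DecidableEq ι] (x : ι → ℤˣ) (k : ι) (u : ℤˣ) {a : ι → ℝ} (ha : a k = 0)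
    (t : ℝ) : signSum (Function.update x k u) (Function.update a k t) = signSum x a + u • t := by
  simp only [signSum_apply]
  rw [← add_sum_erase _ _ (mem_univ k), ← add_sum_erase univ (fun i => x i • a i) (mem_univ k)]
  have : ∑ i ∈ univ.erase k, Function.update x k u i • Function.update a k t i =
      ∑ i ∈ univ.erase k, x i • a i := sum_congr rfl fun i hi => by simp [ne_of_mem_erase hi]
  simp [this, ha, add_comm]

/-- The vectors that a matrix `V` of signs maps to a constant vector. -/
noncomputable def levelSpace (V : κ → ι → ℤˣ) : Submodule ℝ (ι → ℝ) :=
  (Submodule.span ℝ {1}).comap (signMap V)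

theorem mem_levelSpace {V : κ → ι → ℤˣ} {l : ι → ℝ} :
    l ∈ levelSpace V ↔ ∃ c, ∀ p, signSum (V p) l = c := by
  simp [levelSpace, Submodule.mem_span_singleton, signMap, funext_iff, eq_comm]

theorem exists_mem_levelSpace_ne_zero [Fintype κ] [Nonempty κ]
    (h : Fintype.card κ ≤ Fintype.card ι) (V : κ → ι → ℤˣ) : ∃ l ∈ levelSpace V, l ≠ 0 := by
  have hone : Module.finrank ℝ (Submodule.span ℝ {(1 : κ → ℝ)}) = 1 :=
    finrank_span_singleton one_ne_zero
  have hdim := Submodule.finrank_quotient_add_finrank (Submodule.span ℝ {(1 : κ → ℝ)})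
  rw [hone, Module.finrank_fintype_fun_eq_card] at hdim
  have hker : LinearMap.ker ((Submodule.span ℝ {(1 : κ → ℝ)}).mkQ ∘ₗ signMap V) = levelSpace V := by
    rw [LinearMap.ker_comp, Submodule.ker_mkQ, levelSpace]
  refine Submodule.exists_mem_ne_zero_of_ne_bot (hker ▸ LinearMap.ker_ne_bot_of_finrank_lt ?_)
  rw [Module.finrank_fintype_fun_eq_card]
  lia

/-- A matrix of signs is generic if a nonzero vector which it maps to a constant vector has no
zero entry. -/
def IsGeneric (V : κ → ι → ℤˣ) : Prop := ∀ l ∈ levelSpace V, (∃ i, l i = 0) → l = 0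

theorem IsGeneric.exists_eq_smul {V : κ → ι → ℤˣ} (hV : IsGeneric V) {l₀ : ι → ℝ}
    (hl₀ : l₀ ∈ levelSpace V) (h₀ : ∀ i, l₀ i ≠ 0) {l : ι → ℝ} (hl : l ∈ levelSpace V) :
    ∃ t : ℝ, l = t • l₀ := by
  rcases isEmpty_or_nonempty ι with _ | ⟨⟨i⟩⟩
  · exact ⟨0, Subsingleton.elim _ _⟩
  · refine ⟨l i / l₀ i, sub_eq_zero.1 (hV _ (sub_mem hl (Submodule.smul_mem _ _ hl₀)) ⟨i, ?_⟩)⟩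
    simp [h₀ i]

section PivotColumn

variable [DecidableEq ι]

/-- Replace column `k` by ones and multiply every row by its old entry in column `k`. The
kernel of the new matrix is that of `V` with column `k` replaced by ones. -/
def pivotColumn (k : ι) : (κ → ι → ℤˣ) ≃ (κ → ι → ℤˣ) :=
  Function.Involutive.toPerm (fun V p => V p k • Function.update (V p) k 1) fun V => by
    funext p i
    by_cases hi : i = k
    · subst hi; simp
    · simp [hi, ← mul_assoc]

theorem signKer_pivotColumn_ne_bot {V : κ → ι → ℤˣ} {k : ι} {l : ι → ℝ} (hl : l ∈ levelSpace V)
    (hlk : l k = 0) (hne : l ≠ 0) : signKer (pivotColumn k V) ≠ ⊥ := by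
  obtain ⟨c, hc⟩ := mem_levelSpace.1 hl
  refine (Submodule.ne_bot_iff _).2 ⟨Function.update l k (-c), mem_signKer.2 fun p => ?_, ?_⟩
  · change signSum (V p k • Function.update (V p) k 1) _ = 0
    rw [signSum_smul, signSum_update _ _ _ hlk, hc p, one_smul, add_neg_cancel, smul_zero]
  · contrapose! hne
    funext i
    by_cases hi : i = k
    · rw [hi, hlk, Pi.zero_apply]
    · simpa [hi] using congrFun hne i

theorem prob_not_isGeneric_le [Fintype κ] [DecidableEq κ] :
    prob (fun V : κ → ι → ℤˣ => ¬ IsGeneric V) ≤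
      Fintype.card ι * prob fun V : κ → ι → ℤˣ => signKer V ≠ ⊥ := by
  calc prob (fun V : κ → ι → ℤˣ => ¬ IsGeneric V)
      ≤ prob fun V : κ → ι → ℤˣ => ∃ k, signKer (pivotColumn k V) ≠ ⊥ := prob_mono fun V hV => by
        simp only [IsGeneric, not_forall] at hV
        obtain ⟨l, hl, ⟨k, hlk⟩, hne⟩ := hV
        exact ⟨k, signKer_pivotColumn_ne_bot hl hlk hne⟩
    _ ≤ ∑ k, prob fun V : κ → ι → ℤˣ => signKer (pivotColumn k V) ≠ ⊥ := prob_exists_le _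
    _ = ∑ _k : ι, prob fun V : κ → ι → ℤˣ => signKer V ≠ ⊥ :=
        sum_congr rfl fun k _ => prob_comp_equiv (pivotColumn k) fun V => signKer V ≠ ⊥
    _ = _ := by rw [sum_const, nsmul_eq_mul, card_univ]

end PivotColumn

/-- A generic matrix of signs which maps some positive vector to a constant vector. -/
def IsPositivelyGeneric (V : κ → ι → ℤˣ) : Prop :=
  IsGeneric V ∧ ∃ l ∈ levelSpace V, ∀ i, 0 < l i

theorem mem_levelSpace_mul {V : κ → ι → ℤˣ} {σ : ι → ℤˣ} {l : ι → ℝ} :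
    l ∈ levelSpace (fun p => V p * σ) ↔ σ • l ∈ levelSpace V := by
  simp only [mem_levelSpace, signSum_mul]

theorem IsGeneric.mul {V : κ → ι → ℤˣ} (hV : IsGeneric V) (σ : ι → ℤˣ) :
    IsGeneric fun p => V p * σ := fun l hl ⟨i, hi⟩ =>
  (smul_eq_zero_iff_eq σ).1 (hV _ (mem_levelSpace_mul.1 hl) ⟨i, by simp [hi]⟩)

theorem isGeneric_mul {V : κ → ι → ℤˣ} {σ : ι → ℤˣ} :
    IsGeneric (fun p => V p * σ) ↔ IsGeneric V := by
  refine ⟨fun h => ?_, fun h => h.mul σ⟩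
  convert h.mul σ with p
  have hσ : σ * σ = 1 := funext fun i => Int.units_mul_self (σ i)
  rw [mul_assoc, hσ, mul_one]

theorem units_eq_of_smul_pos {u v : ℤˣ} {x : ℝ} (hu : 0 < u • x) (hv : 0 < v • x) : u = v := by
  by_contra huv
  rw [Int.units_ne_iff_eq_neg.1 huv, Units.smul_def, Units.val_neg, neg_smul,
    ← Units.smul_def] at hu
  linarith

theorem IsGeneric.exists_isPositivelyGeneric_mul_iff [Fintype κ] [Nonempty κ]
    (h : Fintype.card κ ≤ Fintype.card ι) {V : κ → ι → ℤˣ} (hV : IsGeneric V) :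
    ∃ τ : ι → ℤˣ, ∀ σ, (IsPositivelyGeneric fun p => V p * σ) ↔ σ = τ ∨ σ = -τ := by
  obtain ⟨l₀, hl₀, hne⟩ := exists_mem_levelSpace_ne_zero h V
  have hne₀ (i : ι) : l₀ i ≠ 0 := fun hi => hne (hV l₀ hl₀ ⟨i, hi⟩)
  obtain ⟨τ, hτ⟩ := exists_units_smul_eq_abs l₀
  have hpos (i : ι) : 0 < τ i • l₀ i := (hτ i).symm ▸ abs_pos.2 (hne₀ i)
  refine ⟨τ, fun σ => ⟨fun ⟨_, l, hl, hlpos⟩ => ?_, ?_⟩⟩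
  · obtain ⟨t, ht⟩ := hV.exists_eq_smul hl₀ hne₀ (mem_levelSpace_mul.1 hl)
    have hσ (i : ι) : 0 < t * (σ i • l₀ i) := by
      have hi : σ i • l i = t * l₀ i := congrFun ht i
      have : t * (σ i • l₀ i) = l i := by
        rw [mul_smul_comm, ← hi, smul_smul, Int.units_mul_self, one_smul]
      exact this ▸ hlpos i
    rcases le_or_gt t 0 with ht0 | ht0
    · refine .inr (funext fun i => neg_eq_iff_eq_neg.1 (units_eq_of_smul_pos ?_ (hpos i)))
      rw [Units.smul_def, Units.val_neg, neg_smul, ← Units.smul_def]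
      linarith [neg_of_mul_pos_right (hσ i) ht0]
    · refine .inl (funext fun i => units_eq_of_smul_pos ?_ (hpos i))
      exact (mul_pos_iff_of_pos_left ht0).1 (hσ i)
  · have hτ₀ : τ • τ • l₀ = l₀ := funext fun i => by
      rw [Pi.smul_apply', Pi.smul_apply', smul_smul, Int.units_mul_self, one_smul]
    rintro (rfl | rfl)
    · exact ⟨hV.mul _, σ • l₀, mem_levelSpace_mul.2 (hτ₀.symm ▸ hl₀), hpos⟩
    · refine ⟨hV.mul _, τ • l₀, mem_levelSpace_mul.2 ?_, hpos⟩
      have : -τ • τ • l₀ = -l₀ := funext fun i => by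
        simpa [Units.smul_def] using congrFun hτ₀ i
      exact this ▸ neg_mem hl₀

theorem two_pow_mul_prob_isPositivelyGeneric [Fintype κ] [Nonempty κ] [DecidableEq ι]
    [DecidableEq κ] (h : Fintype.card κ ≤ Fintype.card ι) :
    2 ^ Fintype.card ι * prob (IsPositivelyGeneric : (κ → ι → ℤˣ) → Prop) =
      2 * prob (IsGeneric : (κ → ι → ℤˣ) → Prop) := by
  classical
  have card_flips (V : κ → ι → ℤˣ) : (#{σ : ι → ℤˣ | IsPositivelyGeneric fun p => V p * σ} : ℝ) =
      2 * if IsGeneric V then 1 else 0 := by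
    split_ifs with hV
    · have : Nonempty ι := Fintype.card_pos_iff.1 (Fintype.card_pos.trans_le h)
      obtain ⟨τ, hτ⟩ := hV.exists_isPositivelyGeneric_mul_iff h
      have hneg : τ ≠ -τ := fun hn => units_ne_neg_self _ (congrFun hn (Classical.arbitrary ι))
      have hpair : ({σ | IsPositivelyGeneric fun p => V p * σ} : Finset (ι → ℤˣ)) = {τ, -τ} := by
        ext σ
        simp [hτ]
      rw [hpair, card_pair hneg, Nat.cast_ofNat, mul_one]
    · rw [filter_false_of_mem fun σ _ hσ => hV (isGeneric_mul.1 hσ.1)]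
      simp
  calc 2 ^ Fintype.card ι * prob (IsPositivelyGeneric : (κ → ι → ℤˣ) → Prop)
      = ∑ σ : ι → ℤˣ, prob fun V : κ → ι → ℤˣ => IsPositivelyGeneric fun p => V p * σ := by
        have hprob (σ : ι → ℤˣ) :
            prob (fun V : κ → ι → ℤˣ => IsPositivelyGeneric fun p => V p * σ) =
              prob (IsPositivelyGeneric : (κ → ι → ℤˣ) → Prop) :=
          prob_comp_equiv (Equiv.mulRight fun _ : κ => σ) IsPositivelyGeneric
        simp [hprob]
    _ = 𝔼 V : κ → ι → ℤˣ, 2 * if IsGeneric V then (1 : ℝ) else 0 := by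
        rw [sum_prob_eq_expect_card]
        exact expect_congr rfl fun V _ => card_flips V
    _ = 2 * prob (IsGeneric : (κ → ι → ℤˣ) → Prop) := by rw [← mul_expect, prob]

end Generic

section Coverage

variable {ι κ : Type*} [Fintype ι] [DecidableEq κ]

/-- The total weight `∑_{i : p ∈ f i} w i` received by each point `p` from a weighted family of
sets, as a linear function of the weights. -/
noncomputable def coverage (f : ι → Finset κ) : (ι → ℝ) →ₗ[ℝ] κ → ℝ :=
  LinearMap.pi fun p => ∑ i with p ∈ f i, LinearMap.proj i

theorem coverage_apply (f : ι → Finset κ) (w : ι → ℝ) (p : κ) :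
    coverage f w p = ∑ i with p ∈ f i, w i := by
  simp [coverage]

theorem coverage_single [DecidableEq ι] (f : ι → Finset κ) (i : ι) (x : ℝ) :
    coverage f (Pi.single i x) = fun p => if p ∈ f i then x else 0 := by
  funext p
  simp [coverage_apply, Pi.single_apply]

theorem coverage_pos {f : ι → Finset κ} {w : ι → ℝ} (hw : ∀ i, 0 ≤ w i) {i : ι} (hi : 0 < w i)
    {p : κ} (hp : p ∈ f i) : 0 < coverage f w p := by
  rw [coverage_apply]
  exact sum_pos' (fun j _ => hw j) ⟨i, by simpa using hp, hi⟩

/-- The matrix of signs whose entry at `(p, i)` records whether `p ∈ f i`. -/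
def signMatrix [Fintype κ] : (ι → Finset κ) ≃ (κ → ι → ℤˣ) where
  toFun f p i := if p ∈ f i then 1 else -1
  invFun V i := {p | V p i = 1}
  left_inv f := by
    ext i p
    by_cases hp : p ∈ f i <;> simp [hp]
  right_inv V := by
    funext p i
    rcases Int.units_eq_one_or (V p i) with h | h <;> simp [h]

theorem signSum_signMatrix [Fintype κ] (f : ι → Finset κ) (w : ι → ℝ) (p : κ) :
    signSum (signMatrix f p) w = 2 * coverage f w p - ∑ i, w i := by
  rw [signSum_apply, coverage_apply, sum_filter, mul_sum, ← sum_sub_distrib]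
  refine sum_congr rfl fun i _ => ?_
  by_cases hp : p ∈ f i
  · simp [signMatrix, hp, two_mul]
  · simp [signMatrix, hp]

theorem mem_levelSpace_signMatrix [Fintype κ] {f : ι → Finset κ} {w : ι → ℝ} :
    w ∈ levelSpace (signMatrix f) ↔ ∃ c : ℝ, coverage f w = c • 1 := by
  simp only [mem_levelSpace, signSum_signMatrix, funext_iff, Pi.smul_apply, Pi.one_apply,
    smul_eq_mul, mul_one]
  constructor
  · rintro ⟨c, hc⟩
    exact ⟨(c + ∑ i, w i) / 2, fun p => by linarith [hc p]⟩
  · rintro ⟨c, hc⟩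
    exact ⟨2 * c - ∑ i, w i, fun p => by rw [hc p]⟩

end Coverage

section MinimalBalanced

variable {ι : Type*} [Fintype ι] {n : ℕ} {f : ι → Finset (Fin n)}

theorem isBalancedCollection_image_iff (hf : f.Injective) {s : Finset ι} :
    IsBalancedCollection (s.image f) ↔ (∀ i ∈ s, f i ≠ ∅) ∧
      ∃ w : ι → ℝ, (∀ i ∈ s, 0 < w i) ∧ (∀ i ∉ s, w i = 0) ∧ coverage f w = 1 := by
  classical
  have coverage_eq {w : ι → ℝ} (hw : ∀ i ∉ s, w i = 0) (p : Fin n) :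
      coverage f w p = ∑ i ∈ s with p ∈ f i, w i := by
    rw [coverage_apply, sum_filter, sum_filter, sum_subset (subset_univ s)]
    exact fun i _ hi => by simp [hw i hi]
  have sum_image_eq (lam : Finset (Fin n) → ℝ) (p : Fin n) :
      ∑ S ∈ (s.image f).filter (p ∈ ·), lam S = ∑ i ∈ s with p ∈ f i, lam (f i) := by
    rw [filter_image, sum_image hf.injOn]
  simp only [IsBalancedCollection, IsBalancingWeights, forall_mem_image, sum_image_eq]
  refine and_congr_right fun _ => ⟨fun ⟨lam, hpos, hsum⟩ => ?_, fun ⟨w, hpos, hzero, hsum⟩ => ?_⟩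
  · have hzero : ∀ i ∉ s, (if i ∈ s then lam (f i) else 0) = 0 := fun i hi => if_neg hi
    refine ⟨fun i => if i ∈ s then lam (f i) else 0, fun i hi => ?_, hzero, funext fun p => ?_⟩
    · simpa [hi] using hpos hi
    · rw [coverage_eq hzero, Pi.one_apply, ← hsum p]
      exact sum_congr rfl fun i hi => if_pos (mem_filter.1 hi).1
  · refine ⟨Function.extend f w 0, fun i hi => ?_, fun p => ?_⟩
    · rw [hf.extend_apply]
      exact hpos i hi
    · simp only [hf.extend_apply]
      rw [← coverage_eq hzero, hsum, Pi.one_apply]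

theorem isMinimalBalancedCollection_image_iff (hf : f.Injective) :
    IsMinimalBalancedCollection (univ.image f) ↔ (∀ i, f i ≠ ∅) ∧
      (∃ w : ι → ℝ, (∀ i, 0 < w i) ∧ coverage f w = 1) ∧
      ∀ w : ι → ℝ, (∀ i, 0 ≤ w i) → coverage f w = 1 → ∀ i, 0 < w i := by
  classical
  have hbal : IsBalancedCollection (univ.image f) ↔
      (∀ i, f i ≠ ∅) ∧ ∃ w : ι → ℝ, (∀ i, 0 < w i) ∧ coverage f w = 1 := by
    simp [isBalancedCollection_image_iff hf]
  rw [IsMinimalBalancedCollection, hbal, and_assoc]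
  refine and_congr_right fun hne => and_congr_right fun _ => ⟨fun hmin w hw hcov => ?_, ?_⟩
  · by_contra! ⟨i, hi⟩
    have hss : ({j | 0 < w j} : Finset ι) ⊂ univ :=
      filter_ssubset.2 ⟨i, mem_univ i, hi.not_gt⟩
    refine hmin _ ((image_ssubset_image hf).2 hss) ((isBalancedCollection_image_iff hf).2
      ⟨fun j _ => hne j, w, fun j hj => (mem_filter.1 hj).2, fun j hj => ?_, hcov⟩)
    exact (hw j).antisymm' (by simpa using hj)
  · intro hpos B hB hbal
    obtain ⟨s, -, rfl⟩ := subset_image_iff.1 hB.subset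
    obtain ⟨-, w, hw, hzero, hcov⟩ := (isBalancedCollection_image_iff hf).1 hbal
    have hnonneg (i : ι) : 0 ≤ w i := by
      by_cases hi : i ∈ s
      · exact (hw i hi).le
      · exact (hzero i hi).ge
    obtain ⟨i, -, hi⟩ := exists_of_ssubset ((image_ssubset_image hf).1 hB)
    exact (hpos w hnonneg hcov i).ne' (hzero i hi)

theorem exists_add_mul_nonneg_eq_zero {κ : Type*} [Finite κ] {w μ : κ → ℝ} (hw : ∀ i, 0 ≤ w i)
    (hμ : ∃ i, μ i < 0) :
    ∃ t : ℝ, (∀ i, 0 ≤ w i + t * μ i) ∧ ∃ i, w i + t * μ i = 0 := by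
  have := Fintype.ofFinite κ
  obtain ⟨i, hi⟩ := hμ
  obtain ⟨k, hk, hmin⟩ := exists_min_image {j | μ j < 0} (fun j => w j / -μ j) ⟨i, by simp [hi]⟩
  have hk : μ k < 0 := (mem_filter.1 hk).2
  have ht : 0 ≤ w k / -μ k := div_nonneg (hw k) (by linarith)
  refine ⟨w k / -μ k, fun j => ?_, k, by field_simp [hk.ne]; ring⟩
  rcases lt_or_ge (μ j) 0 with hj | hj
  · have := hmin j (by simpa using hj)
    rw [le_div_iff₀ (by linarith)] at this
    linarith
  · exact add_nonneg (hw j) (mul_nonneg ht hj)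

theorem IsPositivelyGeneric.ne_empty [Nontrivial ι]
    (h : IsPositivelyGeneric (signMatrix f)) (i : ι) : f i ≠ ∅ := by
  classical
  intro hi
  obtain ⟨j, hj⟩ := exists_ne i
  have hlevel : Pi.single i 1 ∈ levelSpace (signMatrix f) :=
    mem_levelSpace_signMatrix.2 ⟨0, by simp [coverage_single, hi, funext_iff]⟩
  simpa using congrFun (h.1 _ hlevel ⟨j, by simp [hj]⟩) i

theorem IsPositivelyGeneric.injective (h : IsPositivelyGeneric (signMatrix f)) : f.Injective := by
  classical
  intro i j hij
  by_contra hne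
  obtain ⟨hgen, l, hl, hpos⟩ := h
  have hlevel : Pi.single j 1 - Pi.single i 1 ∈ levelSpace (signMatrix f) :=
    mem_levelSpace_signMatrix.2 ⟨0, by simp [coverage_single, hij]⟩
  have hzero := hgen _ (add_mem hl (Submodule.smul_mem _ (l i) hlevel)) ⟨i, by simp [hne]⟩
  have : l j + l i = 0 := by simpa [Ne.symm hne] using congrFun hzero j
  linarith [hpos i, hpos j]

theorem IsPositivelyGeneric.isMinimalBalancedCollection [Nontrivial ι]
    (h : IsPositivelyGeneric (signMatrix f)) : IsMinimalBalancedCollection (univ.image f) := by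
  refine (isMinimalBalancedCollection_image_iff h.injective).2 ⟨h.ne_empty, ?_, ?_⟩
  · obtain ⟨l, hl, hpos⟩ := h.2
    obtain ⟨c, hc⟩ := mem_levelSpace_signMatrix.1 hl
    obtain ⟨i⟩ := (inferInstance : Nonempty ι)
    obtain ⟨p, hp⟩ := nonempty_iff_ne_empty.2 (h.ne_empty i)
    have hc₀ : 0 < c := by simpa [hc] using coverage_pos (fun j => (hpos j).le) (hpos i) hp
    refine ⟨c⁻¹ • l, fun j => mul_pos (inv_pos.2 hc₀) (hpos j), ?_⟩
    rw [map_smul, hc, inv_smul_smul₀ hc₀.ne']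
  · intro w hw hcov i
    refine (hw i).lt_of_ne' fun hi => ?_
    obtain ⟨p, -⟩ := nonempty_iff_ne_empty.2 (h.ne_empty i)
    have hzero := h.1 w (mem_levelSpace_signMatrix.2 ⟨1, by rw [hcov, one_smul]⟩) ⟨i, hi⟩
    simpa [hzero] using congrFun hcov p

theorem isPositivelyGeneric_of_isMinimalBalancedCollection (hf : f.Injective)
    (h : IsMinimalBalancedCollection (univ.image f)) : IsPositivelyGeneric (signMatrix f) := by
  obtain ⟨hne, ⟨w, hw, hcov⟩, hmin⟩ := (isMinimalBalancedCollection_image_iff hf).1 h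
  have nonneg {μ : ι → ℝ} (hμ : μ ∈ levelSpace (signMatrix f)) {i : ι} (hi : μ i = 0) (j : ι) :
      0 ≤ μ j := by
    by_contra! hj
    obtain ⟨c, hc⟩ := mem_levelSpace_signMatrix.1 hμ
    obtain ⟨t, hnonneg, k, hk⟩ := exists_add_mul_nonneg_eq_zero (fun i => (hw i).le) ⟨j, hj⟩
    have hsum : coverage f (w + t • μ) = (1 + t * c) • 1 := by
      rw [map_add, map_smul, hcov, hc, smul_smul, add_smul, one_smul]
    obtain ⟨p, hp⟩ := nonempty_iff_ne_empty.2 (hne i)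
    have hpos : 0 < 1 + t * c := by
      simpa [hsum] using coverage_pos (w := w + t • μ) hnonneg (by simpa [hi] using hw i) hp
    refine (hmin ((1 + t * c)⁻¹ • (w + t • μ))
      (fun i => mul_nonneg (inv_nonneg.2 hpos.le) (hnonneg i))
      (by rw [map_smul, hsum, inv_smul_smul₀ hpos.ne']) k).ne' ?_
    simp [hk]
  refine ⟨fun μ hμ ⟨i, hi⟩ => funext fun j => le_antisymm ?_ (nonneg hμ hi j), w,
    mem_levelSpace_signMatrix.2 ⟨1, by rw [hcov, one_smul]⟩, hw⟩
  simpa using nonneg (neg_mem hμ) (i := i) (by simp [hi]) j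

theorem isPositivelyGeneric_signMatrix_iff [Nontrivial ι] :
    IsPositivelyGeneric (signMatrix f) ↔
      f.Injective ∧ IsMinimalBalancedCollection (univ.image f) :=
  ⟨fun h => ⟨h.injective, h.isMinimalBalancedCollection⟩,
    fun h => isPositivelyGeneric_of_isMinimalBalancedCollection h.1 h.2⟩

end MinimalBalanced

section Counting

variable {ι α : Type*} [Fintype ι] [Fintype α] [DecidableEq α]

theorem card_injective_image_eq [DecidableEq ι] {B : Finset α} (hB : #B = Fintype.card ι) :
    #{f : ι → α | f.Injective ∧ univ.image f = B} = (Fintype.card ι).factorial := by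
  have hcard : Fintype.card (ι ≃ B) = (Fintype.card ι).factorial :=
    Fintype.card_equiv (Fintype.equivOfCardEq (by rw [Fintype.card_coe, hB]))
  rw [← hcard, ← card_univ]
  symm
  refine card_bij (fun e _ i => (e i : α)) (fun e _ => ?_) (fun e _ e' _ h => ?_) fun f hf => ?_
  · refine mem_filter.2 ⟨mem_univ _, Subtype.val_injective.comp e.injective, ?_⟩
    ext a
    simp only [mem_image, mem_univ, true_and]
    exact ⟨fun ⟨i, hi⟩ => hi ▸ (e i).2, fun ha => ⟨e.symm ⟨a, ha⟩, by rw [e.apply_symm_apply]⟩⟩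
  · ext i
    exact congrFun h i
  · obtain ⟨hinj, rfl⟩ := (mem_filter.1 hf).2
    exact ⟨(Equiv.ofInjective f hinj).trans (Equiv.subtypeEquivRight (by simp)), mem_univ _, rfl⟩

theorem card_injective_and_image [DecidableEq ι] (Q : Finset α → Prop) [DecidablePred Q] :
    #{f : ι → α | f.Injective ∧ Q (univ.image f)} =
      #{B : Finset α | Q B ∧ #B = Fintype.card ι} * (Fintype.card ι).factorial := by
  rw [card_eq_sum_card_fiberwise (f := (univ.image ·)) (t := {B | Q B ∧ #B = Fintype.card ι}),
    sum_const_nat]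
  · intro B hB
    obtain ⟨hQ, hcard⟩ := (mem_filter.1 hB).2
    rw [← card_injective_image_eq hcard, filter_filter]
    congr 1
    ext f
    simp only [mem_filter, mem_univ, true_and]
    exact ⟨fun h => ⟨h.1.1, h.2⟩, fun h => ⟨⟨h.1, h.2 ▸ hQ⟩, h.2⟩⟩
  · intro f hf
    obtain ⟨hinj, hQ⟩ := (mem_filter.1 hf).2
    simpa using ⟨hQ, card_image_of_injective _ hinj⟩

end Counting

open scoped Classical in
theorem Bnn_mul_factorial {n : ℕ} (hn : 2 ≤ n) :
    Bnn n * n.factorial = #{V : Fin n → Fin n → ℤˣ | IsPositivelyGeneric V} := by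
  have : Nontrivial (Fin n) := Fin.nontrivial_iff_two_le.2 hn
  have hBnn : Bnn n = #{B : Finset (Finset (Fin n)) | IsMinimalBalancedCollection B ∧ #B = n} := by
    rw [Bnn, Nat.card_eq_fintype_card, Fintype.card_subtype]
    refine congrArg card (filter_congr fun B _ => and_congr_right fun _ => ?_)
    refine and_iff_right_of_imp fun hB h => ?_
    rw [h, card_singleton] at hB
    lia
  calc Bnn n * n.factorial
      = #{f : Fin n → Finset (Fin n) |
          f.Injective ∧ IsMinimalBalancedCollection (univ.image f)} := by
        rw [card_injective_and_image, hBnn, Fintype.card_fin]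
    _ = #{V : Fin n → Fin n → ℤˣ | IsPositivelyGeneric V} :=
        card_equiv signMatrix fun f => by simp [isPositivelyGeneric_signMatrix_iff]

theorem Bnn_mul_factorial_div_eq_prob {n : ℕ} (hn : 2 ≤ n) :
    (Bnn n : ℝ) * n.factorial / 2 ^ (n ^ 2 - n + 1) =
      prob (IsGeneric : (Fin n → Fin n → ℤˣ) → Prop) := by
  classical
  have : NeZero n := ⟨by lia⟩
  have hhalf := two_pow_mul_prob_isPositivelyGeneric (ι := Fin n) (κ := Fin n) le_rfl
  have hcard : Fintype.card (Fin n → Fin n → ℤˣ) = 2 ^ n ^ 2 := by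
    simp [← pow_mul, sq]
  have hpow : (2 : ℝ) ^ n * 2 ^ (n ^ 2 - n + 1) = 2 * 2 ^ n ^ 2 := by
    have : n ≤ n ^ 2 := Nat.le_self_pow two_ne_zero n
    rw [← pow_add, ← pow_succ']
    congr 1
    lia
  rw [prob_eq_card_div, ← Bnn_mul_factorial hn, hcard, Fintype.card_fin] at hhalf
  rw [← mul_right_inj' (two_ne_zero' ℝ), ← hhalf]
  push_cast
  field_simp
  linear_combination -(Bnn n : ℝ) * hpow

theorem tendsto_mul_singularity_bound :
    Filter.Tendsto (fun n : ℕ => (n : ℝ) * (63 * (9 / 10) ^ n + 20 * √(32000 / (n : ℝ) ^ 3)))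
      Filter.atTop (nhds 0) := by
  have hgeom : Filter.Tendsto (fun n : ℕ => (n : ℝ) * (9 / 10) ^ n) Filter.atTop (nhds 0) :=
    tendsto_self_mul_const_pow_of_lt_one (by norm_num) (by norm_num)
  have hsqrt : Filter.Tendsto (fun n : ℕ => √(32000 / n)) Filter.atTop (nhds 0) := by
    simpa using (tendsto_const_div_atTop_nhds_zero_nat 32000).sqrt
  have hsqrt_eq (n : ℕ) : √(32000 / n) = n * √(32000 / (n : ℝ) ^ 3) := by
    rcases n.eq_zero_or_pos with rfl | hn
    · simp
    · rw [← Real.sqrt_sq (Nat.cast_nonneg n : (0 : ℝ) ≤ n), ← Real.sqrt_mul (sq_nonneg _),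
        Real.sqrt_sq (Nat.cast_nonneg n)]
      congr 1
      field_simp
  have hsum := (hgeom.const_mul 63).add (hsqrt.const_mul 20)
  rw [mul_zero, mul_zero, add_zero] at hsum
  refine hsum.congr fun n => ?_
  rw [hsqrt_eq]
  ring

theorem tendsto_prob_not_isGeneric :
    Filter.Tendsto (fun n : ℕ => prob fun V : Fin n → Fin n → ℤˣ => ¬ IsGeneric V)
      Filter.atTop (nhds 0) := by
  refine squeeze_zero' (.of_forall fun n => prob_nonneg _) ?_ tendsto_mul_singularity_bound
  filter_upwards [Filter.eventually_ge_atTop (2 ^ 57)] with n hn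
  have hsing := prob_signKer_ne_bot_le (ι := Fin n) (by rwa [Fintype.card_fin])
  rw [Fintype.card_fin] at hsing
  refine prob_not_isGeneric_le.trans ?_
  rw [Fintype.card_fin]
  gcongr

/-- Theorem (Theorem `theo2`): `B_n^n ∼ 2^{n²−n+1}/n!`, i.e.
`lim_{n→∞} B_n^n · n! / 2^{n²−n+1} = 1`. -/
theorem Bnn_asymptotic :
    Filter.Tendsto
      (fun n : ℕ => (Bnn n : ℝ) * (n.factorial : ℝ) / 2 ^ (n ^ 2 - n + 1))
      Filter.atTop (nhds 1) := by
  have hgeneric : Filter.Tendsto (fun n : ℕ => prob (IsGeneric : (Fin n → Fin n → ℤˣ) → Prop))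
      Filter.atTop (nhds 1) := by
    have := tendsto_prob_not_isGeneric.const_sub 1
    rw [sub_zero] at this
    exact this.congr fun n => by rw [sub_eq_iff_eq_add, prob_add_prob_not]
  refine hgeneric.congr' ?_
  filter_upwards [Filter.eventually_ge_atTop 2] with n hn
  exact (Bnn_mul_factorial_div_eq_prob hn).symm
end

section
/- The total number B_n of minimal balanced collections on a set of n elements (excluding the collection {N}) has the same asymptotic growth as B_n^n, namely B_n ∼ 2^{n²−n+1}/n!, i.e., lim_{n→∞} B_n · n! / 2^{n²−n+1} = 1. -/
open Finset

/-- `B_n`: the total number of minimal balanced collections on `N = {1,…,n}`,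
excluding the collection `{N}`. -/
noncomputable def Btot (n : ℕ) : ℕ :=
  Nat.card {B : Finset (Finset (Fin n)) //
    IsMinimalBalancedCollection B ∧ B ≠ {Finset.univ}}

/-!
Minimal balanced collections of cardinality `m`, with an ordering of their members, correspond to
those `m × n` sign matrices for which the indicator vectors of the positive sets of the rows are
linearly independent and have the all-ones vector as a positive combination. Among the `2 ^ m`
matrices obtained from a given one by flipping the signs of rows, at most two have this property.
If `m = n` and the all-ones vector has only nonzero coordinates in the basis formed by the rows,
there are exactly two: the signs of the flips are those of the coordinates, or their opposites.
Hence `B_n^m` is at most `2 ^ ((n - 1) * m + 1) / m!`, so that the cardinalities `m < n` contribute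
a geometric series of ratio `n / 2 ^ (n - 1)` relative to the main term, while for `m = n` the bound
is attained up to a factor `1 - (n + 1) * s`, with `s` the probability that a random `n × n` sign
matrix is singular.

It remains to see that `n * s` tends to `0`. A singular matrix has a row which depends on its
predecessors. For all but the last `K ≈ n ^ (1 / 20)` rows this is unlikely because a subspace of
dimension `d` contains at most `2 ^ d` sign vectors (Odlyzko). For each of the last rows it has
probability at most `K ^ (-22)`, unless a nonzero vector orthogonal to all earlier rows is
orthogonal to a random sign vector with greater probability. By Halász's inequality, all but few
coordinates of such a vector take few values. The vectors of this kind lie in few subspaces of small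
dimension, so a union bound over these shows that the first `n - K` rows are unlikely to be
orthogonal to one.
-/

section UniformProbability

variable {α β κ S : Type*} [Fintype α] [Fintype β] [Fintype κ] [Fintype S]

open Classical in
/-- The probability of the event `p` under the uniform distribution on the finite type `α`. -/
noncomputable def uniformProb (p : α → Prop) : ℝ :=
  #{a | p a} / Fintype.card α

lemma uniformProb_eq (p : α → Prop) [DecidablePred p] :
    uniformProb p = #{a | p a} / Fintype.card α := by
  unfold uniformProb; congr!

lemma uniformProb_nonneg (p : α → Prop) : 0 ≤ uniformProb p := by
  unfold uniformProb; positivity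

lemma uniformProb_mul_card [Nonempty α] (p : α → Prop) [DecidablePred p] :
    uniformProb p * Fintype.card α = #{a | p a} := by
  rw [uniformProb_eq, div_mul_cancel₀ _ (by positivity)]

lemma uniformProb_mono {p q : α → Prop} (h : ∀ a, p a → q a) :
    uniformProb p ≤ uniformProb q := by
  unfold uniformProb
  gcongr with a
  exact h a

lemma uniformProb_le_one (p : α → Prop) : uniformProb p ≤ 1 :=
  div_le_one_of_le₀ (by exact_mod_cast card_le_univ _) (by positivity)

lemma uniformProb_or_le (p q : α → Prop) :
    uniformProb (fun a => p a ∨ q a) ≤ uniformProb p + uniformProb q := by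
  classical
  rw [uniformProb_eq, uniformProb_eq, uniformProb_eq, ← add_div, filter_or]
  gcongr
  exact_mod_cast card_union_le _ _

lemma uniformProb_not [Nonempty α] (p : α → Prop) :
    uniformProb (fun a => ¬ p a) = 1 - uniformProb p := by
  classical
  rw [eq_sub_iff_add_eq', uniformProb_eq, uniformProb_eq, ← add_div,
    div_eq_one_iff_eq (by positivity)]
  exact_mod_cast card_filter_add_card_filter_not _

lemma uniformProb_exists_mem_le {γ : Type*} (s : Finset γ) (p : γ → α → Prop) {c : ℝ}
    (h : ∀ i ∈ s, uniformProb (p i) ≤ c) :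
    uniformProb (fun a => ∃ i ∈ s, p i a) ≤ #s * c := by
  classical
  induction s using Finset.induction_on with
  | empty => simp [uniformProb]
  | insert i s hi ih =>
    simp only [mem_insert, exists_eq_or_imp, card_insert_of_notMem hi, forall_eq_or_imp] at h ⊢
    calc uniformProb (fun a => p i a ∨ ∃ j ∈ s, p j a) ≤ c + #s * c :=
          (uniformProb_or_le _ _).trans (add_le_add h.1 (ih h.2))
      _ = (#s + 1 : ℕ) * c := by push_cast; ring

lemma uniformProb_exists_le {γ : Type*} [Fintype γ] (p : γ → α → Prop) {c : ℝ}
    (h : ∀ i, uniformProb (p i) ≤ c) :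
    uniformProb (fun a => ∃ i, p i a) ≤ Fintype.card γ * c := by
  simpa using uniformProb_exists_mem_le univ p fun i _ => h i

lemma uniformProb_comp_equiv (e : α ≃ β) (p : β → Prop) :
    uniformProb (fun a => p (e a)) = uniformProb p := by
  classical
  simp only [uniformProb_eq, ← Fintype.card_subtype, Fintype.card_congr e,
    Fintype.card_congr (e.subtypeEquiv (p := fun a => p (e a)) fun _ => Iff.rfl)]

lemma sum_uniformProb (p : β → α → Prop) [∀ b, DecidablePred (p b)] :
    ∑ b, uniformProb (p b) = (∑ a, #{b | p b a} : ℕ) / Fintype.card α := by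
  simp_rw [uniformProb_eq, ← sum_div, card_filter]
  rw [sum_comm]
  push_cast
  rfl

lemma card_mul_uniformProb_le (f : β → α ≃ α) {p : α → Prop} [DecidablePred p] {k : ℕ}
    (h : ∀ a, #{b | p (f b a)} ≤ k) : Fintype.card β * uniformProb p ≤ k := by
  calc Fintype.card β * uniformProb p = ∑ b, uniformProb fun a => p (f b a) := by
        simp [uniformProb_comp_equiv]
    _ = (∑ a, #{b | p (f b a)} : ℕ) / Fintype.card α := sum_uniformProb _
    _ ≤ k := div_le_of_le_mul₀ (by positivity) (by positivity) (by
        rw [mul_comm]; exact_mod_cast sum_le_card_nsmul univ _ k fun a _ => h a)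

lemma mul_uniformProb_le_card_mul (f : β → α ≃ α) {p q : α → Prop} [DecidablePred p] {k : ℕ}
    (h : ∀ a, q a → k ≤ #{b | p (f b a)}) :
    k * uniformProb q ≤ Fintype.card β * uniformProb p := by
  classical
  calc k * uniformProb q = (#{a | q a} * k : ℕ) / Fintype.card α := by
        rw [uniformProb_eq]; push_cast; ring
    _ ≤ (∑ a, #{b | p (f b a)} : ℕ) / Fintype.card α := by
        gcongr
        exact (card_nsmul_le_sum _ _ k fun a ha => h a (mem_filter.1 ha).2).trans
          (sum_le_univ_sum_of_nonneg fun _ => zero_le)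
    _ = ∑ b, uniformProb fun a => p (f b a) := (sum_uniformProb _).symm
    _ = Fintype.card β * uniformProb p := by simp [uniformProb_comp_equiv]

lemma uniformProb_prod_le (p : α × β → Prop) {c : ℝ} (hc : 0 ≤ c)
    (h : ∀ b, uniformProb (fun a => p (a, b)) ≤ c) : uniformProb p ≤ c := by
  classical
  have hcard : #{x | p x} = ∑ b, #{a | p (a, b)} := by
    simp only [card_filter, Fintype.sum_prod_type_right]
  rcases isEmpty_or_nonempty α with hα | hα
  · simpa [uniformProb] using hc
  rcases isEmpty_or_nonempty β with hβ | hβ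
  · simpa [uniformProb] using hc
  rw [uniformProb_eq, div_le_iff₀ (by positivity)]
  calc ((#{x | p x} : ℕ) : ℝ) = ∑ b, uniformProb (fun a => p (a, b)) * Fintype.card α := by
        simp [hcard, uniformProb_mul_card]
    _ ≤ ∑ _b : β, c * Fintype.card α := by gcongr with b; exact h b
    _ = c * Fintype.card (α × β) := by
        simp only [sum_const, card_univ, nsmul_eq_mul, Fintype.card_prod, Nat.cast_mul]; ring

lemma uniformProb_pi [DecidableEq κ] (p : S → Prop) :
    uniformProb (fun f : κ → S => ∀ i, p (f i)) = uniformProb p ^ Fintype.card κ := by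
  classical
  have hset : ({f | ∀ i, p (f i)} : Finset (κ → S)) = Fintype.piFinset fun _ => {s | p s} := by
    ext; simp
  rw [uniformProb_eq, uniformProb_eq, div_pow, hset]
  simp

lemma uniformProb_forall_mem_le [DecidableEq κ] (Q : Finset κ)
    (P : ({j // j ∉ Q} → S) → S → Prop) {c : ℝ} (hc : 0 ≤ c) (h : ∀ b, uniformProb (P b) ≤ c) :
    uniformProb (fun W : κ → S => ∀ j ∈ Q, P (fun i => W i) (W j)) ≤ c ^ #Q := by
  have hsplit := uniformProb_comp_equiv (Equiv.piEquivPiSubtypeProd (· ∈ Q) fun _ : κ => S)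
    fun x => ∀ j, P x.2 (x.1 j)
  simp only [Equiv.piEquivPiSubtypeProd_apply, Subtype.forall] at hsplit
  rw [hsplit]
  refine uniformProb_prod_le _ (by positivity) fun b => ?_
  have hpi := uniformProb_pi (κ := {j // j ∈ Q}) (P b)
  simp only [Subtype.forall, Fintype.card_coe] at hpi
  rw [hpi]
  exact pow_le_pow_left₀ (uniformProb_nonneg _) (h b) _

end UniformProbability

section SignVectors

variable {ι κ R : Type*}

/-- The sign vector `w` with its entries `±1` viewed in the ring `R`. -/
def signVec (R : Type*) [Ring R] (w : ι → ℤˣ) : ι → R :=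
  fun i => ((w i : ℤ) : R)

lemma map_signVec_dotProduct {R' : Type*} [Ring R] [Ring R'] [Fintype ι] (f : R →+* R')
    (w : ι → ℤˣ) (x : ι → R) : f (signVec R w ⬝ᵥ x) = signVec R' w ⬝ᵥ (f ∘ x) := by
  simp [dotProduct, signVec]

variable [Fintype ι] [DecidableEq ι]

/-- The concentration probability of the vector `x`: the probability that a uniformly random sign
vector is orthogonal to `x`. -/
noncomputable def atomProb [Ring R] (x : ι → R) : ℝ :=
  uniformProb fun w : ι → ℤˣ => signVec R w ⬝ᵥ x = 0

section Ring

variable {R' : Type*} [Ring R] [Ring R']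

lemma atomProb_nonneg (x : ι → R) : 0 ≤ atomProb x :=
  uniformProb_nonneg _

lemma atomProb_le_comp (f : R →+* R') (x : ι → R) : atomProb x ≤ atomProb (f ∘ x) :=
  uniformProb_mono fun w hw => by rw [← map_signVec_dotProduct, hw, map_zero]

lemma atomProb_comp_of_injective {f : R →+* R'} (hf : Function.Injective f) (x : ι → R) :
    atomProb (f ∘ x) = atomProb x := by
  simp only [atomProb, ← map_signVec_dotProduct, map_eq_zero_iff f hf]

end Ring

lemma atomProb_smul [CommRing R] [IsDomain R] {c : R} (hc : c ≠ 0) (x : ι → R) :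
    atomProb (c • x) = atomProb x := by
  simp only [atomProb, dotProduct_smul, smul_eq_zero, hc, false_or]

end SignVectors

section CauchyDavenport

variable {p : ℕ} [Fact p.Prime]

open scoped Pointwise in
/-- Cauchy–Davenport, iterated: the `k`-fold sumset of `{f ≤ s}` is contained in `{f ≤ k * s}`. -/
lemma min_le_card_le_mul_of_subadditive {f : ZMod p → ℝ} (hf : ∀ a b, f (a + b) ≤ f a + f b)
    {s : ℝ} (hs : f 0 ≤ s) {k : ℕ} (hk : 1 ≤ k) :
    min p (k * (#{θ | f θ ≤ s} - 1) + 1) ≤ #{θ | f θ ≤ k * s} := by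
  have hne : ({θ | f θ ≤ s} : Finset (ZMod p)).Nonempty := ⟨0, by simpa using hs⟩
  have hpos := hne.card_pos
  induction k, hk using Nat.le_induction with
  | base => simp only [one_mul, Nat.cast_one]; omega
  | succ k _ ih =>
    have hne' : ({θ | f θ ≤ k * s} : Finset (ZMod p)).Nonempty :=
      card_pos.1 <| (lt_min (Fact.out : p.Prime).pos (Nat.succ_pos _)).trans_le ih
    have hsum : (({θ | f θ ≤ k * s} : Finset (ZMod p)) + ({θ | f θ ≤ s} : Finset (ZMod p))) ⊆
        ({θ | f θ ≤ (k + 1 : ℕ) * s} : Finset (ZMod p)) := by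
      intro θ hθ
      obtain ⟨a, ha, b, hb, rfl⟩ := mem_add.1 hθ
      rw [mem_filter_univ] at ha hb ⊢
      push_cast
      linarith [hf a b]
    refine le_trans ?_ ((ZMod.cauchy_davenport Fact.out hne' hne).trans (card_le_card hsum))
    rw [add_mul]
    omega

end CauchyDavenport

section Halasz

lemma addChar_sum {A M κ : Type*} [AddCommMonoid A] [CommMonoid M] (ψ : AddChar A M)
    (s : Finset κ) (f : κ → A) : ψ (∑ i ∈ s, f i) = ∏ i ∈ s, ψ (f i) :=
  map_prod ψ.toMonoidHom (fun i => Multiplicative.ofAdd (f i)) s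

local notation "χ" => ZMod.stdAddChar

variable {ι : Type*} {p : ℕ} [Fact p.Prime]

lemma sum_stdAddChar_mul (b : ZMod p) :
    ∑ θ : ZMod p, χ (θ * b) = if b = 0 then (p : ℂ) else 0 := by
  rw [AddChar.sum_mulShift b (ZMod.isPrimitive_stdAddChar p), ZMod.card]
  split_ifs <;> simp

/-- The distance of the phases `χ (θ * x i)`, `i ∈ T`, from `1`, as a Euclidean norm. Its sublevel
sets in `θ` are the Bohr sets of Halász's argument. -/
noncomputable def phaseDist (x : ι → ZMod p) (T : Finset ι) (θ : ZMod p) : ℝ :=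
  ‖WithLp.toLp 2 fun i : T => 1 - χ (θ * x i)‖

lemma phaseDist_sq (x : ι → ZMod p) (T : Finset ι) (θ : ZMod p) :
    phaseDist x T θ ^ 2 = ∑ i ∈ T, ‖1 - χ (θ * x i)‖ ^ 2 := by
  rw [phaseDist, EuclideanSpace.norm_sq_eq]
  exact sum_coe_sort T fun i => ‖1 - χ (θ * x i)‖ ^ 2

lemma phaseDist_zero (x : ι → ZMod p) (T : Finset ι) : phaseDist x T 0 = 0 := by
  rw [← sq_eq_zero_iff, phaseDist_sq]
  simp

lemma phaseDist_add_le (x : ι → ZMod p) (T : Finset ι) (a b : ZMod p) :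
    phaseDist x T (a + b) ≤ phaseDist x T a + phaseDist x T b := by
  have hrotate : phaseDist x T b =
      ‖WithLp.toLp 2 fun i : T => χ (a * x i) * (1 - χ (b * x i))‖ := by
    simp [phaseDist, EuclideanSpace.norm_eq]
  rw [hrotate, phaseDist, phaseDist]
  refine (le_of_eq ?_).trans (norm_add_le _ _)
  congr 1
  ext i
  simp only [PiLp.add_apply, add_mul, AddChar.map_add_eq_mul]
  ring

/-- As `‖1 - z‖² = 2 - 2 Re z` on the unit circle, the phases over a point of the Bohr set have a
large sum. -/
lemma card_div_two_le_re_sum_of_phaseDist_le {x : ι → ZMod p} {T : Finset ι} {θ : ZMod p}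
    (h : phaseDist x T θ ≤ √(#T)) : (#T / 2 : ℝ) ≤ (∑ i ∈ T, χ (θ * x i)).re := by
  have hsq : phaseDist x T θ ^ 2 ≤ #T := by
    rw [← Real.sq_sqrt (Nat.cast_nonneg #T)]
    exact pow_le_pow_left₀ (norm_nonneg _) h 2
  have hterm (i : ι) : ‖1 - χ (θ * x i)‖ ^ 2 = 2 - 2 * (χ (θ * x i)).re := by
    rw [Complex.sq_norm, Complex.normSq_sub, ← Complex.sq_norm, ← Complex.sq_norm, norm_one,
      AddChar.norm_apply, one_mul, Complex.conj_re]
    ring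
  rw [phaseDist_sq, sum_congr rfl fun i _ => hterm i, sum_sub_distrib, ← mul_sum, sum_const,
    nsmul_eq_mul, ← Complex.re_sum] at hsq
  linarith

lemma card_phaseDist_le_lt {x : ι → ZMod p} {T : Finset ι} (hT : T.Nonempty)
    (hx : ∀ i ∈ T, x i ≠ 0) : #{θ | phaseDist x T θ ≤ √(#T)} < p := by
  by_contra! hcard
  have hall : ({θ | phaseDist x T θ ≤ √(#T)} : Finset (ZMod p)) = univ :=
    eq_univ_of_card _ (le_antisymm (card_le_univ _) (by rwa [ZMod.card]))
  have hsum : ∑ θ : ZMod p, ∑ i ∈ T, χ (θ * x i) = 0 := by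
    rw [sum_comm]
    exact sum_eq_zero fun i hi => by rw [sum_stdAddChar_mul, if_neg (hx i hi)]
  have hpos : 0 < ∑ θ : ZMod p, (∑ i ∈ T, χ (θ * x i)).re := sum_pos (fun θ _ =>
    lt_of_lt_of_le (by simpa using hT.card_pos) (card_div_two_le_re_sum_of_phaseDist_le
      ((mem_filter_univ θ).1 (hall ▸ mem_univ θ)))) univ_nonempty
  rw [← Complex.re_sum, hsum] at hpos
  simp at hpos

lemma sum_norm_sq_sum_stdAddChar (x : ι → ZMod p) (T : Finset ι) :
    ∑ θ : ZMod p, ‖∑ i ∈ T, χ (θ * x i)‖ ^ 2 = p * ∑ i ∈ T, (#{j ∈ T | x j = x i} : ℝ) := by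
  have hexpand (θ : ZMod p) : ((‖∑ i ∈ T, χ (θ * x i)‖ ^ 2 : ℝ) : ℂ) =
      ∑ i ∈ T, ∑ j ∈ T, χ (θ * (x j - x i)) := by
    push_cast
    rw [← Complex.conj_mul', map_sum, sum_mul_sum]
    refine sum_congr rfl fun i _ => sum_congr rfl fun j _ => ?_
    rw [← AddChar.map_neg_eq_conj, ← AddChar.map_add_eq_mul]
    congr 1
    ring
  have hcomplex : ∑ θ : ZMod p, ((‖∑ i ∈ T, χ (θ * x i)‖ ^ 2 : ℝ) : ℂ) =
      p * ∑ i ∈ T, (#{j ∈ T | x j = x i} : ℂ) := by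
    simp only [hexpand]
    rw [sum_comm, mul_sum]
    refine sum_congr rfl fun i _ => ?_
    rw [sum_comm]
    simp only [sum_stdAddChar_mul, sub_eq_zero, ← sum_filter, sum_const, nsmul_eq_mul, mul_comm]
  exact_mod_cast hcomplex

lemma card_phaseDist_le_le {x : ι → ZMod p} {T : Finset ι} (hT : T.Nonempty) {L : ℕ}
    (hL : ∀ i ∈ T, #{j ∈ T | x j = x i} ≤ L) :
    (#{θ | phaseDist x T θ ≤ √(#T)} : ℝ) ≤ 4 * L / #T * p := by
  have : (0 : ℝ) < #T := by exact_mod_cast hT.card_pos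
  have hlow : #{θ | phaseDist x T θ ≤ √(#T)} * (#T / 2 : ℝ) ^ 2 ≤
      ∑ θ : ZMod p, ‖∑ i ∈ T, χ (θ * x i)‖ ^ 2 := by
    rw [← nsmul_eq_mul, ← sum_const]
    refine (sum_le_sum fun θ hθ => ?_).trans
      (sum_le_sum_of_subset_of_nonneg (filter_subset _ _) fun _ _ _ => sq_nonneg _)
    exact pow_le_pow_left₀ (by positivity) ((card_div_two_le_re_sum_of_phaseDist_le
      ((mem_filter_univ θ).1 hθ)).trans (Complex.re_le_norm _)) 2
  have hupp : ∑ i ∈ T, (#{j ∈ T | x j = x i} : ℝ) ≤ #T * L := by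
    rw [← nsmul_eq_mul]
    exact sum_le_card_nsmul _ _ _ fun i hi => by exact_mod_cast hL i hi
  rw [sum_norm_sq_sum_stdAddChar] at hlow
  refine le_of_mul_le_mul_right ?_ (by positivity : 0 < (#T / 2 : ℝ) ^ 2)
  calc _ ≤ (p : ℝ) * (#T * L) := hlow.trans (by gcongr)
    _ = 4 * L / #T * p * (#T / 2 : ℝ) ^ 2 := by field_simp; ring

lemma mul_card_phaseDist_le_div_le (x : ι → ZMod p) (T : Finset ι) {k : ℕ} (hk : 1 ≤ k)
    (hlt : #{θ | phaseDist x T θ ≤ √(#T)} < p) :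
    k * #{θ | phaseDist x T θ ≤ √(#T) / k} ≤ #{θ | phaseDist x T θ ≤ √(#T)} + k := by
  have hcd := min_le_card_le_mul_of_subadditive (phaseDist_add_le x T) (s := √(#T) / k)
    (by rw [phaseDist_zero]; positivity) hk
  rw [mul_div_cancel₀ _ (by positivity), Nat.mul_sub_one] at hcd
  omega

variable [Fintype ι] [DecidableEq ι]

lemma sum_stdAddChar_signVec_dotProduct (y : ι → ZMod p) :
    ∑ w : ι → ℤˣ, χ (signVec (ZMod p) w ⬝ᵥ y) = ∏ i, (χ (y i) + χ (-y i)) := by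
  have hunits : (univ : Finset ℤˣ) = {1, -1} := by decide
  have hfactor (i : ι) : χ (y i) + χ (-y i) = ∑ u : ℤˣ, χ (((u : ℤ) : ZMod p) * y i) := by
    rw [hunits, sum_pair (by decide)]
    simp
  simp only [hfactor, prod_univ_sum, Fintype.piFinset_univ, dotProduct, signVec, addChar_sum]

lemma atomProb_eq_sum_prod (x : ι → ZMod p) :
    (atomProb x : ℂ) * p * 2 ^ Fintype.card ι =
      ∑ θ : ZMod p, ∏ i, (χ (θ * x i) + χ (-(θ * x i))) := by
  have hcount := congrArg (Complex.ofReal)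
    (uniformProb_mul_card fun w : ι → ℤˣ => signVec (ZMod p) w ⬝ᵥ x = 0)
  push_cast [Fintype.card_fun, Fintype.card_units_int] at hcount
  calc (atomProb x : ℂ) * p * 2 ^ Fintype.card ι
      = p * #{w : ι → ℤˣ | signVec (ZMod p) w ⬝ᵥ x = 0} := by rw [← hcount, atomProb]; ring
    _ = ∑ w : ι → ℤˣ, ∑ θ : ZMod p, χ (θ * (signVec (ZMod p) w ⬝ᵥ x)) := by
        simp only [sum_stdAddChar_mul, ← sum_filter, sum_const, nsmul_eq_mul, mul_comm]
    _ = ∑ θ : ZMod p, ∑ w : ι → ℤˣ, χ (signVec (ZMod p) w ⬝ᵥ (θ • x)) := by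
        rw [sum_comm]
        simp only [dotProduct_smul, smul_eq_mul]
    _ = ∑ θ : ZMod p, ∏ i, (χ (θ * x i) + χ (-(θ * x i))) := by
        simp only [sum_stdAddChar_signVec_dotProduct, Pi.smul_apply, smul_eq_mul]

lemma norm_stdAddChar_add_neg (a : ZMod p) : ‖χ a + χ (-a)‖ = ‖1 + χ (2 * a)‖ := by
  have hfactor : χ a + χ (-a) = χ (-a) * (1 + χ (2 * a)) := by
    rw [mul_add, mul_one, ← AddChar.map_add_eq_mul, add_comm]
    congr 2
    ring
  rw [hfactor, norm_mul, AddChar.norm_apply, one_mul]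

lemma atomProb_mul_le_sum_prod (hp : p ≠ 2) (x : ι → ZMod p) :
    atomProb x * p ≤ ∑ θ : ZMod p, ∏ i, ‖1 + χ (θ * x i)‖ / 2 := by
  have hp' : (2 : ZMod p) ≠ 0 := by
    rw [← Nat.cast_two, Ne, ZMod.natCast_eq_zero_iff, Nat.prime_dvd_prime_iff_eq Fact.out
      Nat.prime_two]
    exact hp
  have hnorm := (congrArg norm (atomProb_eq_sum_prod x)).trans_le (norm_sum_le _ _)
  simp only [norm_mul, norm_pow, Complex.norm_real, Complex.norm_natCast, Complex.norm_ofNat,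
    Real.norm_of_nonneg (atomProb_nonneg x), norm_prod, norm_stdAddChar_add_neg] at hnorm
  simp only [prod_div_distrib, prod_const, card_univ, ← sum_div]
  rw [le_div_iff₀ (by positivity), ← Equiv.sum_comp (Equiv.mulLeft₀ (2 : ZMod p) hp')]
  simpa only [Equiv.mulLeft₀_apply, mul_assoc] using hnorm

lemma norm_one_add_half_le_exp {z : ℂ} (hz : ‖z‖ = 1) :
    ‖1 + z‖ / 2 ≤ Real.exp (-‖1 - z‖ ^ 2 / 8) := by
  have hpar := parallelogram_law_with_norm ℝ 1 z
  rw [norm_one, hz] at hpar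
  refine le_of_sq_le_sq ?_ (Real.exp_pos _).le
  rw [← Real.exp_nat_mul]
  calc (‖1 + z‖ / 2) ^ 2 = -‖1 - z‖ ^ 2 / 4 + 1 := by linarith
    _ ≤ Real.exp (-‖1 - z‖ ^ 2 / 4) := Real.add_one_le_exp _
    _ = Real.exp ((2 : ℕ) * (-‖1 - z‖ ^ 2 / 8)) := by congr 1; push_cast; ring

lemma atomProb_mul_le_sum_exp (hp : p ≠ 2) (x : ι → ZMod p) (T : Finset ι) :
    atomProb x * p ≤ ∑ θ : ZMod p, Real.exp (-phaseDist x T θ ^ 2 / 8) := by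
  refine (atomProb_mul_le_sum_prod hp x).trans (sum_le_sum fun θ _ => ?_)
  have hle (i : ι) : ‖1 + χ (θ * x i)‖ / 2 ≤ Real.exp (-‖1 - χ (θ * x i)‖ ^ 2 / 8) :=
    norm_one_add_half_le_exp (AddChar.norm_apply _ _)
  calc ∏ i, ‖1 + χ (θ * x i)‖ / 2 ≤ ∏ i, Real.exp (-‖1 - χ (θ * x i)‖ ^ 2 / 8) :=
        prod_le_prod (fun _ _ => by positivity) fun i _ => hle i
    _ = Real.exp (-(∑ i, ‖1 - χ (θ * x i)‖ ^ 2) / 8) := by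
        rw [← Real.exp_sum, ← sum_div, sum_neg_distrib]
    _ ≤ Real.exp (-phaseDist x T θ ^ 2 / 8) := by
        rw [phaseDist_sq]
        gcongr
        exact subset_univ T

/-- Halász's argument: the `k`-fold sumset of the Bohr set of radius `√|T| / k` lies in the Bohr
set of radius `√|T|`, so by Cauchy–Davenport the smaller set has density at most about `q / k`; off
it the phases contribute at most `exp (-|T| / (8 k²))`. -/
lemma atomProb_le_of_card_le (hp : p ≠ 2) (x : ι → ZMod p) (T : Finset ι) {k : ℕ} (hk : 1 ≤ k)
    {q : ℝ} (hq : (#{θ | phaseDist x T θ ≤ √(#T)} : ℝ) ≤ q * p)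
    (hlt : #{θ | phaseDist x T θ ≤ √(#T)} < p) :
    atomProb x ≤ q / k + 1 / p + Real.exp (-(#T / (8 * k ^ 2))) := by
  have hp0 : (0 : ℝ) < p := by exact_mod_cast (Fact.out : p.Prime).pos
  have hk0 : (0 : ℝ) < k := by exact_mod_cast hk
  set s : ℝ := √(#T) / k with hs
  have hbohr : (#{θ | phaseDist x T θ ≤ s} : ℝ) ≤ q * p / k + 1 := by
    have : (k * #{θ | phaseDist x T θ ≤ s} : ℝ) ≤ #{θ | phaseDist x T θ ≤ √(#T)} + k := by
      exact_mod_cast mul_card_phaseDist_le_div_le x T hk hlt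
    rw [← sub_le_iff_le_add, le_div_iff₀ hk0]
    linarith
  have hexp (θ : ZMod p) : Real.exp (-phaseDist x T θ ^ 2 / 8) ≤
      (if phaseDist x T θ ≤ s then 1 else 0) + Real.exp (-(#T / (8 * k ^ 2))) := by
    split_ifs with h
    · have : Real.exp (-phaseDist x T θ ^ 2 / 8) ≤ 1 := Real.exp_le_one_iff.2 (by
        linarith [sq_nonneg (phaseDist x T θ)])
      linarith [Real.exp_pos (-(#T / (8 * k ^ 2) : ℝ))]
    · have hsq : s ^ 2 ≤ phaseDist x T θ ^ 2 :=
        pow_le_pow_left₀ (by positivity) (not_le.1 h).le 2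
      rw [hs, div_pow, Real.sq_sqrt (by positivity)] at hsq
      rw [zero_add, Real.exp_le_exp, mul_comm, ← div_div]
      linarith
  refine le_of_mul_le_mul_right ?_ hp0
  calc atomProb x * p
      ≤ ∑ θ : ZMod p, ((if phaseDist x T θ ≤ s then 1 else 0) +
          Real.exp (-(#T / (8 * k ^ 2)))) :=
        (atomProb_mul_le_sum_exp hp x T).trans (sum_le_sum fun θ _ => hexp θ)
    _ = #{θ | phaseDist x T θ ≤ s} + p * Real.exp (-(#T / (8 * k ^ 2))) := by
        rw [sum_add_distrib, sum_boole, sum_const, nsmul_eq_mul, card_univ, ZMod.card]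
    _ ≤ q * p / k + 1 + p * Real.exp (-(#T / (8 * k ^ 2))) := by gcongr
    _ = (q / k + 1 / p + Real.exp (-(#T / (8 * k ^ 2)))) * p := by field_simp

end Halasz

section RationalVectors

variable {ι : Type*} [Fintype ι] [DecidableEq ι]

lemma exists_int_atomProb_eq (x : ι → ℚ) : ∃ z : ι → ℤ, atomProb x = atomProb z ∧
    (∀ i, z i = 0 → x i = 0) ∧ ∀ i j, z i = z j → x i = x j := by
  obtain ⟨⟨D, hD⟩, hmul⟩ :=
    IsLocalization.exist_integer_multiples_of_finite (nonZeroDivisors ℤ) x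
  choose z hz using hmul
  have hD0 : (D : ℚ) ≠ 0 := by exact_mod_cast nonZeroDivisors.ne_zero hD
  have hzx (i : ι) : (z i : ℚ) = D * x i := by simpa using hz i
  refine ⟨z, ?_, fun i hi => ?_, fun i j hij => ?_⟩
  · rw [← atomProb_smul hD0, ← atomProb_comp_of_injective (f := Int.castRingHom ℚ)
      Int.cast_injective z]
    congr 1
    ext i
    exact (hzx i).symm
  · simpa [hi, hD0] using hzx i
  · exact mul_left_cancel₀ hD0 (by rw [← hzx, ← hzx, hij])

lemma exists_zmod_atomProb_le (x : ι → ℚ) (M : ℕ) : ∃ p, M < p ∧ ∃ (_ : Fact p.Prime)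
    (y : ι → ZMod p), atomProb x ≤ atomProb y ∧ (∀ i, y i = 0 → x i = 0) ∧
      ∀ i j, y i = y j → x i = x j := by
  obtain ⟨z, hxz, hz0, hzij⟩ := exists_int_atomProb_eq x
  obtain ⟨p, hpM, hp⟩ := Nat.exists_infinite_primes (M + 2 * ∑ i, (z i).natAbs + 1)
  have hz (i : ι) : 2 * (z i).natAbs < p := by
    have := single_le_sum (f := fun i => (z i).natAbs) (fun _ _ => Nat.zero_le _) (mem_univ i)
    omega
  refine ⟨p, by omega, ⟨hp⟩, fun i => z i, ?_, fun i hi => hz0 i ?_, fun i j hij => hzij i j ?_⟩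
  · exact hxz.trans_le (atomProb_le_comp (Int.castRingHom (ZMod p)) z)
  · rw [ZMod.intCast_zmod_eq_zero_iff_dvd] at hi
    exact Int.eq_zero_of_abs_lt_dvd hi (abs_lt.2 (by have := hz i; omega))
  · rw [← sub_eq_zero, ← Int.cast_sub, ZMod.intCast_zmod_eq_zero_iff_dvd] at hij
    have := Int.eq_zero_of_abs_lt_dvd hij
      (abs_lt.2 (by have := hz i; have := hz j; omega))
    omega

lemma le_of_forall_exists_le_add_one_div {a b : ℝ}
    (h : ∀ M : ℕ, ∃ p > M, a ≤ b + 1 / (p : ℝ)) : a ≤ b := by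
  refine le_of_forall_pos_le_add fun ε hε => ?_
  obtain ⟨M, hM⟩ := exists_nat_one_div_lt hε
  obtain ⟨p, hp, hab⟩ := h M
  have : 1 / (p : ℝ) ≤ 1 / (M + 1) := by
    gcongr
    exact_mod_cast hp
  linarith

lemma atomProb_le_of_ne_zero {x : ι → ℚ} {T : Finset ι} (hT : T.Nonempty)
    (hx : ∀ i ∈ T, x i ≠ 0) {k : ℕ} (hk : 1 ≤ k) :
    atomProb x ≤ 1 / k + Real.exp (-(#T / (8 * k ^ 2))) := by
  refine le_of_forall_exists_le_add_one_div fun M => ?_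
  obtain ⟨p, hp, _, y, hxy, hy0, -⟩ := exists_zmod_atomProb_le x (max M 2)
  have hlt := card_phaseDist_le_lt hT fun i hi hyi => hx i hi (hy0 i hyi)
  refine ⟨p, (le_max_left _ _).trans_lt hp, hxy.trans ?_⟩
  have := atomProb_le_of_card_le (by omega) y T hk (q := 1) (by
    rw [one_mul]
    exact_mod_cast hlt.le) hlt
  linarith

lemma atomProb_le_of_card_fiber_le {x : ι → ℚ} {T : Finset ι} {L : ℕ}
    (hL : ∀ i ∈ T, #{j ∈ T | x j = x i} ≤ L) (hLT : 4 * L < #T) {k : ℕ} (hk : 1 ≤ k) :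
    atomProb x ≤ 4 * L / #T / k + Real.exp (-(#T / (8 * k ^ 2))) := by
  refine le_of_forall_exists_le_add_one_div fun M => ?_
  obtain ⟨p, hp, _, y, hxy, -, hyij⟩ := exists_zmod_atomProb_le x (max M 2)
  have hT : T.Nonempty := card_pos.1 (by omega)
  have hcard := card_phaseDist_le_le (x := y) hT fun i hi =>
    (card_le_card fun j hj => by
      rw [mem_filter] at hj ⊢
      exact ⟨hj.1, hyij j i hj.2⟩).trans (hL i hi)
  have hlt : #{θ | phaseDist y T θ ≤ √(#T)} < p := by
    have hratio : (4 * L / #T : ℝ) < 1 := by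
      rw [div_lt_one (by exact_mod_cast hT.card_pos)]
      exact_mod_cast hLT
    have hp0 : (0 : ℝ) < p := by exact_mod_cast (Nat.zero_le _).trans_lt hp
    exact_mod_cast hcard.trans_lt (mul_lt_of_lt_one_left hp0 hratio)
  refine ⟨p, (le_max_left _ _).trans_lt hp, hxy.trans ?_⟩
  have := atomProb_le_of_card_le (by omega) y T hk hcard hlt
  linarith

end RationalVectors

section SubspaceCounting

open Module

lemma exists_fin_forall_apply_eq_zero {K V κ : Type*} [Field K] [AddCommGroup V] [Module K V]
    [FiniteDimensional K V] [Nonempty κ] {d : ℕ} (hd : finrank K V ≤ d) (φ : κ → Dual K V) :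
    ∃ J : Fin d → κ, ∀ x, (∀ l, φ (J l) x = 0) → ∀ j, φ j x = 0 := by
  obtain ⟨f, hf, hspan, -⟩ := Submodule.exists_fun_fin_finrank_span_eq K (Set.range φ)
  choose g hg using hf
  have hle : finrank K (Submodule.span K (Set.range φ)) ≤ d :=
    (Submodule.finrank_le _).trans (Subspace.dual_finrank_eq.trans_le hd)
  refine ⟨fun l => if h : l.1 < finrank K (Submodule.span K (Set.range φ)) then g ⟨l, h⟩
    else Classical.arbitrary κ, fun x hx j => ?_⟩
  have hker : Submodule.span K (Set.range f) ≤ LinearMap.ker (Dual.eval K V x) := by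
    rw [Submodule.span_le]
    rintro _ ⟨l, rfl⟩
    simpa [← hg l, l.2] using hx (l.castLE hle)
  rw [hspan] at hker
  exact hker (Submodule.subset_span ⟨j, rfl⟩)

variable {ι κ F : Type*}

lemma signVec_injective [Ring F] [CharZero F] :
    Function.Injective (signVec F : (ι → ℤˣ) → ι → F) := fun _ _ h =>
  funext fun i => Units.ext (Int.cast_injective (congrFun h i))

variable [Fintype ι] [DecidableEq ι] [Fintype κ] [DecidableEq κ] [Field F]

/-- Odlyzko's bound: a sign vector in `V` is determined by `finrank F V` of its entries. -/
lemma uniformProb_signVec_mem_le [CharZero F] (V : Submodule F (ι → F)) :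
    uniformProb (fun w : ι → ℤˣ => signVec F w ∈ V) ≤ 2 ^ finrank F V / 2 ^ Fintype.card ι := by
  classical
  rcases isEmpty_or_nonempty ι with hι | hι
  · refine (uniformProb_le_one _).trans ?_
    rw [Fintype.card_eq_zero, pow_zero, div_one]
    exact one_le_pow₀ one_le_two
  obtain ⟨J, hJ⟩ := exists_fin_forall_apply_eq_zero le_rfl fun i : ι =>
    LinearMap.proj (R := F) (φ := fun _ : ι => F) i ∘ₗ V.subtype
  have hcard : #{w : ι → ℤˣ | signVec F w ∈ V} ≤ Fintype.card (Fin (finrank F V) → ℤˣ) := by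
    refine card_le_card_of_injOn (fun w l => w (J l)) (fun _ _ => mem_univ _) ?_
    intro w hw w' hw' hww'
    rw [coe_filter_univ, Set.mem_ofPred_eq] at hw hw'
    refine signVec_injective (F := F) (sub_eq_zero.1 (funext fun i => ?_))
    refine hJ ⟨signVec F w - signVec F w', V.sub_mem hw hw'⟩ (fun l => ?_) i
    exact sub_eq_zero.2 (congrArg (fun u : ℤˣ => ((u : ℤ) : F)) (congrFun hww' l))
  rw [Fintype.card_fun, Fintype.card_units_int, Fintype.card_fin] at hcard
  rw [uniformProb_eq, Fintype.card_fun, Fintype.card_units_int, Nat.cast_pow, Nat.cast_two]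
  gcongr
  exact_mod_cast hcard

lemma atomProb_le_half [CharZero F] {x : ι → F} (hx : x ≠ 0) : atomProb x ≤ 1 / 2 := by
  have hne : dotProductBilin F F x ≠ 0 := fun h =>
    hx (dotProduct_eq_zero x fun w => LinearMap.congr_fun h w)
  have hker := Dual.finrank_ker_add_one_of_ne_zero hne
  rw [finrank_fintype_fun_eq_card] at hker
  calc atomProb x
      ≤ uniformProb fun w : ι → ℤˣ => signVec F w ∈ LinearMap.ker (dotProductBilin F F x) :=
        uniformProb_mono fun w hw => by rwa [dotProduct_comm] at hw
    _ ≤ 2 ^ finrank F (LinearMap.ker (dotProductBilin F F x)) / 2 ^ Fintype.card ι :=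
        uniformProb_signVec_mem_le _
    _ = 1 / 2 := by rw [← hker, pow_succ]; field_simp

/-- Given the rows outside `Q`, fix one of the vectors they determine; each row in `Q` is orthogonal
to it with probability at most `r`. -/
lemma uniformProb_forall_mem_orthogonal_le (Q : Finset κ)
    (N : ({j // j ∉ Q} → ι → ℤˣ) → (ι → F) → Prop) {r : ℝ} (hr : 0 ≤ r)
    (hN : ∀ b x, N b x → atomProb x ≤ r) :
    uniformProb (fun W : κ → ι → ℤˣ => (∃ x, N (fun i => W i) x) ∧
      ∀ x, N (fun i => W i) x → ∀ j ∈ Q, signVec F (W j) ⬝ᵥ x = 0) ≤ r ^ #Q := by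
  refine (uniformProb_mono fun W hW j hj => ?_).trans (uniformProb_forall_mem_le Q
    (fun b w => ∃ h : ∃ x, N b x, signVec F w ⬝ᵥ h.choose = 0) hr fun b => ?_)
  · exact ⟨hW.1, hW.2 _ hW.1.choose_spec j hj⟩
  · by_cases h : ∃ x, N b x
    · exact (uniformProb_mono fun w hw => hw.2).trans (hN b _ h.choose_spec)
    · simpa [uniformProb, h] using hr

/-- If a vector of `U` is orthogonal to all rows in `Q`, then orthogonality to `d` of these rows
already forces this. -/
lemma uniformProb_exists_mem_orthogonal_le [Nonempty κ] {U : Submodule F (ι → F)} {d : ℕ}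
    (hd : finrank F U ≤ d) {r : ℝ} (hr0 : 0 ≤ r) (hr1 : r ≤ 1) (Q : Finset κ) :
    uniformProb (fun W : κ → ι → ℤˣ => ∃ x ∈ U, atomProb x ≤ r ∧
      ∀ j ∈ Q, signVec F (W j) ⬝ᵥ x = 0) ≤ Fintype.card κ ^ d * r ^ (#Q - d) := by
  let N (J : Fin d → κ) (b : {j // j ∉ Q \ univ.image J} → ι → ℤˣ) (x : ι → F) : Prop :=
    x ∈ U ∧ atomProb x ≤ r ∧ ∀ l, J l ∈ Q → signVec F (b ⟨J l, by simp⟩) ⬝ᵥ x = 0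
  have hJ (J : Fin d → κ) : uniformProb (fun W : κ → ι → ℤˣ => (∃ x, N J (fun i => W i) x) ∧
      ∀ x, N J (fun i => W i) x → ∀ j ∈ Q \ univ.image J, signVec F (W j) ⬝ᵥ x = 0) ≤
      r ^ (#Q - d) := by
    refine (uniformProb_forall_mem_orthogonal_le _ (N J) hr0 fun b x hx => hx.2.1).trans
      (pow_le_pow_of_le_one hr0 hr1 (le_trans ?_ (le_card_sdiff _ _)))
    have : #(univ.image J) ≤ d := card_image_le.trans_eq (by simp)
    lia
  refine (uniformProb_mono fun W ⟨x, hxU, hxr, hx⟩ => ?_).trans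
    ((uniformProb_exists_le _ hJ).trans_eq (by simp))
  obtain ⟨J, hJ⟩ := exists_fin_forall_apply_eq_zero hd fun j =>
    if j ∈ Q then dotProductBilin F F (signVec F (W j)) ∘ₗ U.subtype else 0
  refine ⟨J, ⟨x, hxU, hxr, fun l hl => hx _ hl⟩, fun y ⟨hyU, _, hy⟩ j hj => ?_⟩
  have hyj := hJ ⟨y, hyU⟩ (fun l => ?_) j
  · simpa [(mem_sdiff.1 hj).1] using hyj
  · by_cases hl : J l ∈ Q
    · simpa [hl] using hy l hl
    · simp [hl]

end SubspaceCounting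

section PatternSpaces

open Module

lemma exists_fin_range_superset {α : Type*} [Nonempty α] {E : Finset α} {s : ℕ} (hE : #E ≤ s) :
    ∃ e : Fin s → α, ∀ i ∈ E, ∃ l, e l = i := by
  obtain ⟨f⟩ : Nonempty (E ↪ Fin s) := Function.Embedding.nonempty_of_card_le (by simpa using hE)
  exact ⟨Function.extend f Subtype.val fun _ => Classical.arbitrary α,
    fun i hi => ⟨f ⟨i, hi⟩, f.injective.extend_apply _ _ _⟩⟩

variable {ι κ : Type*} {s m : ℕ}

open Classical in
/-- The colouring of `ι` in which each index in the range of `e` has a colour of its own and every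
other index `i` has colour `c i`. -/
noncomputable def patternColor (e : Fin s → ι) (c : ι → Fin m) (i : ι) : Fin s ⊕ Fin m :=
  if h : ∃ l, e l = i then Sum.inl h.choose else Sum.inr (c i)

/-- The vectors which are constant on each colour class of `patternColor e c`: their entries on the
range of `e` are arbitrary, and elsewhere an entry is determined by its colour under `c`. -/
noncomputable def patternSpace (e : Fin s → ι) (c : ι → Fin m) : Submodule ℚ (ι → ℚ) :=
  LinearMap.range (LinearMap.funLeft ℚ ℚ (patternColor e c))

lemma finrank_patternSpace_le (e : Fin s → ι) (c : ι → Fin m) :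
    finrank ℚ (patternSpace e c) ≤ s + m :=
  (LinearMap.finrank_range_le _).trans_eq (by simp)

lemma mem_patternSpace (e : Fin s → ι) {c : ι → Fin m} {x : ι → ℚ} {g : Fin m → ℚ}
    (h : ∀ i, (∀ l, e l ≠ i) → x i = g (c i)) : x ∈ patternSpace e c := by
  refine ⟨Sum.elim (x ∘ e) g, funext fun i => ?_⟩
  rw [LinearMap.funLeft_apply, patternColor]
  split_ifs with hi
  · exact congrArg x hi.choose_spec
  · exact (h i (not_exists.1 hi)).symm

lemma exists_mem_patternSpace [Nonempty ι] (hm : 0 < m) {E : Finset ι} (hE : #E ≤ s)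
    {x : ι → ℚ} {V : Finset ℚ} (hV : #V ≤ m) (hx : ∀ i ∉ E, x i ∈ V) :
    ∃ (e : Fin s → ι) (c : ι → Fin m), x ∈ patternSpace e c := by
  have : Nonempty (Fin m) := ⟨⟨0, hm⟩⟩
  obtain ⟨e, he⟩ := exists_fin_range_superset hE
  obtain ⟨g, hg⟩ := exists_fin_range_superset hV
  have hc (i : ι) : ∃ a, i ∉ E → x i = g a := by
    by_cases hi : i ∈ E
    · exact ⟨Classical.arbitrary _, fun h => (h hi).elim⟩
    · exact (hg _ (hx i hi)).imp fun a ha _ => ha.symm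
  choose c hc using hc
  exact ⟨e, c, mem_patternSpace e fun i hi => hc i fun hiE => (he i hiE).elim hi⟩

variable [Fintype ι]

lemma exists_mem_patternSpace_of_card_support_le [Nonempty ι] {x : ι → ℚ}
    (hx : #{i | x i ≠ 0} ≤ s) : ∃ (e : Fin s → ι) (c : ι → Fin 1), x ∈ patternSpace e c :=
  exists_mem_patternSpace zero_lt_one hx (card_singleton 0).le fun i hi => by simpa using hi

variable [DecidableEq ι]

/-- Apart from at most `s` exceptions, all entries of `x` belong to fibres of size more than `L`,
and there are at most `m` of these. -/
lemma exists_mem_patternSpace_of_lt_atomProb [Nonempty ι] {x : ι → ℚ} {L k : ℕ}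
    (hL : 4 * L < s) (hm : Fintype.card ι ≤ m * (L + 1)) (hk : 1 ≤ k)
    (hx : 4 * (L : ℝ) / s / k + Real.exp (-(s / (8 * k ^ 2))) < atomProb x) :
    ∃ (e : Fin s → ι) (c : ι → Fin m), x ∈ patternSpace e c := by
  set E : Finset ι := {i | #{j | x j = x i} ≤ L} with hEdef
  have hEs : #E ≤ s := by
    by_contra! hlt
    refine hx.not_ge ((atomProb_le_of_card_fiber_le (T := E) (L := L) (fun i hi => ?_)
      (hL.trans hlt) hk).trans ?_)
    · exact (card_le_card (filter_subset_filter _ (subset_univ E))).trans (mem_filter.1 hi).2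
    · have : 0 < s := by lia
      gcongr
  have hV : (L + 1) * #(Eᶜ.image x) ≤ (L + 1) * m := by
    refine (mul_card_image_le_card Eᶜ (L + 1) fun v hv => ?_).trans
      ((card_le_univ _).trans (hm.trans_eq (mul_comm _ _)))
    obtain ⟨i, hi, rfl⟩ := mem_image.1 hv
    simp only [hEdef, mem_compl, mem_filter_univ, not_le] at hi
    refine hi.trans_le (card_le_card fun j hj => ?_)
    rw [mem_filter_univ] at hj
    simpa [hEdef, hj] using hi
  refine exists_mem_patternSpace ?_ hEs (Nat.le_of_mul_le_mul_left hV (Nat.succ_pos L))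
    fun i hi => mem_image_of_mem x (mem_compl.2 hi)
  exact Nat.pos_of_mul_pos_right (Fintype.card_pos.trans_le hm)

lemma uniformProb_exists_mem_patternSpace_le [Fintype κ] [DecidableEq κ] [Nonempty κ] {r : ℝ}
    (hr0 : 0 ≤ r) (hr1 : r ≤ 1) (Q : Finset κ) :
    uniformProb (fun W : κ → ι → ℤˣ => ∃ x : ι → ℚ,
      (∃ (e : Fin s → ι) (c : ι → Fin m), x ∈ patternSpace e c) ∧ atomProb x ≤ r ∧
      ∀ j ∈ Q, signVec ℚ (W j) ⬝ᵥ x = 0) ≤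
    (Fintype.card ι : ℝ) ^ s * (m : ℝ) ^ Fintype.card ι *
      (Fintype.card κ ^ (s + m) * r ^ (#Q - (s + m))) := by
  refine (uniformProb_mono fun W ⟨x, ⟨e, c, hxU⟩, hx⟩ => ?_).trans ((uniformProb_exists_le _
    fun p : (Fin s → ι) × (ι → Fin m) => uniformProb_exists_mem_orthogonal_le
      (finrank_patternSpace_le p.1 p.2) hr0 hr1 Q).trans_eq (by simp))
  exact ⟨(e, c), x, hxU, hx⟩

end PatternSpaces

section RowReduction

variable {ι K V : Type*} [Field K]

lemma exists_mem_span_image_Iio [LinearOrder ι] [Finite ι] [AddCommGroup V] [Module K V]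
    {v : ι → V} (hv : ¬ LinearIndependent K v) : ∃ j, v j ∈ Submodule.span K (v '' Set.Iio j) := by
  classical
  have := Fintype.ofFinite ι
  obtain ⟨g, hg, i, hi⟩ := Fintype.not_linearIndependent_iff.1 hv
  obtain ⟨j, hj, hmax⟩ := exists_max_image {i | g i ≠ 0} id ⟨i, by simpa using hi⟩
  simp only [mem_filter_univ, id] at hj hmax
  refine ⟨j, (Submodule.smul_mem_iff _ hj).1 ?_⟩
  rw [← add_sum_erase _ _ (mem_univ j)] at hg
  rw [eq_neg_of_add_eq_zero_left hg]
  refine Submodule.neg_mem _ (Submodule.sum_mem _ fun l hl => ?_)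
  by_cases hgl : g l = 0
  · simp [hgl]
  · exact Submodule.smul_mem _ _ (Submodule.subset_span
      ⟨l, lt_of_le_of_ne (hmax l hgl) (ne_of_mem_erase hl), rfl⟩)

variable [Fintype ι]

lemma exists_ne_zero_forall_ne_dotProduct_eq_zero (v : ι → ι → K) (j : ι) :
    ∃ x ≠ 0, ∀ i ≠ j, v i ⬝ᵥ x = 0 := by
  classical
  have hdet : (Matrix.updateRow (Matrix.of v) j 0).det = 0 :=
    Matrix.det_eq_zero_of_row_eq_zero j (by simp)
  obtain ⟨x, hx, hvx⟩ := Matrix.exists_mulVec_eq_zero_iff.2 hdet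
  refine ⟨x, hx, fun i hi => ?_⟩
  simpa [Matrix.mulVec, Matrix.updateRow_ne hi] using congrFun hvx i

lemma dotProduct_eq_zero_of_mem_span {S : Set (ι → K)} {v x : ι → K} (hS : ∀ u ∈ S, u ⬝ᵥ x = 0)
    (hv : v ∈ Submodule.span K S) : v ⬝ᵥ x = 0 :=
  Submodule.span_le (p := LinearMap.ker ((dotProductBilin K K).flip x)).2 hS hv

end RowReduction

section Singularity

open Module

/-- The probability that a uniformly random `n × n` sign matrix is singular over `ℚ`. -/
noncomputable def singularProb (n : ℕ) : ℝ :=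
  uniformProb fun W : Fin n → Fin n → ℤˣ => ¬ LinearIndependent ℚ fun j => signVec ℚ (W j)

variable {n : ℕ}

lemma uniformProb_mem_span_Iio_le (j : Fin n) :
    uniformProb (fun W : Fin n → Fin n → ℤˣ =>
      signVec ℚ (W j) ∈ Submodule.span ℚ ((fun i => signVec ℚ (W i)) '' Set.Iio j)) ≤
    2 ^ (j : ℕ) / 2 ^ n := by
  have hprob := uniformProb_forall_mem_le (κ := Fin n) {j} (fun (b : _ → Fin n → ℤˣ) w =>
    signVec ℚ w ∈ Submodule.span ℚ (Set.range fun i : Set.Iio j =>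
      signVec ℚ (b ⟨i, by simpa using i.2.ne⟩)))
    (c := 2 ^ (j : ℕ) / 2 ^ n) (by positivity) fun b => ?_
  · simpa [Set.image_eq_range] using hprob
  · refine (uniformProb_signVec_mem_le _).trans ?_
    rw [Fintype.card_fin]
    gcongr
    · exact one_le_two
    · exact (finrank_range_le_card _).trans_eq (by simp)

lemma uniformProb_mem_span_Iio_of_atomProb_le (j : Fin n) {r : ℝ} (hr : 0 ≤ r) :
    uniformProb (fun W : Fin n → Fin n → ℤˣ =>
      signVec ℚ (W j) ∈ Submodule.span ℚ ((fun i => signVec ℚ (W i)) '' Set.Iio j) ∧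
      ∀ x ≠ 0, (∀ i < j, signVec ℚ (W i) ⬝ᵥ x = 0) → atomProb x ≤ r) ≤ r := by
  have hprob := uniformProb_forall_mem_orthogonal_le (F := ℚ) {j}
    (fun (b : {i // i ∉ ({j} : Finset (Fin n))} → Fin n → ℤˣ) x =>
      (∀ i : Set.Iio j, signVec ℚ (b ⟨i, by simpa using i.2.ne⟩) ⬝ᵥ x = 0) ∧ atomProb x ≤ r)
    hr fun b x hx => hx.2
  rw [card_singleton, pow_one] at hprob
  refine (uniformProb_mono fun W ⟨hspan, hW⟩ => ⟨?_, fun x hx i hi => ?_⟩).trans hprob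
  · obtain ⟨x, hx0, hx⟩ := exists_ne_zero_forall_ne_dotProduct_eq_zero (fun i => signVec ℚ (W i)) j
    exact ⟨x, fun i => hx i i.2.ne, hW x hx0 fun i hi => hx i hi.ne⟩
  · rw [mem_singleton.1 hi]
    refine dotProduct_eq_zero_of_mem_span ?_ hspan
    rintro _ ⟨i, hi, rfl⟩
    exact hx.1 ⟨i, hi⟩

/-- A row of a singular matrix depends on its predecessors. For the first `n - t` rows this is
unlikely by Odlyzko's bound; for the last `t` it is unlikely unless some vector orthogonal to the
predecessors has large concentration probability. -/
lemma singularProb_le {t : ℕ} (ht : t ≤ n) {r : ℝ} (hr : 0 ≤ r) :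
    singularProb n ≤ n * (1 / 2) ^ t + t * r +
      uniformProb (fun W : Fin n → Fin n → ℤˣ => ∃ x ≠ 0, r < atomProb x ∧
        ∀ j : Fin n, j < n - t → signVec ℚ (W j) ⬝ᵥ x = 0) := by
  have hearly := uniformProb_exists_mem_le {j : Fin n | j < n - t} _ (c := (1 / 2) ^ t)
    fun j hj => (uniformProb_mem_span_Iio_le j).trans (by
      rw [mem_filter_univ] at hj
      rw [one_div_pow, div_le_div_iff₀ (by positivity) (by positivity), one_mul, ← pow_add]
      exact pow_le_pow_right₀ one_le_two (by lia))
  have hlate := uniformProb_exists_mem_le {j : Fin n | ¬ j < n - t} _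
    fun j _ => uniformProb_mem_span_Iio_of_atomProb_le j hr
  calc singularProb n
      ≤ uniformProb (fun W : Fin n → Fin n → ℤˣ => _) := uniformProb_mono fun W hW => ?_
    _ ≤ _ := uniformProb_or_le _ _
    _ ≤ _ + _ := add_le_add_left (uniformProb_or_le _ _) _
    _ ≤ _ := add_le_add_left (add_le_add hearly hlate) _
    _ ≤ _ := by
      gcongr
      · exact_mod_cast (card_le_univ _).trans_eq (Fintype.card_fin n)
      · rw [filter_not, card_sdiff_of_subset (filter_subset _ _), Fin.card_filter_val_lt]
        simp only [card_univ, Fintype.card_fin]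
        lia
  obtain ⟨j, hj⟩ := exists_mem_span_image_Iio hW
  by_cases hjt : j < n - t
  · exact Or.inl (Or.inl ⟨j, by simpa using hjt, hj⟩)
  by_cases hx : ∀ x ≠ 0, (∀ i < j, signVec ℚ (W i) ⬝ᵥ x = 0) → atomProb x ≤ r
  · exact Or.inl (Or.inr ⟨j, by simpa using hjt, hj, hx⟩)
  · push Not at hx
    obtain ⟨x, hx0, hx, hxr⟩ := hx
    exact Or.inr ⟨x, hx0, hxr, fun i hi => hx i (Fin.lt_def.2 (by lia))⟩

end Singularity

section SingularityEstimates

variable {n K : ℕ}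

/-- Each of the `n` colours costs a factor `800 * K ^ c`, each of the `n - O(n / 100)` orthogonality
conditions gains a factor `K ^ (c + 2)`. -/
lemma pattern_count_le (hK : 3200 ≤ K) (hn : n ≤ (2 * K) ^ 20) {c s : ℕ} (hc : c ≤ 13)
    (hs : 15 * K + 55 * s + 35 * (800 * K ^ c) ≤ n) :
    n ^ s * (800 * K ^ c) ^ n * n ^ (s + 800 * K ^ c) * 2 ^ n ≤
      (K ^ (c + 2)) ^ (n - K - (s + 800 * K ^ c)) := by
  obtain ⟨m, hm⟩ : ∃ m, m = 800 * K ^ c := ⟨_, rfl⟩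
  obtain ⟨d, hd⟩ : ∃ d, n = K + (s + m) + d := ⟨n - (K + (s + m)), by lia⟩
  have hexp : n + (20 * (2 * s + m) + c * n) ≤ (c + 2) * d := by
    have : c * (K + (s + m)) ≤ 13 * (K + (s + m)) := Nat.mul_le_mul_right _ hc
    have : c * n = c * (K + (s + m)) + c * d := by rw [hd]; ring
    lia
  rw [← hm] at hs ⊢
  calc n ^ s * m ^ n * n ^ (s + m) * 2 ^ n
      = n ^ (2 * s + m) * m ^ n * 2 ^ n := by ring
    _ ≤ ((2 * K) ^ 20) ^ (2 * s + m) * m ^ n * 2 ^ n := by gcongr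
    _ = 2 ^ (20 * (2 * s + m)) * K ^ (20 * (2 * s + m)) * (800 ^ n * K ^ (c * n)) * 2 ^ n := by
        rw [hm, mul_pow 800, ← pow_mul K, ← pow_mul, mul_pow 2 K]
    _ ≤ 2 ^ n * K ^ (20 * (2 * s + m)) * (800 ^ n * K ^ (c * n)) * 2 ^ n := by
        gcongr
        · exact one_le_two
        · lia
    _ = 3200 ^ n * K ^ (20 * (2 * s + m) + c * n) := by
        rw [pow_add, show 3200 = 2 * 800 * 2 by norm_num, mul_pow, mul_pow]; ring
    _ ≤ K ^ n * K ^ (20 * (2 * s + m) + c * n) := by gcongr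
    _ = K ^ (n + (20 * (2 * s + m) + c * n)) := (pow_add ..).symm
    _ ≤ K ^ ((c + 2) * d) := Nat.pow_le_pow_right (by lia) hexp
    _ = (K ^ (c + 2)) ^ (n - K - (s + m)) := by rw [pow_mul, show n - K - (s + m) = d by lia]

lemma sparse_count_le (hK : 4 ≤ K) (hn : n ≤ (2 * K) ^ 20) (hE : 16 * (2 * K) ^ 60 ≤ 2 ^ K) {s : ℕ}
    (hs : K ≤ s) (hsn : K * s ≤ n) :
    n ^ s * n ^ (s + 1) * 2 ^ K ≤ 2 ^ (n - K - (s + 1)) := by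
  have h4 : 4 * s ≤ n := (Nat.mul_le_mul_right _ hK).trans hsn
  refine Nat.le_of_mul_le_mul_right (c := 2 ^ (K + (s + 1))) ?_ (by positivity)
  calc n ^ s * n ^ (s + 1) * 2 ^ K * 2 ^ (K + (s + 1))
      = n ^ (2 * s + 1) * 2 ^ (2 * K + s + 1) := by ring
    _ ≤ n ^ (3 * s) * 2 ^ (4 * s) := by gcongr <;> lia
    _ ≤ ((2 * K) ^ 20) ^ (3 * s) * 2 ^ (4 * s) := by gcongr
    _ = (16 * (2 * K) ^ 60) ^ s := by
        rw [mul_pow 16, ← pow_mul, ← pow_mul, show 16 = 2 ^ 4 by norm_num, ← pow_mul]; ring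
    _ ≤ (2 ^ K) ^ s := by gcongr
    _ = 2 ^ (K * s) := (pow_mul ..).symm
    _ ≤ 2 ^ n := Nat.pow_le_pow_right two_pos hsn
    _ = 2 ^ (n - K - (s + 1)) * 2 ^ (K + (s + 1)) := by rw [← pow_add]; congr 1; lia

lemma exp_neg_le_of_pow_le (hK : 1 ≤ K) (hexp : 2 * (K : ℝ) ^ 22 ≤ Real.exp (K / 8)) {s : ℝ}
    (hs : (K : ℝ) ^ 19 ≤ s) :
    Real.exp (-(s / (8 * ((K ^ 9 : ℕ) : ℝ) ^ 2))) ≤ 1 / (2 * (K : ℝ) ^ 22) := by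
  rw [Real.exp_neg, ← one_div]
  gcongr
  refine hexp.trans (Real.exp_le_exp.2 ?_)
  rw [div_le_div_iff₀ (by norm_num) (by positivity)]
  calc (K : ℝ) * (8 * ((K ^ 9 : ℕ) : ℝ) ^ 2) = K ^ 19 * 8 := by push_cast; ring
    _ ≤ s * 8 := by gcongr

lemma level_threshold_le (hK : 1 ≤ K) (hexp : 2 * (K : ℝ) ^ 22 ≤ Real.exp (K / 8)) {c s L : ℕ}
    (hc : c ≤ 13) (hs : K ^ 19 ≤ s) (hL : L * (8 * K ^ c) ≤ s) :
    4 * (L : ℝ) / s / (K ^ 9 : ℕ) + Real.exp (-(s / (8 * ((K ^ 9 : ℕ) : ℝ) ^ 2))) ≤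
      1 / (K : ℝ) ^ (c + 9) := by
  have hK1 : (1 : ℝ) ≤ K := by exact_mod_cast hK
  have hs0 : (0 : ℝ) < s := by exact_mod_cast (by positivity : 0 < K ^ 19).trans_le hs
  have hfrac : 4 * (L : ℝ) / s / (K ^ 9 : ℕ) ≤ 1 / (2 * (K : ℝ) ^ (c + 9)) := by
    rw [div_div, div_le_div_iff₀ (by positivity) (by positivity)]
    calc 4 * (L : ℝ) * (2 * K ^ (c + 9)) = (L * (8 * K ^ c) : ℕ) * (K : ℝ) ^ 9 := by
          push_cast; ring
      _ ≤ s * (K : ℝ) ^ 9 := by gcongr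
      _ = 1 * (s * (K ^ 9 : ℕ)) := by push_cast; ring
  have htail : 1 / (2 * (K : ℝ) ^ 22) ≤ 1 / (2 * (K : ℝ) ^ (c + 9)) := by
    gcongr
    lia
  calc _ ≤ 1 / (2 * (K : ℝ) ^ (c + 9)) + 1 / (2 * (K : ℝ) ^ (c + 9)) :=
        add_le_add hfrac ((exp_neg_le_of_pow_le hK hexp (by exact_mod_cast hs)).trans htail)
    _ = _ := by field_simp; norm_num

lemma mul_pow_thirteen_le (hK : 10000 ≤ K) (hn : K ^ 20 ≤ n) : 10000 * (10000 * K ^ 13) ≤ n := by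
  calc 10000 * (10000 * K ^ 13) ≤ K ^ 6 * (K * K ^ 13) := by
        gcongr
        exact hK.trans (Nat.le_self_pow (by norm_num) K)
    _ = K ^ 20 := by ring
    _ ≤ n := hn

lemma uniformProb_level_le (hK : 10000 ≤ K) (hn1 : K ^ 20 ≤ n) (hn2 : n ≤ (2 * K) ^ 20)
    (hexp : 2 * (K : ℝ) ^ 22 ≤ Real.exp (K / 8)) {c : ℕ} (hc : c ≤ 13) :
    uniformProb (fun W : Fin n → Fin n → ℤˣ => ∃ x : Fin n → ℚ,
      1 / (K : ℝ) ^ (c + 9) < atomProb x ∧ atomProb x ≤ 1 / (K : ℝ) ^ (c + 2) ∧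
      ∀ j : Fin n, j < n - K → signVec ℚ (W j) ⬝ᵥ x = 0) ≤ (1 / 2) ^ n := by
  have hK1 : (1 : ℝ) ≤ K := by exact_mod_cast (by lia : 1 ≤ K)
  have hKc : K ^ c ≤ K ^ 13 := Nat.pow_le_pow_right (by lia) hc
  have hK13 := mul_pow_thirteen_le hK hn1
  have hKle : K ≤ K ^ 13 := Nat.le_self_pow (by norm_num) K
  have : Nonempty (Fin n) := ⟨⟨0, by lia⟩⟩
  obtain ⟨s, hs⟩ : ∃ s, s = n / 100 + 1 := ⟨_, rfl⟩
  have hs19 : K ^ 19 ≤ s := by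
    have : 100 * K ^ 19 ≤ n := (Nat.mul_le_mul_right _ (by lia : 100 ≤ K)).trans (by lia)
    lia
  have hL : 4 * (s / (8 * K ^ c)) < s := by
    have := Nat.div_le_div_left (c := 8) (b := 8 * K ^ c) (a := s)
      (Nat.le_mul_of_pos_right _ (by positivity)) (by norm_num)
    lia
  have hm : Fintype.card (Fin n) ≤ 800 * K ^ c * (s / (8 * K ^ c) + 1) := by
    have := Nat.lt_mul_div_succ s (b := 8 * K ^ c) (by positivity)
    rw [Fintype.card_fin]
    lia
  have hcount := pattern_count_le (c := c) (s := s) (by lia) hn2 hc (by lia)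
  have hprob := uniformProb_exists_mem_patternSpace_le (ι := Fin n) (κ := Fin n) (s := s)
    (m := 800 * K ^ c) (r := 1 / (K : ℝ) ^ (c + 2)) (by positivity)
    (div_le_one_of_le₀ (one_le_pow₀ hK1) (by positivity)) {j : Fin n | j < n - K}
  rw [Fin.card_filter_val_lt, min_eq_right (Nat.sub_le n K), Fintype.card_fin] at hprob
  calc _ ≤ _ := uniformProb_mono fun W ⟨x, hx, hxr, hW⟩ =>
        ⟨x, exists_mem_patternSpace_of_lt_atomProb hL hm (one_le_pow₀ (by lia : 1 ≤ K))
          ((level_threshold_le (by lia) hexp hc hs19 (Nat.div_mul_le_self ..)).trans_lt hx), hxr,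
          fun j hj => hW j ((mem_filter_univ j).1 hj)⟩
    _ ≤ _ := hprob
    _ ≤ (1 / 2) ^ n := by
      rw [one_div_pow, one_div_pow, ← mul_assoc, mul_one_div,
        div_le_div_iff₀ (by positivity) (by positivity), one_mul]
      exact_mod_cast hcount

lemma uniformProb_sparse_le (hK : 10000 ≤ K) (hn1 : K ^ 20 ≤ n) (hn2 : n ≤ (2 * K) ^ 20)
    (hE : 16 * (2 * K) ^ 60 ≤ 2 ^ K) (hexp : 2 * (K : ℝ) ^ 22 ≤ Real.exp (K / 8)) :
    uniformProb (fun W : Fin n → Fin n → ℤˣ => ∃ x : Fin n → ℚ,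
      x ≠ 0 ∧ 1 / (K : ℝ) ^ 8 < atomProb x ∧
      ∀ j : Fin n, j < n - K → signVec ℚ (W j) ⬝ᵥ x = 0) ≤ (1 / 2) ^ K := by
  have hK2 : (2 : ℝ) ≤ K := by exact_mod_cast (by lia : 2 ≤ K)
  have : Nonempty (Fin n) := ⟨⟨0, (by positivity : 0 < K ^ 20).trans_le hn1⟩⟩
  have hsupport {x : Fin n → ℚ} (hx : 1 / (K : ℝ) ^ 8 < atomProb x) :
      #{i | x i ≠ 0} ≤ K ^ 19 := by
    by_contra! hcard
    refine hx.not_ge ((atomProb_le_of_ne_zero (k := K ^ 9) (card_pos.1 (by lia))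
      (fun i hi => (mem_filter_univ i).1 hi) (one_le_pow₀ (by lia))).trans ?_)
    calc _ ≤ 1 / (K ^ 9 : ℕ) + 1 / (2 * (K : ℝ) ^ 22) := by
          gcongr
          exact exp_neg_le_of_pow_le (by lia) hexp (by exact_mod_cast hcard.le)
      _ ≤ 1 / (K : ℝ) ^ 9 + 1 / (K : ℝ) ^ 9 := by
          push_cast
          gcongr
          exact (pow_le_pow_right₀ (by linarith) (by norm_num)).trans
            (le_mul_of_one_le_left (by positivity) one_le_two)
      _ = 2 / K * (1 / (K : ℝ) ^ 8) := by field_simp; norm_num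
      _ ≤ 1 / (K : ℝ) ^ 8 :=
          mul_le_of_le_one_left (by positivity) (div_le_one_of_le₀ hK2 (by positivity))
  have hcount := sparse_count_le (s := K ^ 19) (by lia) hn2 hE (Nat.le_self_pow (by norm_num) K)
    (by rwa [← pow_succ'])
  have hprob := uniformProb_exists_mem_patternSpace_le (ι := Fin n) (κ := Fin n) (s := K ^ 19)
    (m := 1) (r := 1 / 2) (by norm_num) (by norm_num) {j : Fin n | j < n - K}
  rw [Fin.card_filter_val_lt, min_eq_right (Nat.sub_le n K), Fintype.card_fin] at hprob
  calc _ ≤ _ := uniformProb_mono fun W ⟨x, hx0, hx, hW⟩ =>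
        ⟨x, exists_mem_patternSpace_of_card_support_le (hsupport hx), atomProb_le_half hx0,
          fun j hj => hW j ((mem_filter_univ j).1 hj)⟩
    _ ≤ _ := hprob
    _ ≤ (1 / 2) ^ K := by
      rw [one_div_pow, one_div_pow, ← mul_assoc, mul_one_div,
        div_le_div_iff₀ (by positivity) (by positivity), one_mul, Nat.cast_one, one_pow, mul_one]
      exact_mod_cast hcount

lemma singularProb_le_of_pow_le (hK : 10000 ≤ K) (hn1 : K ^ 20 ≤ n) (hn2 : n ≤ (2 * K) ^ 20)
    (hE : 16 * (2 * K) ^ 60 ≤ 2 ^ K) (hexp : 2 * (K : ℝ) ^ 22 ≤ Real.exp (K / 8)) :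
    singularProb n ≤ (n + 3) * (1 / 2) ^ K + 1 / (K : ℝ) ^ 21 := by
  have hKn : K ≤ n := (Nat.le_self_pow (by norm_num) K).trans hn1
  have hlevel : ∀ c ≤ 13, uniformProb (fun W : Fin n → Fin n → ℤˣ => ∃ x : Fin n → ℚ,
      1 / (K : ℝ) ^ (c + 9) < atomProb x ∧ atomProb x ≤ 1 / (K : ℝ) ^ (c + 2) ∧
      ∀ j : Fin n, j < n - K → signVec ℚ (W j) ⬝ᵥ x = 0) ≤ (1 / 2) ^ K := fun c hc =>
    (uniformProb_level_le hK hn1 hn2 hexp hc).trans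
      (pow_le_pow_of_le_one (by norm_num) (by norm_num) hKn)
  have hbad : uniformProb (fun W : Fin n → Fin n → ℤˣ => ∃ x ≠ 0, 1 / (K : ℝ) ^ 22 < atomProb x ∧
      ∀ j : Fin n, j < n - K → signVec ℚ (W j) ⬝ᵥ x = 0) ≤
      (1 / 2) ^ K + ((1 / 2) ^ K + (1 / 2) ^ K) := by
    refine (uniformProb_mono fun W ⟨x, hx0, hx, hW⟩ => ?_).trans <|
      (uniformProb_or_le _ _).trans <| add_le_add (uniformProb_sparse_le hK hn1 hn2 hE hexp) <|
      (uniformProb_or_le _ _).trans <| add_le_add (hlevel 6 (by norm_num)) (hlevel 13 le_rfl)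
    rcases lt_or_ge (1 / (K : ℝ) ^ 8) (atomProb x) with h8 | h8
    · exact Or.inl ⟨x, hx0, h8, hW⟩
    rcases lt_or_ge (1 / (K : ℝ) ^ 15) (atomProb x) with h15 | h15
    · exact Or.inr (Or.inl ⟨x, h15, h8, hW⟩)
    · exact Or.inr (Or.inr ⟨x, hx, h15, hW⟩)
  calc singularProb n
      ≤ n * (1 / 2) ^ K + K * (1 / (K : ℝ) ^ 22) +
          ((1 / 2) ^ K + ((1 / 2) ^ K + (1 / 2) ^ K)) :=
        (singularProb_le hKn (by positivity)).trans (add_le_add_right hbad _)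
    _ = (n + 3) * (1 / 2) ^ K + 1 / (K : ℝ) ^ 21 := by
        have : (0 : ℝ) < K := by exact_mod_cast (by lia : 0 < K)
        field_simp
        ring

end SingularityEstimates

section SingularityLimit

lemma eventually_mul_pow_le_two_pow :
    ∀ᶠ K : ℕ in Filter.atTop, 16 * (2 * K) ^ 60 ≤ 2 ^ K := by
  have hlim := tendsto_pow_const_div_const_pow_of_one_lt 60 (one_lt_two : (1 : ℝ) < 2)
  filter_upwards [hlim.eventually_lt_const (by positivity : (0 : ℝ) < 1 / (16 * 2 ^ 60))] with K hK
  rw [div_lt_div_iff₀ (by positivity) (by positivity)] at hK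
  have : 16 * (2 * (K : ℝ)) ^ 60 ≤ 2 ^ K := by rw [mul_pow]; linarith
  exact_mod_cast this

lemma eventually_two_mul_pow_le_exp :
    ∀ᶠ K : ℕ in Filter.atTop, 2 * (K : ℝ) ^ 22 ≤ Real.exp (K / 8) := by
  have hlim := (Real.tendsto_pow_mul_exp_neg_atTop_nhds_zero 22).comp
    ((tendsto_natCast_atTop_atTop (R := ℝ)).atTop_div_const (by norm_num : (0 : ℝ) < 8))
  filter_upwards [hlim.eventually_lt_const (by positivity : (0 : ℝ) < 1 / (2 * 8 ^ 22))] with K hK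
  rw [Function.comp_apply, Real.exp_neg, ← div_eq_mul_inv,
    div_lt_div_iff₀ (Real.exp_pos _) (by positivity), div_pow] at hK
  linarith

lemma tendsto_nthRoot_atTop {k : ℕ} (hk : k ≠ 0) :
    Filter.Tendsto (Nat.nthRoot k) Filter.atTop Filter.atTop :=
  Filter.tendsto_atTop.2 fun b => (Filter.eventually_ge_atTop (b ^ k)).mono fun _ hn =>
    (Nat.le_nthRoot_iff hk).2 hn

lemma tendsto_singularity_majorant :
    Filter.Tendsto (fun K : ℕ => (2 * K : ℝ) ^ 20 * (((2 * K) ^ 20 + 3) * (1 / 2) ^ K + 1 / K ^ 21))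
      Filter.atTop (nhds 0) := by
  have hpow (k : ℕ) := tendsto_pow_const_div_const_pow_of_one_lt k (one_lt_two : (1 : ℝ) < 2)
  have hsum := (((hpow 40).const_mul (2 ^ 40)).add ((hpow 20).const_mul (3 * 2 ^ 20))).add
    ((tendsto_one_div_atTop_nhds_zero_nat (𝕜 := ℝ)).const_mul (2 ^ 20))
  simp only [mul_zero, add_zero] at hsum
  refine hsum.congr' ?_
  filter_upwards [Filter.eventually_gt_atTop 0] with K hK
  have : (0 : ℝ) < K := by exact_mod_cast hK
  rw [one_div_pow]
  field_simp

/-- With `K` the integer part of the twentieth root of `n`, `singularProb n = O(1 / K ^ 21)`. -/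
theorem tendsto_mul_singularProb :
    Filter.Tendsto (fun n : ℕ => n * singularProb n) Filter.atTop (nhds 0) := by
  refine squeeze_zero' (.of_forall fun n => mul_nonneg n.cast_nonneg (uniformProb_nonneg _)) ?_
    (tendsto_singularity_majorant.comp (tendsto_nthRoot_atTop (by norm_num : 20 ≠ 0)))
  filter_upwards [(tendsto_nthRoot_atTop (by norm_num : 20 ≠ 0)).eventually
    (eventually_mul_pow_le_two_pow.and
      (eventually_two_mul_pow_le_exp.and (Filter.eventually_ge_atTop 10000)))]
    with n ⟨hE, hexp, hK⟩
  have hn : n ≤ (2 * Nat.nthRoot 20 n) ^ 20 :=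
    (Nat.lt_pow_nthRoot_add_one (by norm_num) n).le.trans (Nat.pow_le_pow_left (by lia) 20)
  have hn' : (n : ℝ) ≤ (2 * Nat.nthRoot 20 n) ^ 20 := by exact_mod_cast hn
  calc n * singularProb n
      ≤ n * ((n + 3) * (1 / 2) ^ Nat.nthRoot 20 n + 1 / (Nat.nthRoot 20 n : ℝ) ^ 21) := by
        gcongr
        exact singularProb_le_of_pow_le hK (Nat.pow_nthRoot_le (.inl (by norm_num))) hn hE hexp
    _ ≤ _ := by
        dsimp only [Function.comp_apply]
        gcongr

end SingularityLimit

section BalancedFamilies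

variable {ι κ : Type*} {n : ℕ}

/-- The indicator vector of a finite set. -/
noncomputable def indicatorVec (S : Finset ι) : ι → ℝ := Set.indicator S 1

/-- The ordered form of a minimal balanced collection: the indicator vectors of the members are
linearly independent and the all-ones vector is a positive combination of them. -/
def IsMinimalBalancedFamily [Fintype κ] (S : κ → Finset ι) : Prop :=
  LinearIndependent ℝ (indicatorVec ∘ S) ∧
    ∃ c : κ → ℝ, (∀ k, 0 < c k) ∧ ∑ k, c k • indicatorVec (S k) = 1

lemma isBalancingWeights_iff {B : Finset (Finset (Fin n))} {lam : Finset (Fin n) → ℝ} :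
    IsBalancingWeights B lam ↔
      (∀ S ∈ B, 0 < lam S) ∧ ∑ S ∈ B, lam S • indicatorVec S = 1 := by
  simp [IsBalancingWeights, funext_iff, indicatorVec, Set.indicator_apply, sum_filter]

/-- Otherwise subtracting the largest admissible multiple of `μ` from the balancing weights leaves
nonnegative weights, which balance a proper subfamily. -/
lemma IsMinimalBalancedCollection.nonpos_of_sum_smul_eq_zero {B : Finset (Finset (Fin n))}
    (hB : IsMinimalBalancedCollection B) {μ : Finset (Fin n) → ℝ}
    (hμ : ∑ S ∈ B, μ S • indicatorVec S = 0) : ∀ S ∈ B, μ S ≤ 0 := by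
  obtain ⟨⟨hne, lam, hlam⟩, hmin⟩ := hB
  rw [isBalancingWeights_iff] at hlam
  by_contra! hpos
  obtain ⟨T, hT, hTmin⟩ := exists_min_image {S ∈ B | 0 < μ S} (fun S => lam S / μ S)
    (filter_nonempty_iff.2 hpos)
  rw [mem_filter] at hT
  have hsub : ∀ S ∈ B, 0 ≤ lam S - lam T / μ T * μ S := fun S hS => by
    rcases le_or_gt (μ S) 0 with h | h
    · have := mul_nonpos_of_nonneg_of_nonpos (div_pos (hlam.1 T hT.1) hT.2).le h
      linarith [hlam.1 S hS]
    · have := hTmin S (mem_filter.2 ⟨hS, h⟩)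
      rw [le_div_iff₀ h] at this
      linarith
  refine hmin {S ∈ B | 0 < lam S - lam T / μ T * μ S} ?_
    ⟨fun S hS => hne S (mem_filter.1 hS).1, fun S => lam S - lam T / μ T * μ S,
      isBalancingWeights_iff.2 ⟨fun S hS => (mem_filter.1 hS).2, ?_⟩⟩
  · exact filter_ssubset.2 ⟨T, hT.1, by rw [div_mul_cancel₀ _ hT.2.ne', sub_self]; simp⟩
  · rw [sum_filter_of_ne fun S hS h => (hsub S hS).lt_of_ne' (left_ne_zero_of_smul h)]
    simp_rw [sub_smul, mul_smul, sum_sub_distrib, ← smul_sum]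
    rw [hμ, hlam.2, smul_zero, sub_zero]

theorem isMinimalBalancedCollection_iff {B : Finset (Finset (Fin n))} :
    IsMinimalBalancedCollection B ↔
      LinearIndepOn ℝ indicatorVec (B : Set (Finset (Fin n))) ∧
        ∃ lam, IsBalancingWeights B lam := by
  refine ⟨fun hB => ⟨linearIndepOn_finset_iff.2 fun μ hμ S hS => ?_, hB.1.2⟩,
    fun ⟨hli, lam, hlam⟩ => ⟨⟨fun S hS hS0 => ?_, lam, hlam⟩, fun B' hB' ⟨_, lam', hlam'⟩ => ?_⟩⟩
  · have hneg : ∑ S ∈ B, (-μ) S • indicatorVec S = 0 := by simp [hμ]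
    exact (hB.nonpos_of_sum_smul_eq_zero hμ S hS).antisymm
      (neg_nonpos.1 (hB.nonpos_of_sum_smul_eq_zero hneg S hS))
  · exact hli.ne_zero hS (by simp [hS0, indicatorVec, Pi.zero_def])
  · obtain ⟨S, hS, hS'⟩ := exists_of_ssubset hB'
    rw [isBalancingWeights_iff] at hlam hlam'
    have hdiff : ∑ S ∈ B, (lam S - if S ∈ B' then lam' S else 0) • indicatorVec S = 0 := by
      simp_rw [sub_smul, sum_sub_distrib, ite_smul, zero_smul, ← sum_filter]
      rw [filter_mem_eq_inter, inter_eq_right.2 hB'.1, hlam.2, hlam'.2, sub_self]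
    have := linearIndepOn_finset_iff.1 hli _ hdiff S hS
    simp only [hS', if_false, sub_zero] at this
    exact (hlam.1 S hS).ne' this

lemma IsMinimalBalancedCollection.card_le {B : Finset (Finset (Fin n))}
    (hB : IsMinimalBalancedCollection B) : #B ≤ n := by
  simpa using (isMinimalBalancedCollection_iff.1 hB).1.linearIndependent.fintype_card_le_finrank

theorem isMinimalBalancedFamily_iff [Fintype κ] {S : κ → Finset (Fin n)} :
    IsMinimalBalancedFamily S ↔
      Function.Injective S ∧ IsMinimalBalancedCollection (univ.image S) := by
  have hsum (hS : Function.Injective S) (lam : Finset (Fin n) → ℝ) :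
      ∑ T ∈ univ.image S, lam T • indicatorVec T = ∑ k, lam (S k) • indicatorVec (S k) :=
    sum_image hS.injOn
  rw [isMinimalBalancedCollection_iff, coe_image, coe_univ, Set.image_univ]
  refine ⟨fun ⟨hli, c, hc, hc1⟩ => ?_, fun ⟨hS, hli, lam, hlam⟩ => ?_⟩
  · have hS : Function.Injective S := hli.injective.of_comp
    refine ⟨hS, (linearIndepOn_range_iff hS _).2 hli, Function.extend S c 0,
      isBalancingWeights_iff.2 ⟨?_, ?_⟩⟩
    · simpa [hS.extend_apply] using hc
    · simpa [hsum hS, hS.extend_apply] using hc1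
  · rw [isBalancingWeights_iff, hsum hS] at hlam
    exact ⟨(linearIndepOn_range_iff hS _).1 hli, fun k => lam (S k),
      fun k => hlam.1 _ (mem_image_of_mem S (mem_univ k)), hlam.2⟩

end BalancedFamilies

section Enumerations

lemma natCard_injective_and_image {α : Type*} [DecidableEq α] (m : ℕ) (p : Finset α → Prop) :
    Nat.card {S : Fin m → α // Function.Injective S ∧ p (univ.image S)} =
      m.factorial * Nat.card {B : Finset α // #B = m ∧ p B} := by
  let enum (B : {B : Finset α // #B = m ∧ p B}) : B.1 ≃ Fin m := B.1.equivFinOfCardEq B.2.1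
  have himage (σ : Equiv.Perm (Fin m)) (B : {B : Finset α // #B = m ∧ p B}) :
      univ.image (fun j => ((enum B).symm (σ j) : α)) = B := by
    ext a
    simp only [mem_image, mem_univ, true_and]
    exact ⟨fun ⟨j, hj⟩ => hj ▸ ((enum B).symm (σ j)).2,
      fun ha => ⟨σ.symm (enum B ⟨a, ha⟩), by simp⟩⟩
  have hinj (σ : Equiv.Perm (Fin m)) (B : {B : Finset α // #B = m ∧ p B}) :
      Function.Injective fun j => ((enum B).symm (σ j) : α) :=
    Subtype.val_injective.comp ((enum B).symm.injective.comp σ.injective)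
  let f (x : Equiv.Perm (Fin m) × {B : Finset α // #B = m ∧ p B}) :
      {S : Fin m → α // Function.Injective S ∧ p (univ.image S)} :=
    ⟨fun j => (enum x.2).symm (x.1 j), hinj .., by rw [himage]; exact x.2.2.2⟩
  have hf : Function.Bijective f := by
    refine ⟨fun ⟨σ, B⟩ ⟨τ, C⟩ h => ?_, fun ⟨S, hS, hp⟩ => ?_⟩
    · have hfun := Subtype.ext_iff.1 h
      have himages := congrArg (univ.image ·) hfun
      obtain rfl : B = C := Subtype.ext ((himage σ B).symm.trans (himages.trans (himage τ C)))
      refine Prod.ext (Equiv.ext fun j => ?_) rfl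
      exact (enum B).symm.injective (Subtype.ext (congrFun hfun j))
    · let B : {B : Finset α // #B = m ∧ p B} :=
        ⟨univ.image S, by rw [card_image_of_injective _ hS, card_univ, Fintype.card_fin], hp⟩
      let g (j : Fin m) : Fin m := enum B ⟨S j, mem_image_of_mem S (mem_univ j)⟩
      have hg : Function.Injective g := fun i j h =>
        hS (Subtype.ext_iff.1 ((enum B).injective h))
      refine ⟨(Equiv.ofBijective g hg.bijective_of_finite, B), Subtype.ext (funext fun j => ?_)⟩
      simp [f, g]
  rw [← Nat.card_eq_of_bijective f hf, Nat.card_prod, Nat.card_perm, Nat.card_fin]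

end Enumerations

section PlusSets

variable {ι κ : Type*} [Fintype ι] [DecidableEq ι]

/-- The set of positive coordinates, identifying sign vectors with subsets. -/
def plusSet : (ι → ℤˣ) ≃ Finset ι where
  toFun w := {i | w i = 1}
  invFun S i := if i ∈ S then 1 else -1
  left_inv w := by
    ext i
    rcases Int.units_eq_one_or (w i) with h | h <;> simp [h]
  right_inv S := by ext; simp

lemma indicatorVec_plusSet (w : ι → ℤˣ) :
    indicatorVec (plusSet w) = (1 / 2 : ℝ) • (signVec ℝ w + 1) := by
  ext i
  rcases Int.units_eq_one_or (w i) with h | h <;>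
    norm_num [indicatorVec, plusSet, signVec, h]

end PlusSets

section RowFlips

lemma one_add_sum_neg {ι κ : Type*} [Fintype κ] [Nontrivial κ] {W : κ → ι → ℤˣ}
    (hW : Function.Injective W) {c : κ → ℝ} (hc : ∑ k, c k • signVec ℝ (W k) = 1)
    (hneg : ∀ k, c k < 0) : 1 + ∑ k, c k < 0 := by
  obtain ⟨k, i, hki⟩ : ∃ k i, W k i = 1 := by
    obtain ⟨k, l, hkl⟩ := exists_pair_ne κ
    by_contra! hminus
    refine hkl (hW (funext fun i => ?_))
    rw [(Int.units_eq_one_or _).resolve_left (hminus k i),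
      (Int.units_eq_one_or _).resolve_left (hminus l i)]
  have hone : ∑ l, c l * ((W l i : ℤ) : ℝ) = 1 := by simpa [signVec] using congrFun hc i
  rw [← hone, ← sum_add_distrib]
  refine sum_neg' (fun l _ => ?_) ⟨k, mem_univ k, ?_⟩
  · rcases Int.units_eq_one_or (W l i) with h | h <;> simp [h, (hneg l).le]
  · simpa [hki] using hneg k

variable {ι κ : Type*} [Fintype ι] [DecidableEq ι] [Fintype κ]

lemma indicatorVec_plusSet_mul (e : ℤˣ) (w : ι → ℤˣ) :
    indicatorVec (plusSet fun i => e * w i) =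
      ((e : ℤ) : ℝ) • indicatorVec (plusSet w) + ((1 - ((e : ℤ) : ℝ)) / 2) • 1 := by
  ext i
  simp only [indicatorVec_plusSet, signVec, Pi.smul_apply, Pi.add_apply, Pi.one_apply, smul_eq_mul,
    Units.val_mul, Int.cast_mul]
  ring

/-- If `λ` and `μ` balance the two families, then `μ k * e k` and `λ k` are proportional, since both
are the coefficients of a multiple of the all-ones vector. -/
lemma eq_one_or_eq_neg_one_of_isMinimalBalancedFamily {W : κ → ι → ℤˣ} {e : κ → ℤˣ}
    (hW : IsMinimalBalancedFamily fun k => plusSet (W k))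
    (heW : IsMinimalBalancedFamily fun k => plusSet fun i => e k * W k i) : e = 1 ∨ e = -1 := by
  obtain ⟨hli, lam, hlam, hlam1⟩ := hW
  obtain ⟨-, μ, hμ, hμ1⟩ := heW
  obtain ⟨t, ht⟩ : ∃ t, t = 1 - ∑ k, μ k * ((1 - ((e k : ℤ) : ℝ)) / 2) := ⟨_, rfl⟩
  have hcomb : ∑ k, (μ k * ((e k : ℤ) : ℝ) - t * lam k) • indicatorVec (plusSet (W k)) = 0 := by
    simp_rw [indicatorVec_plusSet_mul, smul_add, sum_add_distrib, smul_smul, ← sum_smul] at hμ1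
    simp_rw [sub_smul, sum_sub_distrib, mul_smul t, ← smul_sum, hlam1, ht, sub_smul, one_smul]
    linear_combination (norm := module) hμ1
  have hprop (k : κ) : μ k * ((e k : ℤ) : ℝ) = t * lam k :=
    sub_eq_zero.1 (Fintype.linearIndependent_iff.1 hli _ hcomb k)
  rcases le_or_gt 0 t with h | h
  · refine Or.inl (funext fun k => (Int.units_eq_one_or (e k)).resolve_right fun hk => ?_)
    have := hprop k
    rw [hk, Units.val_neg, Units.val_one, Int.cast_neg, Int.cast_one] at this
    linarith [hμ k, mul_nonneg h (hlam k).le]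
  · refine Or.inr (funext fun k => (Int.units_eq_one_or (e k)).resolve_left fun hk => ?_)
    have := hprop k
    rw [hk, Units.val_one, Int.cast_one] at this
    linarith [hμ k, mul_neg_of_neg_of_pos h (hlam k)]

lemma sum_smul_indicatorVec_plusSet {W : κ → ι → ℤˣ} {c : κ → ℝ}
    (hc : ∑ k, c k • signVec ℝ (W k) = 1) :
    ∑ k, c k • indicatorVec (plusSet (W k)) = ((1 + ∑ k, c k) / 2) • 1 := by
  simp_rw [indicatorVec_plusSet, smul_comm (c _) (1 / 2 : ℝ), smul_add, sum_add_distrib,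
    ← smul_sum, hc, ← sum_smul]
  module

lemma linearIndependent_indicatorVec_plusSet {W : κ → ι → ℤˣ}
    (hli : LinearIndependent ℝ fun k => signVec ℝ (W k)) {c : κ → ℝ}
    (hc : ∑ k, c k • signVec ℝ (W k) = 1) (hne : 1 + ∑ k, c k ≠ 0) :
    LinearIndependent ℝ fun k => indicatorVec (plusSet (W k)) := by
  refine Fintype.linearIndependent_iff.2 fun g hg => ?_
  have hcomb : ∑ k, (g k + (∑ l, g l) * c k) • signVec ℝ (W k) = 0 := by
    simp_rw [indicatorVec_plusSet, smul_comm (g _) (1 / 2 : ℝ), smul_add, sum_add_distrib,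
      ← smul_sum, ← sum_smul] at hg
    simp_rw [add_smul, sum_add_distrib, mul_smul, ← smul_sum, hc]
    linear_combination (norm := module) (2 : ℝ) • hg
  have hprop := Fintype.linearIndependent_iff.1 hli _ hcomb
  have hsum : (∑ k, g k) * (1 + ∑ k, c k) = 0 := by
    rw [mul_add, mul_one, mul_sum, ← sum_add_distrib]
    exact sum_eq_zero fun k _ => hprop k
  simpa [(mul_eq_zero.1 hsum).resolve_right hne] using hprop

lemma isMinimalBalancedFamily_plusSet [Nontrivial κ] {W : κ → ι → ℤˣ}
    (hli : LinearIndependent ℝ fun k => signVec ℝ (W k)) {c : κ → ℝ}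
    (hc : ∑ k, c k • signVec ℝ (W k) = 1) (hsign : (∀ k, 0 < c k) ∨ ∀ k, c k < 0) :
    IsMinimalBalancedFamily fun k => plusSet (W k) := by
  have hW : Function.Injective W := .of_comp (f := signVec ℝ) hli.injective
  have hpos : 1 + ∑ k, c k ≠ 0 ∧ ∀ k, 0 < ((1 + ∑ k, c k) / 2)⁻¹ * c k := by
    rcases hsign with h | h
    · have : 0 < 1 + ∑ k, c k := by linarith [sum_nonneg fun k (_ : k ∈ univ) => (h k).le]
      exact ⟨this.ne', fun k => mul_pos (by positivity) (h k)⟩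
    · have := one_add_sum_neg hW hc h
      exact ⟨this.ne, fun k => mul_pos_of_neg_of_neg (inv_neg''.2 (by linarith)) (h k)⟩
  refine ⟨linearIndependent_indicatorVec_plusSet hli hc hpos.1, _, hpos.2, ?_⟩
  simp_rw [mul_smul, ← smul_sum]
  rw [sum_smul_indicatorVec_plusSet hc, inv_smul_smul₀ (div_ne_zero hpos.1 two_ne_zero)]

end RowFlips

section BalancedProbability

/-- The group element multiplying the `k`-th row by the sign `e k`. -/
def rowFlip {ι κ : Type*} (e : κ → ℤˣ) : (κ → ι → ℤˣ) ≃ (κ → ι → ℤˣ) :=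
  Equiv.mulLeft fun k _ => e k

/-- The probability that the positive sets of the rows of a uniformly random `m × n` sign matrix are
the members of a minimal balanced collection, listed without repetition. -/
noncomputable def balancedProb (m n : ℕ) : ℝ :=
  uniformProb fun W : Fin m → Fin n → ℤˣ => IsMinimalBalancedFamily fun k => plusSet (W k)

/-- The number `B_n^m` of minimal balanced collections of cardinality `m` on `n` elements, except
that for `m = 1` the collection `{N}` is counted. -/
noncomputable def minimalBalancedCount (m n : ℕ) : ℕ :=
  Nat.card {B : Finset (Finset (Fin n)) // #B = m ∧ IsMinimalBalancedCollection B}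

lemma factorial_mul_minimalBalancedCount (m n : ℕ) :
    (m.factorial * minimalBalancedCount m n : ℝ) = balancedProb m n * 2 ^ (n * m) := by
  classical
  have hcard : (Fintype.card (Fin m → Fin n → ℤˣ) : ℝ) = 2 ^ (n * m) := by
    simp [pow_mul]
  have hbij : Nat.card {W : Fin m → Fin n → ℤˣ //
      IsMinimalBalancedFamily fun k => plusSet (W k)} =
      Nat.card {S : Fin m → Finset (Fin n) // Function.Injective S ∧
        IsMinimalBalancedCollection (univ.image S)} :=
    Nat.card_congr ((Equiv.piCongrRight fun _ => plusSet).subtypeEquiv fun _ =>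
      isMinimalBalancedFamily_iff)
  rw [← hcard, balancedProb, uniformProb_mul_card, ← Fintype.card_subtype,
    ← Nat.card_eq_fintype_card, hbij, natCard_injective_and_image, minimalBalancedCount]
  push_cast
  rfl

lemma minimalBalancedCount_le_Btot {m n : ℕ} (hm : 2 ≤ m) :
    minimalBalancedCount m n ≤ Btot n :=
  Nat.card_le_card_of_injective
    (Subtype.map id fun _ h => ⟨h.2, by rintro rfl; exact absurd (h.1 ▸ hm) (by simp)⟩)
    (Subtype.map_injective _ Function.injective_id)

lemma Btot_le_sum_minimalBalancedCount (n : ℕ) :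
    Btot n ≤ ∑ m ∈ range (n + 1), minimalBalancedCount m n := by
  classical
  simp_rw [Btot, minimalBalancedCount, Nat.card_eq_fintype_card, Fintype.card_subtype]
  rw [card_eq_sum_card_fiberwise (f := card) (t := range (n + 1)) fun B hB => ?_]
  · refine sum_le_sum fun m _ => card_le_card fun B hB => ?_
    simp only [mem_filter, mem_univ, true_and] at hB ⊢
    exact ⟨hB.2, hB.1.1⟩
  · simp only [coe_filter_univ, Set.mem_ofPred_eq] at hB
    exact mem_coe.2 (mem_range.2 (Nat.lt_succ_of_le hB.1.card_le))

lemma two_pow_mul_balancedProb_le (m n : ℕ) : 2 ^ m * balancedProb m n ≤ 2 := by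
  classical
  have h := card_mul_uniformProb_le (β := Fin m → ℤˣ) (rowFlip (ι := Fin n))
    (p := fun W => IsMinimalBalancedFamily fun k => plusSet (W k)) (k := 2) fun W => ?_
  · simpa [balancedProb] using h
  rcases eq_empty_or_nonempty ({e | IsMinimalBalancedFamily fun k => plusSet (rowFlip e W k)} :
    Finset (Fin m → ℤˣ)) with hempty | ⟨e₀, he₀⟩
  · simp [hempty]
  refine (card_le_card fun e he => ?_).trans (card_le_two (a := e₀) (b := -e₀))
  rw [mem_filter_univ] at he he₀
  have hflip := eq_one_or_eq_neg_one_of_isMinimalBalancedFamily (e := e * e₀⁻¹) he₀ (by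
    simpa [rowFlip, Pi.mul_def, mul_assoc, -Int.units_inv_eq_self] using he)
  rw [mem_insert, mem_singleton]
  simpa [mul_inv_eq_iff_eq_mul] using hflip

end BalancedProbability

section GenericSignMatrices

variable {ι κ : Type*}

/-- A sign matrix is generic if its rows are linearly independent and remain so when any one of them
is replaced by the all-ones row, i.e. if the all-ones vector has only nonzero coordinates in the
basis formed by the rows. -/
def IsGenericSignMatrix [DecidableEq κ] (W : κ → ι → ℤˣ) : Prop :=
  (LinearIndependent ℚ fun k => signVec ℚ (W k)) ∧
    ∀ k, LinearIndependent ℚ fun l => signVec ℚ (Function.update W k 1 l)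

lemma linearIndependent_signVec_real_iff [Finite ι] {W : κ → ι → ℤˣ} :
    (LinearIndependent ℝ fun k => signVec ℝ (W k)) ↔
      LinearIndependent ℚ fun k => signVec ℚ (W k) := by
  have hmap (k : κ) : signVec ℝ (W k) = algebraMap ℚ ℝ ∘ signVec ℚ (W k) := by ext; simp [signVec]
  simp_rw [hmap, linearIndependent_algebraMap_comp_iff]

lemma IsGenericSignMatrix.exists_sum_smul_eq_one {n : ℕ} {W : Fin n → Fin n → ℤˣ}
    (hW : IsGenericSignMatrix W) :
    ∃ c : Fin n → ℝ, (∀ k, c k ≠ 0) ∧ ∑ k, c k • signVec ℝ (W k) = 1 := by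
  have hli := linearIndependent_signVec_real_iff.2 hW.1
  have hone : (1 : Fin n → ℝ) ∈ Submodule.span ℝ (Set.range fun k => signVec ℝ (W k)) := by
    rw [hli.span_eq_top_of_card_eq_finrank' (by simp)]
    exact Submodule.mem_top
  obtain ⟨c, hc⟩ := (Submodule.mem_span_range_iff_exists_fun ℝ).1 hone
  refine ⟨c, fun k hk => ?_, hc⟩
  have hli' := linearIndependent_signVec_real_iff.2 (hW.2 k)
  have hrel : ∑ l, Function.update c k (-1) l • signVec ℝ (Function.update W k 1 l) = 0 := by
    rw [← add_sum_erase _ _ (mem_univ k)] at hc ⊢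
    rw [hk, zero_smul, zero_add] at hc
    rw [sum_congr rfl fun l hl => by
      rw [Function.update_of_ne (ne_of_mem_erase hl), Function.update_of_ne (ne_of_mem_erase hl)],
      hc, Function.update_self, Function.update_self]
    ext
    simp [signVec]
  simpa using Fintype.linearIndependent_iff.1 hli' _ hrel k

lemma isMinimalBalancedFamily_rowFlip [Fintype ι] [DecidableEq ι] [Fintype κ] [Nontrivial κ]
    {W : κ → ι → ℤˣ} (hli : LinearIndependent ℝ fun k => signVec ℝ (W k)) {c : κ → ℝ}
    (hc : ∑ k, c k • signVec ℝ (W k) = 1) {e : κ → ℤˣ}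
    (he : (∀ k, 0 < ((e k : ℤ) : ℝ) * c k) ∨ ∀ k, ((e k : ℤ) : ℝ) * c k < 0) :
    IsMinimalBalancedFamily fun k => plusSet (rowFlip e W k) := by
  let u (k : κ) : ℝˣ := Units.map (Int.castRingHom ℝ).toMonoidHom (e k)
  have hrow (k : κ) : signVec ℝ (rowFlip e W k) = u k • signVec ℝ (W k) := by
    ext i
    simp [rowFlip, signVec, u, Units.smul_def]
  refine isMinimalBalancedFamily_plusSet ?_ ?_ he
  · simp_rw [hrow]
    exact hli.units_smul u
  · rw [← hc]
    refine sum_congr rfl fun k _ => ?_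
    rw [hrow]
    rcases Int.units_eq_one_or (e k) with h | h <;> simp [h, u]

lemma two_mul_uniformProb_isGenericSignMatrix_le {n : ℕ} (hn : 2 ≤ n) :
    2 * uniformProb (IsGenericSignMatrix (ι := Fin n) (κ := Fin n)) ≤ 2 ^ n * balancedProb n n := by
  classical
  have : Nontrivial (Fin n) := Fin.nontrivial_iff_two_le.2 hn
  have h := mul_uniformProb_le_card_mul (β := Fin n → ℤˣ) (rowFlip (ι := Fin n))
    (p := fun W => IsMinimalBalancedFamily fun k => plusSet (W k)) (q := IsGenericSignMatrix)
    (k := 2) fun W hW => ?_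
  · simpa [balancedProb] using h
  obtain ⟨c, hc0, hc⟩ := hW.exists_sum_smul_eq_one
  have hli := linearIndependent_signVec_real_iff.2 hW.1
  let e (k : Fin n) : ℤˣ := if 0 < c k then 1 else -1
  have he (k : Fin n) : 0 < ((e k : ℤ) : ℝ) * c k := by
    rcases (hc0 k).lt_or_gt with h | h
    · simp [e, h.not_gt, h]
    · simp [e, h]
  have hne : e ≠ -e := fun h => by
    obtain ⟨k⟩ := (inferInstance : Nonempty (Fin n))
    exact units_ne_neg_self (e k) (congrFun h k)
  rw [← card_pair hne]
  refine card_le_card fun e' he' => (mem_filter_univ e').2 ?_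
  rcases mem_insert.1 he' with rfl | he'
  · exact isMinimalBalancedFamily_rowFlip hli hc (.inl he)
  · obtain rfl := mem_singleton.1 he'
    exact isMinimalBalancedFamily_rowFlip hli hc (.inr fun k => by simpa using he k)

/-- Multiplying all rows but the `k`-th by the `k`-th one is a measure-preserving involution, which
also results from replacing the `k`-th row by `1` and then multiplying every row by `W k`. -/
lemma uniformProb_not_linearIndependent_update_le {n : ℕ} (k : Fin n) :
    uniformProb (fun W : Fin n → Fin n → ℤˣ =>
      ¬ LinearIndependent ℚ fun l => signVec ℚ (Function.update W k 1 l)) ≤ singularProb n := by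
  let f (W : Fin n → Fin n → ℤˣ) (l : Fin n) : Fin n → ℤˣ := Function.update W k 1 l * W k
  have hf : Function.Involutive f := fun W => funext fun l => by
    rcases eq_or_ne l k with rfl | hl
    · simp [f]
    · ext i
      simp [f, Function.update_of_ne hl, mul_assoc]
  have hrow (W : Fin n → Fin n → ℤˣ) (l : Fin n) : signVec ℚ (f W l) =
      LinearMap.mulRight ℚ (signVec ℚ (W k)) (signVec ℚ (Function.update W k 1 l)) := by
    ext
    simp [f, signVec]
  refine le_of_le_of_eq ?_ (uniformProb_comp_equiv hf.toPerm _)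
  refine uniformProb_mono fun W hW hli => hW (.of_comp (LinearMap.mulRight ℚ (signVec ℚ (W k))) ?_)
  simp only [Function.Involutive.coe_toPerm, hrow] at hli
  exact hli

lemma one_sub_le_uniformProb_isGenericSignMatrix (n : ℕ) :
    1 - (n + 1) * singularProb n ≤ uniformProb (IsGenericSignMatrix (ι := Fin n) (κ := Fin n)) := by
  have hnot : uniformProb (fun W : Fin n → Fin n → ℤˣ => ¬ IsGenericSignMatrix W) ≤
      singularProb n + n * singularProb n := by
    refine (uniformProb_mono fun W hW => (?_ : _ ∨ _)).trans <| (uniformProb_or_le _ _).trans <|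
      add_le_add_right ((uniformProb_exists_le _
        uniformProb_not_linearIndependent_update_le).trans_eq (by simp)) _
    simpa only [IsGenericSignMatrix, not_and_or, not_forall] using hW
  rw [uniformProb_not] at hnot
  linarith

end GenericSignMatrices

section Asymptotics

variable {m n : ℕ}

lemma two_pow_sq_sub_add_one (n : ℕ) : (2 : ℝ) ^ (n ^ 2 - n + 1) = 2 * (2 ^ (n - 1)) ^ n := by
  rw [pow_succ', sq, ← Nat.sub_one_mul, pow_mul]

lemma two_pow_mul_eq (hn : n ≠ 0) (m : ℕ) : (2 : ℝ) ^ (n * m) = 2 ^ m * (2 ^ (n - 1)) ^ m := by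
  rw [pow_mul, ← mul_pow_sub_one hn, mul_pow]

lemma factorial_mul_minimalBalancedCount_le (hn : n ≠ 0) :
    (m.factorial * minimalBalancedCount m n : ℝ) ≤ 2 * (2 ^ (n - 1)) ^ m := by
  calc (m.factorial * minimalBalancedCount m n : ℝ)
      = 2 ^ m * balancedProb m n * (2 ^ (n - 1)) ^ m := by
        rw [factorial_mul_minimalBalancedCount, two_pow_mul_eq hn]; ring
    _ ≤ _ := by gcongr; exact two_pow_mul_balancedProb_le m n

lemma minimalBalancedCount_mul_factorial_le (hn : n ≠ 0) (hm : m ≤ n) :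
    (minimalBalancedCount m n * n.factorial : ℝ) / 2 ^ (n ^ 2 - n + 1) ≤
      (n / 2 ^ (n - 1)) ^ (n - m) := by
  have hfac : n.factorial ≤ m.factorial * n ^ (n - m) := by
    rw [← Nat.factorial_mul_descFactorial (Nat.sub_le n m), Nat.sub_sub_self hm]
    gcongr
    exact Nat.descFactorial_le_pow n (n - m)
  rw [div_pow, div_le_div_iff₀ (by positivity) (by positivity), two_pow_sq_sub_add_one]
  calc (minimalBalancedCount m n * n.factorial : ℝ) * (2 ^ (n - 1)) ^ (n - m)
      ≤ minimalBalancedCount m n * (m.factorial * n ^ (n - m)) * (2 ^ (n - 1)) ^ (n - m) := by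
        gcongr
        exact_mod_cast hfac
    _ = n ^ (n - m) * (m.factorial * minimalBalancedCount m n * (2 ^ (n - 1)) ^ (n - m)) := by ring
    _ ≤ n ^ (n - m) * (2 * (2 ^ (n - 1)) ^ m * (2 ^ (n - 1)) ^ (n - m)) := by
        gcongr _ * (?_ * _)
        exact factorial_mul_minimalBalancedCount_le hn
    _ = n ^ (n - m) * (2 * (2 ^ (n - 1)) ^ n) := by
        rw [mul_assoc 2, ← pow_add _ m, Nat.add_sub_cancel' hm]

lemma Btot_mul_factorial_div_le (hn : n ≠ 0) (hlt : (n / 2 ^ (n - 1) : ℝ) < 1) :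
    (Btot n * n.factorial : ℝ) / 2 ^ (n ^ 2 - n + 1) ≤ (1 - n / 2 ^ (n - 1) : ℝ)⁻¹ := by
  calc (Btot n * n.factorial : ℝ) / 2 ^ (n ^ 2 - n + 1)
      ≤ (∑ m ∈ range (n + 1), minimalBalancedCount m n : ℕ) * n.factorial /
          2 ^ (n ^ 2 - n + 1) := by
        gcongr
        exact Btot_le_sum_minimalBalancedCount n
    _ ≤ ∑ m ∈ range (n + 1), (n / 2 ^ (n - 1) : ℝ) ^ (n - m) := by
        rw [Nat.cast_sum, sum_mul, sum_div]
        exact sum_le_sum fun m hm =>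
          minimalBalancedCount_mul_factorial_le hn (Nat.le_of_lt_succ (mem_range.1 hm))
    _ = ∑ m ∈ range (n + 1), (n / 2 ^ (n - 1) : ℝ) ^ m :=
        sum_range_reflect (fun m => (n / 2 ^ (n - 1) : ℝ) ^ m) (n + 1)
    _ ≤ (1 - n / 2 ^ (n - 1) : ℝ)⁻¹ := by
        rw [← tsum_geometric_of_lt_one (by positivity) hlt]
        exact (summable_geometric_of_lt_one (by positivity) hlt).sum_le_tsum _
          fun _ _ => by positivity

lemma le_Btot_mul_factorial_div (hn : 2 ≤ n) :
    1 - 2 * (n * singularProb n) ≤ (Btot n * n.factorial : ℝ) / 2 ^ (n ^ 2 - n + 1) := by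
  have hgeneric := two_mul_uniformProb_isGenericSignMatrix_le hn
  have hsing := one_sub_le_uniformProb_isGenericSignMatrix n
  calc 1 - 2 * (n * singularProb n) ≤ 1 - (n + 1) * singularProb n := by
        have : (2 : ℝ) ≤ n := by exact_mod_cast hn
        have : 0 ≤ singularProb n := uniformProb_nonneg _
        nlinarith
    _ ≤ 2 ^ n * balancedProb n n / 2 := by linarith
    _ = minimalBalancedCount n n * n.factorial / 2 ^ (n ^ 2 - n + 1) := by
        rw [two_pow_sq_sub_add_one, mul_comm (minimalBalancedCount n n : ℝ),
          factorial_mul_minimalBalancedCount, two_pow_mul_eq (by lia) n]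
        field_simp
    _ ≤ Btot n * n.factorial / 2 ^ (n ^ 2 - n + 1) := by
        gcongr
        exact minimalBalancedCount_le_Btot hn

lemma tendsto_div_two_pow_sub_one :
    Filter.Tendsto (fun n : ℕ => (n : ℝ) / 2 ^ (n - 1)) Filter.atTop (nhds 0) := by
  have h := (tendsto_pow_const_div_const_pow_of_one_lt 1 (one_lt_two (α := ℝ))).const_mul 2
  rw [mul_zero] at h
  refine h.congr' ?_
  filter_upwards [Filter.eventually_ne_atTop 0] with n hn
  rw [← mul_pow_sub_one hn (2 : ℝ), pow_one, ← mul_div_assoc, mul_div_mul_left _ _ two_ne_zero]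

end Asymptotics

/-- Theorem (Theorem `theo3`): `B_n ∼ 2^{n²−n+1}/n!`, i.e.
`lim_{n→∞} B_n · n! / 2^{n²−n+1} = 1`. -/
theorem Btot_asymptotic :
    Filter.Tendsto
      (fun n : ℕ => (Btot n : ℝ) * (n.factorial : ℝ) / 2 ^ (n ^ 2 - n + 1))
      Filter.atTop (nhds 1) := by
  have hlower : Filter.Tendsto (fun n : ℕ => 1 - 2 * (n * singularProb n))
      Filter.atTop (nhds 1) := by
    simpa using (tendsto_mul_singularProb.const_mul 2).const_sub 1
  have hupper : Filter.Tendsto (fun n : ℕ => (1 - (n : ℝ) / 2 ^ (n - 1))⁻¹)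
      Filter.atTop (nhds 1) := by
    simpa using (tendsto_div_two_pow_sub_one.const_sub 1).inv₀ (by norm_num)
  refine tendsto_of_tendsto_of_tendsto_of_le_of_le' hlower hupper ?_ ?_
  · filter_upwards [Filter.eventually_ge_atTop 2] with n hn using le_Btot_mul_factorial_div hn
  · filter_upwards [Filter.eventually_ne_atTop 0,
      tendsto_div_two_pow_sub_one.eventually_lt_const zero_lt_one] with n hn hlt
    exact Btot_mul_factorial_div_le hn hlt
end
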